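/- arXiv:0909.3742 — 2 statements merged into one kernel-verified Lean document; each statement's English description precedes it below -/
import Mathlib

section
/- Let γ* = ((2 − 2^{(n−1)/n})^{3/2} / (122·n⁷))². For any convex bodies K and C in ℝⁿ, |K+C|^{1/n} ≥ (|K|^{1/n} + |C|^{1/n})·[1 + (γ*/σ(K,C)^{1/n})·A(K,C)²]. -/
open MeasureTheory Pointwise

noncomputable section

/-- The homothetic distance `A(K,C)`: with `α = |K|^(−1/n)` and `β = |C|^(−1/n)`,
`A(K,C) = inf{|αK Δ (x+βC)| : x ∈ ℝⁿ}`. -/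
def homDist {n : ℕ} (K C : Set (EuclideanSpace ℝ (Fin n))) : ℝ :=
  sInf {r : ℝ | ∃ x : EuclideanSpace ℝ (Fin n),
    r = (volume (symmDiff (((volume K).toReal ^ (-(1:ℝ)/(n:ℝ))) • K)
          ({x} + ((volume C).toReal ^ (-(1:ℝ)/(n:ℝ))) • C))).toReal}

/-- `σ(K,C) = max{|C|/|K|, |K|/|C|}`. -/
def volRatio {n : ℕ} (K C : Set (EuclideanSpace ℝ (Fin n))) : ℝ :=
  max ((volume C).toReal / (volume K).toReal) ((volume K).toReal / (volume C).toReal)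

/-!
Let `K` and `C` have equal volume. Minimizers `φ`, `ψ` of the dual Kantorovich problem for the cost
`-⟪x, y⟫` are conjugate to each other, and `∇ψ` transports the uniform measure on `C` to the one on
`K`. The Moreau decomposition `z = P z + (z - P z)` associated with `ψ` splits `z = ∇ψ y + y` into
`P z = ∇ψ y ∈ K` and `z - P z = y ∈ C`. The eigenvalues `lᵢ` of the symmetric map `DP` lie in
`[0, 1]`, and `det DP = det (1 - DP)` because the transport preserves volume. Hence
`(2 ^ n * det DP) ^ 2 = ∏ᵢ 4 lᵢ (1 - lᵢ) ≤ 1 - ‖2 DP - 1‖ ^ 2`, and integrating `det DP` over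
`K + C` bounds `∫ ‖2 DP - 1‖` by the deficit in the Brunn–Minkowski inequality.

So `S z = 2 P z - z` satisfies `z + S z ∈ 2 K` and has small derivative in `L¹`. A Poincaré
inequality on the convex set `K + C`, which follows from Brunn–Minkowski for enlargements of level
sets, shows that `S` is close to a constant `c`, and a trace inequality, expressed through the gauge
of `2 K`, turns this into a bound for `|(K + C) \ (c + 2 K)|`. Exchanging the roles of `K` and `C`
and comparing both bodies with `K + C` bounds the symmetric difference of `K` and a translate of
`C`. The claim is invariant under linear maps, so `K + C` may be put in Auerbach position, where the
constants depend on the dimension only. Different volumes reduce to this case by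
`p X + q Y = (p - q) X + q (X + Y)` with `|X| = |Y| = 1` and `q ≤ p`.
-/

section Conjugate

open Set
open scoped RealInnerProductSpace

variable {E : Type*} [NormedAddCommGroup E] [InnerProductSpace ℝ E]
  {K C : Set E} {f g : E → ℝ} {x y : E}

/-- The Legendre–Fenchel conjugate of `f + ∞ · 1_{Kᶜ}`, i.e. `y ↦ sup_{x ∈ K} (⟪x, y⟫ - f x)`.
The supremum is taken in `ℝ`, so it is meaningful only if it is finite, for instance if `K` is
compact and nonempty and `f` is continuous on `K`. -/
def conjugateOn (K : Set E) (f : E → ℝ) (y : E) : ℝ :=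
  ⨆ x : K, (⟪(x : E), y⟫ - f x)

theorem inner_sub_le_conjugateOn (hK : IsCompact K) (hf : ContinuousOn f K) (hx : x ∈ K) (y : E) :
    ⟪x, y⟫ - f x ≤ conjugateOn K f y := by
  have hbdd : BddAbove (range fun x : K => ⟪(x : E), y⟫ - f x) := by
    rw [← image_eq_range (fun x : E => ⟪x, y⟫ - f x)]
    exact (hK.image_of_continuousOn (by fun_prop)).bddAbove
  exact le_ciSup hbdd (⟨x, hx⟩ : K)

theorem conjugateOn_le (hne : K.Nonempty) {a : ℝ} (h : ∀ x ∈ K, ⟪x, y⟫ - f x ≤ a) :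
    conjugateOn K f y ≤ a :=
  haveI := hne.to_subtype
  ciSup_le fun x => h x x.2

theorem exists_conjugateOn_eq (hK : IsCompact K) (hne : K.Nonempty) (hf : ContinuousOn f K)
    (y : E) : ∃ x ∈ K, conjugateOn K f y = ⟪x, y⟫ - f x := by
  obtain ⟨x, hx, hmax⟩ := hK.exists_isMaxOn hne (f := fun x => ⟪x, y⟫ - f x) (by fun_prop)
  exact ⟨x, hx, le_antisymm (conjugateOn_le hne fun z hz => hmax hz)
    (inner_sub_le_conjugateOn hK hf hx y)⟩

theorem conjugateOn_congr (h : EqOn f g K) : conjugateOn K f = conjugateOn K g :=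
  funext fun _ => iSup_congr fun x => by rw [h x.2]

theorem conjugateOn_le_add (hK : IsCompact K) (hne : K.Nonempty) (hg : ContinuousOn g K) (y : E)
    {a : ℝ} (h : ∀ x ∈ K, g x ≤ f x + a) : conjugateOn K f y ≤ conjugateOn K g y + a :=
  conjugateOn_le hne fun x hx => by
    linarith [inner_sub_le_conjugateOn hK hg hx y, h x hx]

theorem abs_conjugateOn_sub_le (hK : IsCompact K) (hne : K.Nonempty) (hf : ContinuousOn f K)
    (hg : ContinuousOn g K) (y : E) {a : ℝ} (h : ∀ x ∈ K, |f x - g x| ≤ a) :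
    |conjugateOn K f y - conjugateOn K g y| ≤ a := by
  have hfg := conjugateOn_le_add (f := f) (a := a) hK hne hg y fun x hx => by
    linarith [abs_le.1 (h x hx)]
  have hgf := conjugateOn_le_add (f := g) (a := a) hK hne hf y fun x hx => by
    linarith [abs_le.1 (h x hx)]
  exact abs_le.2 ⟨by linarith, by linarith⟩

theorem lipschitzWith_conjugateOn (hK : IsCompact K) (hne : K.Nonempty) (hf : ContinuousOn f K)
    {R : NNReal} (hR : ∀ x ∈ K, ‖x‖ ≤ R) : LipschitzWith R (conjugateOn K f) := by
  refine LipschitzWith.of_le_add_mul R fun y y' => conjugateOn_le hne fun x hx => ?_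
  calc ⟪x, y⟫ - f x
      = ⟪x, y'⟫ - f x + ⟪x, y - y'⟫ := by rw [inner_sub_right]; ring
    _ ≤ conjugateOn K f y' + ‖x‖ * ‖y - y'‖ :=
        add_le_add (inner_sub_le_conjugateOn hK hf hx y') (real_inner_le_norm _ _)
    _ ≤ conjugateOn K f y' + R * dist y y' := by
        rw [dist_eq_norm]
        gcongr
        exact hR x hx

theorem exists_lipschitzWith_conjugateOn (hK : IsCompact K) (hne : K.Nonempty)
    (hf : ContinuousOn f K) : ∃ R : NNReal, LipschitzWith R (conjugateOn K f) := by
  obtain ⟨R, hR⟩ := hK.isBounded.exists_norm_le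
  exact ⟨R.toNNReal, lipschitzWith_conjugateOn hK hne hf
    fun x hx => (hR x hx).trans (Real.le_coe_toNNReal R)⟩

theorem continuous_conjugateOn (hK : IsCompact K) (hne : K.Nonempty) (hf : ContinuousOn f K) :
    Continuous (conjugateOn K f) :=
  (exists_lipschitzWith_conjugateOn hK hne hf).choose_spec.continuous

theorem convexOn_conjugateOn (hK : IsCompact K) (hne : K.Nonempty) (hf : ContinuousOn f K) :
    ConvexOn ℝ univ (conjugateOn K f) := by
  refine ⟨convex_univ, fun y _ z _ a b ha hb hab => conjugateOn_le hne fun x hx => ?_⟩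
  calc ⟪x, a • y + b • z⟫ - f x
      = a * (⟪x, y⟫ - f x) + b * (⟪x, z⟫ - f x) := by
        rw [inner_add_right, real_inner_smul_right, real_inner_smul_right]
        linear_combination f x * hab
    _ ≤ a * conjugateOn K f y + b * conjugateOn K f z := by
        gcongr <;> exact inner_sub_le_conjugateOn hK hf hx _

theorem conjugateOn_conjugateOn_le (hK : IsCompact K) (hC : C.Nonempty) (hf : ContinuousOn f K)
    (hx : x ∈ K) : conjugateOn C (conjugateOn K f) x ≤ f x :=
  conjugateOn_le hC fun y _ => by
    linarith [inner_sub_le_conjugateOn hK hf hx y, real_inner_comm x y]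

theorem eqOn_conjugateOn_conjugateOn_conjugateOn (hK : IsCompact K) (hKne : K.Nonempty)
    (hC : IsCompact C) (hCne : C.Nonempty) (hf : ContinuousOn f K) :
    EqOn (conjugateOn K (conjugateOn C (conjugateOn K f))) (conjugateOn K f) C := by
  have hψ := continuous_conjugateOn hK hKne hf
  have hφ := continuous_conjugateOn hC hCne hψ.continuousOn
  intro y hy
  refine le_antisymm (conjugateOn_conjugateOn_le hC hKne hψ.continuousOn hy) ?_
  simpa using conjugateOn_le_add hK hKne hφ.continuousOn y (a := 0) fun x hx => by
    simpa using conjugateOn_conjugateOn_le hK hCne hf hx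

end Conjugate

section Subgradient

open Set Filter Topology
open scoped RealInnerProductSpace

variable {E : Type*} [NormedAddCommGroup E] [InnerProductSpace ℝ E]
  {K : Set E} {f : E → ℝ} {x y : E}

/-- `p` is a subgradient of `f` at `q`: the affine function with slope `p` that agrees with `f` at
`q` lies below `f` everywhere. -/
def IsSubgradientAt (f : E → ℝ) (p q : E) : Prop :=
  ∀ z, f q + ⟪p, z - q⟫ ≤ f z

theorem IsSubgradientAt.inner_sub_nonneg {p q p' q' : E} (h : IsSubgradientAt f p q)
    (h' : IsSubgradientAt f p' q') : 0 ≤ ⟪p - p', q - q'⟫ := by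
  have hq := h q'
  have hq' := h' q
  rw [← neg_sub q q', inner_neg_right] at hq
  rw [inner_sub_left]
  linarith

theorem IsSubgradientAt.gradient_eq [CompleteSpace E] (h : IsSubgradientAt f x y)
    (hf : DifferentiableAt ℝ f y) : gradient f y = x := by
  have hmin : IsLocalMin (fun z => f z - ⟪x, z⟫) y := .of_forall fun z => by
    have := h z
    rw [inner_sub_right] at this
    linarith
  have hzero := hmin.hasFDerivAt_eq_zero (hf.hasFDerivAt.sub (innerSL ℝ x).hasFDerivAt)
  refine ext_inner_right ℝ fun v => ?_
  rw [inner_gradient_left, sub_eq_zero.1 hzero, innerSL_apply_apply]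

theorem isSubgradientAt_conjugateOn (hK : IsCompact K) (hf : ContinuousOn f K) (hx : x ∈ K)
    (h : conjugateOn K f y = ⟪x, y⟫ - f x) : IsSubgradientAt (conjugateOn K f) x y := fun z => by
  have := inner_sub_le_conjugateOn hK hf hx z
  rw [inner_sub_right]
  linarith

theorem ae_differentiableAt_conjugateOn [FiniteDimensional ℝ E] [MeasurableSpace E] [BorelSpace E]
    (μ : Measure E) [μ.IsAddHaarMeasure] (hK : IsCompact K) (hne : K.Nonempty)
    (hf : ContinuousOn f K) : ∀ᵐ y ∂μ, DifferentiableAt ℝ (conjugateOn K f) y :=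
  (exists_lipschitzWith_conjugateOn hK hne hf).choose_spec.ae_differentiableAt

variable [CompleteSpace E]

theorem gradient_conjugateOn_mem_and_eq (hK : IsCompact K) (hne : K.Nonempty)
    (hf : ContinuousOn f K) (hd : DifferentiableAt ℝ (conjugateOn K f) y) :
    gradient (conjugateOn K f) y ∈ K ∧ conjugateOn K f y =
      ⟪gradient (conjugateOn K f) y, y⟫ - f (gradient (conjugateOn K f) y) := by
  obtain ⟨x, hx, h⟩ := exists_conjugateOn_eq hK hne hf y
  rw [(isSubgradientAt_conjugateOn hK hf hx h).gradient_eq hd]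
  exact ⟨hx, h⟩

theorem tendsto_gradient_conjugateOn_of_tendsto {ι : Type*} {l : Filter ι} {u : ι → E}
    (hK : IsCompact K) (hf : Continuous f) (hd : DifferentiableAt ℝ (conjugateOn K f) y)
    (huK : ∀ i, u i ∈ K)
    (hu : Tendsto (fun i => ⟪u i, y⟫ - f (u i)) l (𝓝 (conjugateOn K f y))) :
    Tendsto u l (𝓝 (gradient (conjugateOn K f) y)) := by
  refine hK.tendsto_nhds_of_unique_mapClusterPt (.of_forall huK) fun z hz hcluster => ?_
  have hcont : Continuous fun x => ⟪x, y⟫ - f x := by fun_prop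
  have hlim := (hcluster.tendsto_comp (hcont.tendsto z)).clusterPt
  have heq : conjugateOn K f y = ⟪z, y⟫ - f z :=
    (eq_of_nhds_neBot (hlim.neBot.mono (inf_le_inf_left _ hu))).symm
  exact ((isSubgradientAt_conjugateOn hK hf.continuousOn hz heq).gradient_eq hd).symm

/-- The envelope theorem: near-maximizers for the perturbed function converge to the unique
maximizer for the unperturbed one. -/
theorem tendsto_conjugateOn_add_mul {η : E → ℝ} (hK : IsCompact K) (hne : K.Nonempty)
    (hf : Continuous f) (hη : Continuous η) (hd : DifferentiableAt ℝ (conjugateOn K f) y) :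
    Tendsto (fun t : ℝ => t⁻¹ * (conjugateOn K (fun x => f x + t * η x) y - conjugateOn K f y))
      (𝓝[>] 0) (𝓝 (-η (gradient (conjugateOn K f) y))) := by
  obtain ⟨hXK, hX⟩ := gradient_conjugateOn_mem_and_eq hK hne hf.continuousOn hd
  set X := gradient (conjugateOn K f) y
  have hcont (t : ℝ) : ContinuousOn (fun x => f x + t * η x) K := by fun_prop
  obtain ⟨B, hB⟩ := (hK.image hη).isBounded.exists_norm_le
  replace hB (x) (hx : x ∈ K) : |η x| ≤ B := hB _ (mem_image_of_mem _ hx)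
  choose u huK hu using fun t : ℝ => exists_conjugateOn_eq hK hne (hcont t) y
  have hlower (t : ℝ) := inner_sub_le_conjugateOn hK (hcont t) hXK y
  have hupper (t : ℝ) := inner_sub_le_conjugateOn hK hf.continuousOn (huK t) y
  have hmax : Tendsto (fun t => ⟪u t, y⟫ - f (u t)) (𝓝[>] 0) (𝓝 (conjugateOn K f y)) := by
    have hsmall : Tendsto (fun t : ℝ => conjugateOn K f y - t * (2 * B)) (𝓝[>] 0)
        (𝓝 (conjugateOn K f y)) := by
      refine tendsto_nhdsWithin_of_tendsto_nhds (Continuous.tendsto' (by fun_prop) _ _ ?_)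
      rw [zero_mul, sub_zero]
    refine tendsto_of_tendsto_of_tendsto_of_le_of_le' hsmall tendsto_const_nhds ?_
      (.of_forall hupper)
    filter_upwards [self_mem_nhdsWithin] with t (ht : 0 < t)
    nlinarith [hlower t, hu t, abs_le.1 (hB X hXK), abs_le.1 (hB (u t) (huK t))]
  have hlim := (hη.tendsto X).comp (tendsto_gradient_conjugateOn_of_tendsto hK hf hd huK hmax)
  refine tendsto_of_tendsto_of_tendsto_of_le_of_le' tendsto_const_nhds hlim.neg ?_ ?_ <;>
  filter_upwards [self_mem_nhdsWithin] with t (ht : 0 < t)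
  · rw [le_inv_mul_iff₀ ht]
    linarith [hlower t]
  · rw [inv_mul_le_iff₀ ht, Function.comp_apply]
    linarith [hu t, hupper t]

end Subgradient

section Kantorovich

open Set Filter Topology
open scoped RealInnerProductSpace

theorem integrable_of_ae_mem_isCompact {X : Type*} [TopologicalSpace X] [T2Space X]
    [MeasurableSpace X] [OpensMeasurableSpace X] {μ : Measure X} [IsFiniteMeasureOnCompacts μ]
    {K : Set X} (hK : IsCompact K) (hμ : ∀ᵐ x ∂μ, x ∈ K) {f : X → ℝ} (hf : ContinuousOn f K) :
    Integrable f μ := by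
  rw [← Measure.restrict_eq_self_of_ae_mem hμ]
  exact hf.integrableOn_compact hK

theorem isCompact_setOf_lipschitzWith_and_eq_zero {X : Type*} [PseudoMetricSpace X] (R : NNReal)
    (x₀ : X) : IsCompact {f : C(X, ℝ) | LipschitzWith R f ∧ f x₀ = 0} := by
  refine ArzelaAscoli.isCompact_of_equicontinuous _ ?_
    (LipschitzWith.uniformEquicontinuous _ R fun f => f.2.1).equicontinuous
  have himage : ContinuousMap.toFun '' {f : C(X, ℝ) | LipschitzWith R f ∧ f x₀ = 0} =
      {f : X → ℝ | (∀ x y, dist (f x) (f y) ≤ R * dist x y) ∧ f x₀ = 0} := by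
    ext f
    constructor
    · rintro ⟨g, ⟨hg, hg0⟩, rfl⟩
      exact ⟨hg.dist_le_mul, hg0⟩
    · rintro ⟨hf, hf0⟩
      have hlip := LipschitzWith.of_dist_le_mul hf
      exact ⟨⟨f, hlip.continuous⟩, ⟨hlip, hf0⟩, rfl⟩
  rw [himage]
  refine (isCompact_univ_pi fun x => isCompact_Icc (a := -(R * dist x x₀))
    (b := R * dist x x₀)).of_isClosed_subset ?_ ?_
  · simp only [ofPred_and, ofPred_forall]
    exact (isClosed_iInter fun x => isClosed_iInter fun y =>
      isClosed_le (by fun_prop) (by fun_prop)).inter (isClosed_eq (by fun_prop) (by fun_prop))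
  · rintro f ⟨hf, hf0⟩ x -
    have := hf x x₀
    rw [hf0, Real.dist_0_eq_abs] at this
    exact abs_le.1 this

variable {E : Type*} [NormedAddCommGroup E] [InnerProductSpace ℝ E]

/-- Competitors in the dual Kantorovich problem for the cost `-⟪x, y⟫` between measures supported
on `K` and on `C`. -/
structure IsDualFeasible (K C : Set E) (φ ψ : E → ℝ) : Prop where
  continuous_left : Continuous φ
  continuous_right : Continuous ψ
  inner_le_add : ∀ x ∈ K, ∀ y ∈ C, ⟪x, y⟫ ≤ φ x + ψ y

theorem isDualFeasible_conjugateOn {K C : Set E} {φ : E → ℝ} (hK : IsCompact K)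
    (hne : K.Nonempty) (hφ : Continuous φ) : IsDualFeasible K C φ (conjugateOn K φ) where
  continuous_left := hφ
  continuous_right := continuous_conjugateOn hK hne hφ.continuousOn
  inner_le_add _ hx y _ := by linarith [inner_sub_le_conjugateOn hK hφ.continuousOn hx y]

variable [MeasurableSpace E]

/-- The pair `(φ, ψ)` has minimal cost `∫ φ ∂μ + ∫ ψ ∂ν` in the dual Kantorovich problem between
`μ` and `ν`. -/
def IsDualMinimal (K C : Set E) (μ ν : Measure E) (φ ψ : E → ℝ) : Prop :=
  ∀ ⦃φ' ψ' : E → ℝ⦄, IsDualFeasible K C φ' ψ' →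
    ∫ x, φ x ∂μ + ∫ y, ψ y ∂ν ≤ ∫ x, φ' x ∂μ + ∫ y, ψ' y ∂ν

variable [BorelSpace E] {K C : Set E} {μ ν : Measure E} [IsProbabilityMeasure μ]
  [IsProbabilityMeasure ν]

theorem integral_add_integral_conjugateOn_le (hK : IsCompact K) (hKne : K.Nonempty)
    (hC : IsCompact C) (hμ : ∀ᵐ x ∂μ, x ∈ K) (hν : ∀ᵐ y ∂ν, y ∈ C) {f g : E → ℝ}
    (hf : Continuous f) (hg : Continuous g) {a : ℝ} (h : ∀ x ∈ K, |f x - g x| ≤ a) :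
    ∫ x, f x ∂μ + ∫ y, conjugateOn K f y ∂ν ≤
      ∫ x, g x ∂μ + ∫ y, conjugateOn K g y ∂ν + 2 * a := by
  have hint {f : E → ℝ} (hf : Continuous f) := integrable_of_ae_mem_isCompact hK hμ hf.continuousOn
  have hint' {f : E → ℝ} (hf : Continuous f) := integrable_of_ae_mem_isCompact hC hν
    (continuous_conjugateOn hK hKne hf.continuousOn).continuousOn
  have hfst : ∫ x, f x ∂μ ≤ ∫ x, (g x + a) ∂μ := by
    refine integral_mono_ae (hint hf) ((hint hg).add (integrable_const a)) ?_
    filter_upwards [hμ] with x hx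
    linarith [abs_le.1 (h x hx)]
  have hsnd : ∫ y, conjugateOn K f y ∂ν ≤ ∫ y, (conjugateOn K g y + a) ∂ν := by
    refine integral_mono (hint' hf) ((hint' hg).add (integrable_const a)) fun y => ?_
    linarith [abs_le.1 (abs_conjugateOn_sub_le hK hKne hf.continuousOn hg.continuousOn y h)]
  rw [integral_add (hint hg) (integrable_const a), integral_const, probReal_univ, one_smul] at hfst
  rw [integral_add (hint' hg) (integrable_const a), integral_const, probReal_univ,
    one_smul] at hsnd
  linarith

theorem continuous_integral_add_integral_conjugateOn (hK : IsCompact K) (hKne : K.Nonempty)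
    (hC : IsCompact C) (hμ : ∀ᵐ x ∂μ, x ∈ K) (hν : ∀ᵐ y ∂ν, y ∈ C) :
    Continuous fun f : C(E, ℝ) => ∫ x, f x ∂μ + ∫ y, conjugateOn K f y ∂ν := by
  refine continuous_iff_continuousAt.2 fun g => Metric.tendsto_nhds.2 fun ε hε => ?_
  have hunif := Metric.tendstoUniformlyOn_iff.1
    ((ContinuousMap.tendsto_iff_forall_isCompact_tendstoUniformlyOn (F := id)).1
      (tendsto_id (x := 𝓝 g)) K hK) (ε / 4) (by positivity)
  filter_upwards [hunif] with f hf
  have hgf := integral_add_integral_conjugateOn_le hK hKne hC hμ hν g.continuous f.continuous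
    fun x hx => (hf x hx).le
  have hfg := integral_add_integral_conjugateOn_le hK hKne hC hμ hν f.continuous g.continuous
    fun x hx => (abs_sub_comm _ _).trans_le (hf x hx).le
  rw [Real.dist_eq, abs_lt]
  constructor <;> linarith

theorem integral_conjugateOn_add_integral_conjugateOn_le (hK : IsCompact K) (hKne : K.Nonempty)
    (hC : IsCompact C) (hCne : C.Nonempty) (hμ : ∀ᵐ x ∂μ, x ∈ K) (hν : ∀ᵐ y ∂ν, y ∈ C)
    {φ ψ : E → ℝ} (h : IsDualFeasible K C φ ψ) (c : ℝ) :
    ∫ x, (conjugateOn C ψ x - c) ∂μ + ∫ y, conjugateOn K (fun x => conjugateOn C ψ x - c) y ∂ν ≤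
      ∫ x, φ x ∂μ + ∫ y, ψ y ∂ν := by
  have hψ := h.continuous_right.continuousOn (s := C)
  have hcont : Continuous fun x => conjugateOn C ψ x - c :=
    (continuous_conjugateOn hC hCne hψ).sub continuous_const
  have hint {f : E → ℝ} (hf : Continuous f) := integrable_of_ae_mem_isCompact hK hμ hf.continuousOn
  have hint' {f : E → ℝ} (hf : Continuous f) := integrable_of_ae_mem_isCompact hC hν hf.continuousOn
  have hfst : ∫ x, (conjugateOn C ψ x - c) ∂μ ≤ ∫ x, (φ x - c) ∂μ := by
    refine integral_mono_ae (hint hcont) ((hint h.continuous_left).sub (integrable_const c)) ?_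
    filter_upwards [hμ] with x hx
    refine sub_le_sub_right (conjugateOn_le hCne fun y hy => ?_) c
    linarith [h.inner_le_add x hx y hy, real_inner_comm x y]
  have hsnd : ∫ y, conjugateOn K (fun x => conjugateOn C ψ x - c) y ∂ν ≤ ∫ y, (ψ y + c) ∂ν := by
    refine integral_mono_ae (hint' (continuous_conjugateOn hK hKne hcont.continuousOn))
      ((hint' h.continuous_right).add (integrable_const c)) ?_
    filter_upwards [hν] with y hy
    refine conjugateOn_le hKne fun x _ => ?_
    linarith [inner_sub_le_conjugateOn hC hψ hy x, real_inner_comm x y]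
  rw [integral_sub (hint h.continuous_left) (integrable_const c), integral_const, probReal_univ,
    one_smul] at hfst
  rw [integral_add (hint' h.continuous_right) (integrable_const c), integral_const, probReal_univ,
    one_smul] at hsnd
  linarith

theorem exists_isDualMinimal_conjugateOn (hK : IsCompact K) (hKne : K.Nonempty)
    (hC : IsCompact C) (hCne : C.Nonempty) (hμ : ∀ᵐ x ∂μ, x ∈ K) (hν : ∀ᵐ y ∂ν, y ∈ C) :
    ∃ f : E → ℝ, Continuous f ∧ IsDualMinimal K C μ ν f (conjugateOn K f) := by
  obtain ⟨R, hR⟩ := hC.isBounded.exists_norm_le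
  replace hR (x) (hx : x ∈ C) : ‖x‖ ≤ R.toNNReal := (hR x hx).trans (Real.le_coe_toNNReal R)
  obtain ⟨f, -, hf⟩ := (isCompact_setOf_lipschitzWith_and_eq_zero R.toNNReal (0 : E)).exists_isMinOn
    ⟨0, (LipschitzWith.const (0 : ℝ)).weaken zero_le, rfl⟩
    (continuous_integral_add_integral_conjugateOn hK hKne hC hμ hν).continuousOn
  refine ⟨f, f.continuous, fun φ ψ h => ?_⟩
  -- Adding a constant does not change the cost, so the competitor may be normalized at `0`.
  have hlip := lipschitzWith_conjugateOn hC hCne h.continuous_right.continuousOn hR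
  have hlip' : LipschitzWith R.toNNReal fun x => conjugateOn C ψ x - conjugateOn C ψ 0 :=
    .of_dist_le_mul fun x y => by simpa using hlip.dist_le_mul x y
  exact (hf (show (⟨_, hlip'.continuous⟩ : C(E, ℝ)) ∈ _ from ⟨hlip', sub_self _⟩)).trans
    (integral_conjugateOn_add_integral_conjugateOn_le hK hKne hC hCne hμ hν h _)

theorem exists_isDualMinimal (hK : IsCompact K) (hKne : K.Nonempty) (hC : IsCompact C)
    (hCne : C.Nonempty) (hμ : ∀ᵐ x ∂μ, x ∈ K) (hν : ∀ᵐ y ∂ν, y ∈ C) :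
    ∃ φ ψ : E → ℝ, φ = conjugateOn C ψ ∧ ψ = conjugateOn K φ ∧ Continuous φ ∧ Continuous ψ ∧
      IsDualMinimal K C μ ν φ ψ := by
  obtain ⟨f, hf, hmin⟩ := exists_isDualMinimal_conjugateOn hK hKne hC hCne hμ hν
  have hψ := continuous_conjugateOn hK hKne hf.continuousOn
  have hφ := continuous_conjugateOn hC hCne hψ.continuousOn
  have hψ' := continuous_conjugateOn hK hKne hφ.continuousOn
  have heq := eqOn_conjugateOn_conjugateOn_conjugateOn hK hKne hC hCne hf.continuousOn
  refine ⟨_, _, (conjugateOn_congr heq).symm, rfl, hφ, hψ', fun φ' ψ' h => ?_⟩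
  refine le_trans (add_le_add ?_ ?_) (hmin h)
  · refine integral_mono_ae (integrable_of_ae_mem_isCompact hK hμ hφ.continuousOn)
      (integrable_of_ae_mem_isCompact hK hμ hf.continuousOn) ?_
    filter_upwards [hμ] with x hx
    exact conjugateOn_conjugateOn_le hK hCne hf.continuousOn hx
  · refine (integral_congr_ae ?_).le
    filter_upwards [hν] with y hy using heq hy

variable [FiniteDimensional ℝ E]

theorem measurable_gradient (f : E → ℝ) : Measurable (gradient f) :=
  (InnerProductSpace.toDual ℝ E).symm.continuous.measurable.comp (measurable_fderiv ℝ f)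

/-- First variation of the dual cost along `φ + t η`, with the potential on the other side replaced
by the conjugate. -/
theorem IsDualMinimal.integral_comp_gradient_le {φ : E → ℝ}
    (hmin : IsDualMinimal K C μ ν φ (conjugateOn K φ)) (hK : IsCompact K) (hKne : K.Nonempty)
    (hC : IsCompact C) (hμ : ∀ᵐ x ∂μ, x ∈ K) (hν : ∀ᵐ y ∂ν, y ∈ C) (hac : ν ≪ volume)
    (hφ : Continuous φ) {η : E → ℝ} (hη : Continuous η) :
    ∫ y, η (gradient (conjugateOn K φ) y) ∂ν ≤ ∫ x, η x ∂μ := by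
  have hcont (t : ℝ) : Continuous fun x => φ x + t * η x := by fun_prop
  have hconj (t : ℝ) := continuous_conjugateOn hK hKne (hcont t).continuousOn
  have hψ := continuous_conjugateOn hK hKne hφ.continuousOn
  obtain ⟨B, hB⟩ := (hK.image hη).isBounded.exists_norm_le
  replace hB (x) (hx : x ∈ K) : |η x| ≤ B := hB _ (mem_image_of_mem _ hx)
  have hlim : Tendsto (fun t : ℝ => ∫ y, t⁻¹ *
      (conjugateOn K (fun x => φ x + t * η x) y - conjugateOn K φ y) ∂ν) (𝓝[>] 0)
      (𝓝 (∫ y, -η (gradient (conjugateOn K φ) y) ∂ν)) := by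
    refine tendsto_integral_filter_of_dominated_convergence (fun _ => B)
      (.of_forall fun t => (((hconj t).sub hψ).const_mul _).aestronglyMeasurable) ?_
      (integrable_const _) ?_
    · filter_upwards [self_mem_nhdsWithin] with t (ht : 0 < t)
      refine .of_forall fun y => ?_
      have := abs_conjugateOn_sub_le hK hKne (hcont t).continuousOn hφ.continuousOn y (a := t * B)
        fun x hx => by
          rw [add_sub_cancel_left, abs_mul, abs_of_pos ht]
          exact mul_le_mul_of_nonneg_left (hB x hx) ht.le
      rwa [Real.norm_eq_abs, abs_mul, abs_of_pos (inv_pos.2 ht), inv_mul_le_iff₀ ht]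
    · filter_upwards [hac.ae_le (ae_differentiableAt_conjugateOn volume hK hKne hφ.continuousOn)]
        with y hy using tendsto_conjugateOn_add_mul hK hKne hφ hη hy
  have hge : ∀ᶠ t : ℝ in 𝓝[>] 0, -∫ x, η x ∂μ ≤ ∫ y, t⁻¹ *
      (conjugateOn K (fun x => φ x + t * η x) y - conjugateOn K φ y) ∂ν := by
    filter_upwards [self_mem_nhdsWithin] with t (ht : 0 < t)
    have hle := hmin (isDualFeasible_conjugateOn hK hKne (hcont t))
    rw [integral_add (integrable_of_ae_mem_isCompact hK hμ hφ.continuousOn)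
      ((integrable_of_ae_mem_isCompact hK hμ hη.continuousOn).const_mul _),
      integral_const_mul] at hle
    rw [integral_const_mul, le_inv_mul_iff₀ ht,
      integral_sub (integrable_of_ae_mem_isCompact hC hν (hconj t).continuousOn)
        (integrable_of_ae_mem_isCompact hC hν hψ.continuousOn)]
    linarith
  have := ge_of_tendsto hlim hge
  rw [integral_neg] at this
  linarith

theorem IsDualMinimal.map_gradient_conjugateOn {φ : E → ℝ}
    (hmin : IsDualMinimal K C μ ν φ (conjugateOn K φ)) (hK : IsCompact K) (hKne : K.Nonempty)
    (hC : IsCompact C) (hμ : ∀ᵐ x ∂μ, x ∈ K) (hν : ∀ᵐ y ∂ν, y ∈ C) (hac : ν ≪ volume)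
    (hφ : Continuous φ) : ν.map (gradient (conjugateOn K φ)) = μ := by
  have hmeas := measurable_gradient (conjugateOn K φ)
  have := Measure.isProbabilityMeasure_map (μ := ν) hmeas.aemeasurable
  refine ext_of_forall_integral_eq_of_IsFiniteMeasure fun f => ?_
  rw [integral_map hmeas.aemeasurable f.continuous.aestronglyMeasurable]
  refine le_antisymm
    (hmin.integral_comp_gradient_le hK hKne hC hμ hν hac hφ f.continuous) ?_
  have := hmin.integral_comp_gradient_le hK hKne hC hμ hν hac hφ f.continuous.neg
  simp only [Pi.neg_apply, integral_neg] at this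
  linarith

end Kantorovich

section MoreauDecomposition

open Set Filter Topology
open scoped RealInnerProductSpace

variable {E : Type*} [NormedAddCommGroup E] [InnerProductSpace ℝ E] {f : E → ℝ} {P : E → E}

/-- `P` is the slope part of the Moreau decomposition `z = P z + (z - P z)` associated with `f`:
`P z` is a subgradient of `f` at `z - P z`. For convex `f` the map `z ↦ z - P z` is the proximal
map of `f`. -/
def IsMoreauSlope (f : E → ℝ) (P : E → E) : Prop :=
  ∀ z, IsSubgradientAt f (P z) (z - P z)

theorem isSubgradientAt_of_isMinOn_add_sq {z q : E} (hf : ConvexOn ℝ univ f)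
    (hq : IsMinOn (fun y => f y + ‖z - y‖ ^ 2 / 2) univ q) : IsSubgradientAt f (z - q) q := by
  intro y
  have hlim : Tendsto (fun t : ℝ => f q + ⟪z - q, y - q⟫ - t * (‖y - q‖ ^ 2 / 2)) (𝓝[>] 0)
      (𝓝 (f q + ⟪z - q, y - q⟫)) :=
    tendsto_nhdsWithin_of_tendsto_nhds
      (Continuous.tendsto' (by fun_prop) _ _ (by rw [zero_mul, sub_zero]))
  refine le_of_tendsto hlim ?_
  filter_upwards [Ioc_mem_nhdsGT zero_lt_one] with t ⟨ht, ht1⟩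
  have hconv := hf.2 (mem_univ q) (mem_univ y) (sub_nonneg.2 ht1) ht.le (sub_add_cancel 1 t)
  have hmin : f q + ‖z - q‖ ^ 2 / 2 ≤ f (q + t • (y - q)) + ‖z - (q + t • (y - q))‖ ^ 2 / 2 :=
    hq (mem_univ _)
  rw [← sub_sub, norm_sub_sq_real (z - q), real_inner_smul_right, norm_smul, mul_pow,
    Real.norm_eq_abs, sq_abs] at hmin
  rw [show (1 - t) • q + t • y = q + t • (y - q) by module, smul_eq_mul, smul_eq_mul] at hconv
  refine le_of_mul_le_mul_left ?_ ht
  linarith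

theorem exists_isMoreauSlope [ProperSpace E] (hf : ConvexOn ℝ univ f) (hcont : Continuous f)
    {p q : E} (hpq : IsSubgradientAt f p q) : ∃ P, IsMoreauSlope f P := by
  suffices hmin : ∀ z, ∃ y, ∀ y', f y + ‖z - y‖ ^ 2 / 2 ≤ f y' + ‖z - y'‖ ^ 2 / 2 by
    choose Q hQ using hmin
    refine ⟨fun z => z - Q z, fun z => ?_⟩
    rw [sub_sub_cancel]
    exact isSubgradientAt_of_isMinOn_add_sq hf fun y _ => hQ z y
  intro z
  refine Continuous.exists_forall_le (f := fun y => f y + ‖z - y‖ ^ 2 / 2) (by fun_prop) ?_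
  have hnorm : Tendsto (fun y => ‖y‖ + (f q - ‖p‖ * ‖z - q‖ - (‖p‖ + 1) ^ 2 / 2 - ‖z‖))
      (cocompact E) atTop :=
    tendsto_atTop_add_const_right _ _ tendsto_norm_cocompact_atTop
  refine tendsto_atTop_mono (fun y => ?_) hnorm
  have hlower := hpq y
  have hinner : -(‖p‖ * ‖y - q‖) ≤ ⟪p, y - q⟫ := (abs_le.1 (abs_real_inner_le_norm p _)).1
  have htri : ‖y - q‖ ≤ ‖z - y‖ + ‖z - q‖ := by
    rw [norm_sub_rev z y]
    exact norm_sub_le_norm_sub_add_norm_sub y z q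
  have htri' : ‖y‖ ≤ ‖z‖ + ‖z - y‖ := norm_le_norm_add_norm_sub z y
  nlinarith [sq_nonneg (‖z - y‖ - (‖p‖ + 1)), norm_nonneg p]

namespace IsMoreauSlope

theorem norm_sub_sq_le_inner (hP : IsMoreauSlope f P) (z z' : E) :
    ‖P z - P z'‖ ^ 2 ≤ ⟪P z - P z', z - z'⟫ := by
  have := (hP z).inner_sub_nonneg (hP z')
  rw [sub_sub_sub_comm, inner_sub_right, real_inner_self_eq_norm_sq] at this
  linarith

theorem norm_sub_sq_add_norm_sub_sq_le (hP : IsMoreauSlope f P) (z z' : E) :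
    ‖P z - P z'‖ ^ 2 + ‖(z - P z) - (z' - P z')‖ ^ 2 ≤ ‖z - z'‖ ^ 2 := by
  rw [sub_sub_sub_comm, norm_sub_sq_real (z - z'), real_inner_comm]
  linarith [hP.norm_sub_sq_le_inner z z']

theorem lipschitzWith (hP : IsMoreauSlope f P) : LipschitzWith 1 P :=
  .of_dist_le_mul fun z z' => by
    rw [dist_eq_norm, dist_eq_norm, NNReal.coe_one, one_mul]
    refine (sq_le_sq₀ (norm_nonneg _) (norm_nonneg _)).1 ?_
    exact (le_add_of_nonneg_right (sq_nonneg _)).trans (hP.norm_sub_sq_add_norm_sub_sq_le z z')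

theorem lipschitzWith_id_sub (hP : IsMoreauSlope f P) : LipschitzWith 1 fun z => z - P z :=
  .of_dist_le_mul fun z z' => by
    rw [dist_eq_norm, dist_eq_norm, NNReal.coe_one, one_mul]
    refine (sq_le_sq₀ (norm_nonneg _) (norm_nonneg _)).1 ?_
    exact (le_add_of_nonneg_left (sq_nonneg _)).trans (hP.norm_sub_sq_add_norm_sub_sq_le z z')

theorem lipschitzWith_two_smul_sub (hP : IsMoreauSlope f P) :
    LipschitzWith 1 fun z => (2 : ℝ) • P z - z :=
  .of_dist_le_mul fun z z' => by
    rw [dist_eq_norm, dist_eq_norm, NNReal.coe_one, one_mul]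
    refine (sq_le_sq₀ (norm_nonneg _) (norm_nonneg _)).1 ?_
    rw [sub_sub_sub_comm, ← smul_sub, norm_sub_sq_real, real_inner_smul_left, norm_smul, mul_pow,
      Real.norm_two]
    linarith [hP.norm_sub_sq_le_inner z z']

theorem apply_add_eq {p q : E} (hP : IsMoreauSlope f P) (h : IsSubgradientAt f p q) :
    P (p + q) = p := by
  have := (hP (p + q)).inner_sub_nonneg h
  rw [show p + q - P (p + q) - q = -(P (p + q) - p) by abel, inner_neg_right,
    real_inner_self_eq_norm_sq] at this
  exact sub_eq_zero.1 (norm_eq_zero.1 (pow_eq_zero_iff two_ne_zero |>.1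
    (le_antisymm (neg_nonneg.1 this) (sq_nonneg _))))

/-- The function being differentiated is the Moreau envelope `z ↦ min_y (f y + ‖z - y‖² / 2)`. -/
theorem hasFDerivAt_envelope (hP : IsMoreauSlope f P) (z : E) :
    HasFDerivAt (fun z => f (z - P z) + ‖P z‖ ^ 2 / 2) (innerSL ℝ (P z)) z := by
  set e := fun z => f (z - P z) + ‖P z‖ ^ 2 / 2 with he
  have hupper (z z' : E) : e z' ≤ e z + ⟪P z, z' - z⟫ + ‖z' - z‖ ^ 2 / 2 := by
    have hsub := hP z' (z - P z)
    have hsq := sq_nonneg ‖(P z + (z' - z)) - P z'‖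
    rw [show z - P z - (z' - P z') = P z' - (P z + (z' - z)) by abel, inner_sub_right,
      real_inner_self_eq_norm_sq] at hsub
    rw [norm_sub_sq_real, norm_add_sq_real, real_inner_comm (P z')] at hsq
    simp only [he]
    linarith
  have hbound (z' : E) : ‖e z' - e z - innerSL ℝ (P z) (z' - z)‖ ≤ 1 * ‖‖z' - z‖ ^ 2‖ := by
    have hback := hupper z' z
    have hmono := hP.norm_sub_sq_le_inner z' z
    rw [← neg_sub z' z, inner_neg_right, norm_neg] at hback
    rw [inner_sub_left] at hmono
    rw [innerSL_apply_apply, Real.norm_eq_abs, norm_pow, norm_norm, one_mul, abs_le]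
    constructor <;> linarith [hupper z z', sq_nonneg ‖P z' - P z‖, sq_nonneg ‖z' - z‖]
  exact .of_isLittleO <| (Asymptotics.IsBigO.of_bound 1 (.of_forall hbound)).trans_isLittleO
    (Asymptotics.isLittleO_pow_sub_sub z one_lt_two)

theorem fderiv_mem_Icc (hP : IsMoreauSlope f P) {z : E}
    (hz : DifferentiableAt ℝ P z) : fderiv ℝ P z ∈ Icc 0 1 := by
  have hsymm : (fderiv ℝ P z).IsSymmetric := fun v w => by
    have := second_derivative_symmetric hP.hasFDerivAt_envelope
      ((innerSL ℝ (E := E)).hasFDerivAt.comp z hz.hasFDerivAt) v w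
    exact this.trans (real_inner_comm _ _)
  have hnonneg (v : E) : 0 ≤ ⟪fderiv ℝ P z v, v⟫ := by
    have hslope := (hz.hasFDerivAt.hasLineDerivAt v).tendsto_slope_zero
    refine ge_of_tendsto (hslope.inner tendsto_const_nhds) (.of_forall fun t => ?_)
    have hmono := (sq_nonneg _).trans (hP.norm_sub_sq_le_inner (z + t • v) z)
    rw [add_sub_cancel_left, real_inner_smul_right] at hmono
    rw [real_inner_smul_left]
    calc (0 : ℝ) ≤ t⁻¹ ^ 2 * (t * ⟪P (z + t • v) - P z, v⟫) := by positivity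
      _ = t⁻¹ * ⟪P (z + t • v) - P z, v⟫ := by rw [← mul_assoc]; congr 1; field_simp
  have hle (v : E) : ⟪fderiv ℝ P z v, v⟫ ≤ ⟪v, v⟫ := by
    have hnorm : ‖fderiv ℝ P z‖ ≤ 1 := norm_fderiv_le_of_lipschitz ℝ hP.lipschitzWith
    calc ⟪fderiv ℝ P z v, v⟫ ≤ ‖fderiv ℝ P z v‖ * ‖v‖ := real_inner_le_norm _ _
      _ ≤ ‖v‖ * ‖v‖ := by gcongr; exact ContinuousLinearMap.le_of_opNorm_le _ hnorm v |>.trans_eq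
                            (one_mul _)
      _ = ⟪v, v⟫ := (real_inner_self_eq_norm_mul_norm v).symm
  constructor
  · rw [ContinuousLinearMap.nonneg_iff_isPositive]
    exact ⟨hsymm, hnonneg⟩
  · refine ⟨LinearMap.IsSymmetric.sub .one hsymm, fun v => ?_⟩
    rw [ContinuousLinearMap.reApplyInnerSelf_apply]
    simpa [inner_sub_left] using hle v

end IsMoreauSlope

theorem IsSubgradientAt.mem_of_conjugateOn [CompleteSpace E] {K : Set E} {p q : E}
    (h : IsSubgradientAt (conjugateOn K f) p q) (hK : IsCompact K) (hne : K.Nonempty)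
    (hconv : Convex ℝ K) (hf : ContinuousOn f K) : p ∈ K := by
  by_contra hp
  obtain ⟨ℓ, u, hlt, hgt⟩ := geometric_hahn_banach_closed_point hconv hK.isClosed hp
  set w := (InnerProductSpace.toDual ℝ E).symm ℓ
  have hℓ (x : E) : ℓ x = ⟪x, w⟫ := by
    rw [real_inner_comm, InnerProductSpace.toDual_symm_apply]
  obtain ⟨x, hx, heq⟩ := exists_conjugateOn_eq hK hne hf (q + w)
  have hsub := h (q + w)
  have hsep := hlt x hx
  rw [hℓ] at hsep hgt
  rw [heq, inner_add_right, add_sub_cancel_left] at hsub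
  linarith [inner_sub_le_conjugateOn hK hf hx q]

theorem exists_isMoreauSlope_conjugateOn [ProperSpace E] {K : Set E} (hK : IsCompact K)
    (hne : K.Nonempty) (hf : ContinuousOn f K) : ∃ P, IsMoreauSlope (conjugateOn K f) P := by
  obtain ⟨x, hx, heq⟩ := exists_conjugateOn_eq hK hne hf 0
  exact exists_isMoreauSlope (convexOn_conjugateOn hK hne hf) (continuous_conjugateOn hK hne hf)
    (isSubgradientAt_conjugateOn hK hf hx heq)

end MoreauDecomposition

section Transport

open Set Module
open scoped RealInnerProductSpace NNReal

theorem addHaar_image_eq_zero_of_lipschitzWith {E : Type*} [NormedAddCommGroup E] [NormedSpace ℝ E]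
    [FiniteDimensional ℝ E] [MeasurableSpace E] [BorelSpace E] (μ : Measure E) [μ.IsAddHaarMeasure]
    {L : ℝ≥0} {f : E → E} (hf : LipschitzWith L f) {s : Set E} (hs : μ s = 0) : μ (f '' s) = 0 := by
  have hhaus : μH[finrank ℝ E] s = 0 := Measure.absolutelyContinuous_isAddHaarMeasure _ μ hs
  refine Measure.absolutelyContinuous_isAddHaarMeasure μ μH[finrank ℝ E] ?_
  simpa [hhaus] using hf.hausdorffMeasure_image_le (Nat.cast_nonneg (finrank ℝ E)) s

variable {E : Type*} [NormedAddCommGroup E] [InnerProductSpace ℝ E] [FiniteDimensional ℝ E]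
  {K C : Set E} {φ ψ : E → ℝ} {P : E → E}

/-- The points of `C` at which `∇ψ` is defined and inverted by `∇φ`, for a Brenier pair. -/
def regularSet (C : Set E) (φ ψ : E → ℝ) : Set E :=
  {y ∈ C | DifferentiableAt ℝ ψ y ∧ DifferentiableAt ℝ φ (gradient ψ y)}

/-- The points `∇ψ y + y` with `y` regular, at which the Moreau slope `P` of `ψ` is
differentiable. -/
def transportDomain (C : Set E) (φ ψ : E → ℝ) (P : E → E) : Set E :=
  {z | z - P z ∈ regularSet C φ ψ ∧ P z = gradient ψ (z - P z) ∧ DifferentiableAt ℝ P z}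

theorem injOn_id_sub_transportDomain : InjOn (fun z => z - P z) (transportDomain C φ ψ P) := by
  rintro z ⟨-, hPz, -⟩ z' ⟨-, hPz', -⟩ (heq : z - P z = z' - P z')
  rw [heq, ← hPz'] at hPz
  rwa [hPz, sub_left_inj] at heq

variable [MeasurableSpace E] [BorelSpace E]

/-- A pair of mutually conjugate potentials whose Brenier map `∇ψ` transports the uniform
probability measure on `C` to the one on `K`. -/
structure IsBrenierPair (K C : Set E) (φ ψ : E → ℝ) : Prop where
  left_eq : φ = conjugateOn C ψ
  right_eq : ψ = conjugateOn K φ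
  continuous_left : Continuous φ
  continuous_right : Continuous ψ
  map_gradient :
    (ProbabilityTheory.cond volume C).map (gradient ψ) = ProbabilityTheory.cond volume K

theorem exists_isBrenierPair (hK : IsCompact K) (hK0 : volume K ≠ 0) (hC : IsCompact C)
    (hC0 : volume C ≠ 0) : ∃ φ ψ, IsBrenierPair K C φ ψ := by
  have hKne := nonempty_of_measure_ne_zero hK0
  have hCne := nonempty_of_measure_ne_zero hC0
  have := ProbabilityTheory.cond_isProbabilityMeasure_of_finite hK0 hK.measure_lt_top.ne
  have := ProbabilityTheory.cond_isProbabilityMeasure_of_finite hC0 hC.measure_lt_top.ne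
  have hKae := ProbabilityTheory.ae_cond_mem (μ := volume) hK.measurableSet
  have hCae := ProbabilityTheory.ae_cond_mem (μ := volume) hC.measurableSet
  obtain ⟨φ, ψ, hφψ, hψφ, hφ, hψ, hmin⟩ := exists_isDualMinimal hK hKne hC hCne hKae hCae
  refine ⟨φ, ψ, hφψ, hψφ, hφ, hψ, ?_⟩
  rw [hψφ] at hmin ⊢
  exact hmin.map_gradient_conjugateOn hK hKne hC hKae hCae
    ProbabilityTheory.cond_absolutelyContinuous hφ

theorem measurableSet_regularSet (hC : MeasurableSet C) (φ ψ : E → ℝ) :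
    MeasurableSet (regularSet C φ ψ) :=
  hC.inter <| (measurableSet_of_differentiableAt ℝ ψ).inter
    (measurable_gradient ψ (measurableSet_of_differentiableAt ℝ φ))

namespace IsBrenierPair

theorem gradient_mem (h : IsBrenierPair K C φ ψ) (hK : IsCompact K) (hKne : K.Nonempty) {y : E}
    (hy : DifferentiableAt ℝ ψ y) : gradient ψ y ∈ K := by
  rw [h.right_eq] at hy ⊢
  exact (gradient_conjugateOn_mem_and_eq hK hKne h.continuous_left.continuousOn hy).1

theorem apply_eq_inner_sub (h : IsBrenierPair K C φ ψ) (hK : IsCompact K) (hKne : K.Nonempty)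
    {y : E} (hy : DifferentiableAt ℝ ψ y) : ψ y = ⟪gradient ψ y, y⟫ - φ (gradient ψ y) := by
  rw [h.right_eq] at hy ⊢
  exact (gradient_conjugateOn_mem_and_eq hK hKne h.continuous_left.continuousOn hy).2

theorem isSubgradientAt_right (h : IsBrenierPair K C φ ψ) (hK : IsCompact K) (hKne : K.Nonempty)
    {y : E} (hy : DifferentiableAt ℝ ψ y) : IsSubgradientAt ψ (gradient ψ y) y := by
  have heq := h.apply_eq_inner_sub hK hKne hy
  have hmem := h.gradient_mem hK hKne hy
  generalize gradient ψ y = x at heq hmem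
  rw [h.right_eq] at heq ⊢
  exact isSubgradientAt_conjugateOn hK h.continuous_left.continuousOn hmem heq

theorem gradient_gradient (h : IsBrenierPair K C φ ψ) (hK : IsCompact K) (hKne : K.Nonempty)
    (hC : IsCompact C) {y : E} (hy : y ∈ regularSet C φ ψ) : gradient φ (gradient ψ y) = y := by
  refine IsSubgradientAt.gradient_eq ?_ hy.2.2
  have heq := h.apply_eq_inner_sub hK hKne hy.2.1
  rw [real_inner_comm, eq_sub_iff_add_eq', ← eq_sub_iff_add_eq] at heq
  generalize gradient ψ y = x at heq
  rw [h.left_eq] at heq ⊢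
  exact isSubgradientAt_conjugateOn hC h.continuous_right.continuousOn hy.1 heq

theorem injOn_gradient (h : IsBrenierPair K C φ ψ) (hK : IsCompact K) (hKne : K.Nonempty)
    (hC : IsCompact C) : InjOn (gradient ψ) (regularSet C φ ψ) :=
  LeftInvOn.injOn fun _ hy => h.gradient_gradient hK hKne hC hy

theorem volume_diff_regularSet (h : IsBrenierPair K C φ ψ) (hK : IsCompact K) (hKne : K.Nonempty)
    (hC : IsCompact C) (hCne : C.Nonempty) : volume (C \ regularSet C φ ψ) = 0 := by
  have hψ : ∀ᵐ y ∂ProbabilityTheory.cond volume C, DifferentiableAt ℝ ψ y := by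
    refine ProbabilityTheory.cond_absolutelyContinuous.ae_le ?_
    rw [h.right_eq]
    exact ae_differentiableAt_conjugateOn volume hK hKne h.continuous_left.continuousOn
  have hφ : ∀ᵐ y ∂ProbabilityTheory.cond volume C, DifferentiableAt ℝ φ (gradient ψ y) := by
    refine ae_of_ae_map (measurable_gradient ψ).aemeasurable ?_
    rw [h.map_gradient]
    refine ProbabilityTheory.cond_absolutelyContinuous.ae_le ?_
    rw [h.left_eq]
    exact ae_differentiableAt_conjugateOn volume hC hCne h.continuous_right.continuousOn
  have hnull : ProbabilityTheory.cond volume C (C \ regularSet C φ ψ) = 0 := by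
    rw [← compl_mem_ae_iff]
    filter_upwards [hψ, hφ] with y hyψ hyφ hy using hy.2 ⟨hy.1, hyψ, hyφ⟩
  rw [ProbabilityTheory.cond_apply hC.measurableSet, inter_eq_self_of_subset_right sdiff_subset]
    at hnull
  exact (mul_eq_zero.1 hnull).resolve_left (ENNReal.inv_ne_zero.2 hC.measure_lt_top.ne)

theorem volume_image_gradient (h : IsBrenierPair K C φ ψ) (hK : IsCompact K) (hK0 : volume K ≠ 0)
    (hC : IsCompact C) (hC0 : volume C ≠ 0) {B : Set E} (hBm : MeasurableSet B)
    (hB : B ⊆ regularSet C φ ψ) : volume (gradient ψ '' B) * volume C = volume B * volume K := by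
  have hKne := nonempty_of_measure_ne_zero hK0
  have hCne := nonempty_of_measure_ne_zero hC0
  have hinj := h.injOn_gradient hK hKne hC
  have hmeas := hBm.image_of_measurable_injOn (measurable_gradient ψ) (hinj.mono hB)
  have hsub : gradient ψ '' B ⊆ K := image_subset_iff.2 fun y hy =>
    h.gradient_mem hK hKne (hB hy).2.1
  have hpre : volume (C ∩ gradient ψ ⁻¹' (gradient ψ '' B)) = volume B := by
    refine (measure_eq_measure_of_null_sdiff
      (subset_inter (fun y hy => (hB hy).1) (subset_preimage_image _ _)) ?_).symm
    refine measure_mono_null ?_ (h.volume_diff_regularSet hK hKne hC hCne)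
    rintro y ⟨⟨hy, y', hy', heq⟩, hyB⟩
    exact ⟨hy, fun hreg => hyB (hinj (hB hy') hreg heq ▸ hy')⟩
  have hmap := congrArg (· (gradient ψ '' B)) h.map_gradient
  simp only [Measure.map_apply (measurable_gradient ψ) hmeas,
    ProbabilityTheory.cond_apply hC.measurableSet, ProbabilityTheory.cond_apply hK.measurableSet,
    hpre, inter_eq_self_of_subset_right hsub] at hmap
  rw [← ENNReal.div_eq_inv_mul, ← ENNReal.div_eq_inv_mul,
    ENNReal.div_eq_div_iff hK0 hK.measure_lt_top.ne hC0 hC.measure_lt_top.ne] at hmap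
  rw [mul_comm, ← hmap, mul_comm]

end IsBrenierPair

/-- `Z ⊆ K + C` parametrises the optimal transport between `K` and `C`: `P` maps `Z` onto almost all
of `K`, and the Jacobians of `P` and `id - P` are proportional. -/
structure IsTransportDomain (K C : Set E) (P : E → E) (Z : Set E) : Prop where
  measurableSet : MeasurableSet Z
  subset_add : Z ⊆ K + C
  differentiableAt : ∀ z ∈ Z, DifferentiableAt ℝ P z
  integrableOn_det : IntegrableOn (fun z => |(fderiv ℝ P z).det|) Z
  setIntegral_det : ∫ z in Z, |(fderiv ℝ P z).det| = volume.real K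
  ae_det_mul_eq : ∀ᵐ z ∂volume.restrict Z,
    |(fderiv ℝ P z).det| * volume.real C = |(1 - fderiv ℝ P z).det| * volume.real K

theorem measurableSet_transportDomain (hC : MeasurableSet C) (φ ψ : E → ℝ)
    (hP : Measurable P) : MeasurableSet (transportDomain C φ ψ P) := by
  have hQ : Measurable fun z => z - P z := measurable_id.sub hP
  exact (hQ (measurableSet_regularSet hC φ ψ)).inter <|
    (measurableSet_eq_fun hP ((measurable_gradient ψ).comp hQ)).inter
      (measurableSet_of_differentiableAt ℝ P)

namespace IsBrenierPair

theorem transportDomain_subset (h : IsBrenierPair K C φ ψ) (hK : IsCompact K) (hKne : K.Nonempty) :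
    transportDomain C φ ψ P ⊆ K + C := by
  rintro z ⟨hreg, hPz, -⟩
  exact ⟨P z, hPz ▸ h.gradient_mem hK hKne hreg.2.1, z - P z, hreg.1, add_sub_cancel _ _⟩

theorem injOn_slope (h : IsBrenierPair K C φ ψ) (hK : IsCompact K) (hKne : K.Nonempty)
    (hC : IsCompact C) : InjOn P (transportDomain C φ ψ P) := by
  rintro z ⟨hreg, hPz, -⟩ z' ⟨hreg', hPz', -⟩ heq
  have := h.injOn_gradient hK hKne hC hreg hreg' (by rw [← hPz, ← hPz', heq])
  rwa [heq, sub_left_inj] at this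

theorem volume_image_slope (h : IsBrenierPair K C φ ψ) (hK : IsCompact K) (hK0 : volume K ≠ 0)
    (hC : IsCompact C) (hC0 : volume C ≠ 0) (hP : Measurable P) {s : Set E}
    (hsm : MeasurableSet s) (hs : s ⊆ transportDomain C φ ψ P) :
    volume (P '' s) * volume C = volume ((fun z => z - P z) '' s) * volume K := by
  have himage : P '' s = gradient ψ '' ((fun z => z - P z) '' s) := by
    rw [image_image]
    exact image_congr fun z hz => (hs hz).2.1
  rw [himage]
  refine h.volume_image_gradient hK hK0 hC hC0
    (hsm.image_of_measurable_injOn (measurable_id.sub hP) (injOn_id_sub_transportDomain.mono hs)) ?_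
  exact image_subset_iff.2 fun z hz => (hs hz).1

theorem volume_image_id_sub_transportDomain (h : IsBrenierPair K C φ ψ) (hK : IsCompact K)
    (hKne : K.Nonempty) (hC : IsCompact C) (hCne : C.Nonempty) (hP : IsMoreauSlope ψ P) :
    volume ((fun z => z - P z) '' transportDomain C φ ψ P) = volume C := by
  have hnull : volume ((fun z => z - P z) '' {z | ¬DifferentiableAt ℝ P z}) = 0 :=
    addHaar_image_eq_zero_of_lipschitzWith volume hP.lipschitzWith_id_sub
      (ae_iff.1 hP.lipschitzWith.ae_differentiableAt)
  rw [← measure_eq_measure_of_null_sdiff (fun y hy => hy.1)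
    (h.volume_diff_regularSet hK hKne hC hCne)]
  refine measure_eq_measure_of_null_sdiff (image_subset_iff.2 fun z hz => hz.1)
    (measure_mono_null ?_ hnull)
  rintro y ⟨hy, hyn⟩
  have hslope := hP.apply_add_eq (h.isSubgradientAt_right hK hKne hy.2.1)
  have hbase : gradient ψ y + y - P (gradient ψ y + y) = y := by rw [hslope, add_sub_cancel_left]
  refine ⟨gradient ψ y + y, fun hd => hyn ⟨gradient ψ y + y, ⟨?_, ?_, hd⟩, hbase⟩, hbase⟩
  · rwa [hbase]
  · rw [hbase, hslope]

theorem volume_image_slope_transportDomain (h : IsBrenierPair K C φ ψ) (hK : IsCompact K)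
    (hK0 : volume K ≠ 0) (hC : IsCompact C) (hC0 : volume C ≠ 0) (hP : IsMoreauSlope ψ P) :
    volume (P '' transportDomain C φ ψ P) = volume K := by
  have hmeas := hP.lipschitzWith.continuous.measurable
  have heq := h.volume_image_slope hK hK0 hC hC0 hmeas
    (measurableSet_transportDomain hC.measurableSet φ ψ hmeas) subset_rfl
  rwa [h.volume_image_id_sub_transportDomain hK (nonempty_of_measure_ne_zero hK0) hC
    (nonempty_of_measure_ne_zero hC0) hP, mul_comm,
    ENNReal.mul_right_inj hC0 hC.measure_lt_top.ne] at heq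

end IsBrenierPair

theorem setIntegral_abs_det_fderiv {s : Set E} {f : E → E} {f' : E → E →L[ℝ] E}
    (hs : MeasurableSet s) (hf' : ∀ z ∈ s, HasFDerivAt f (f' z) z) (hf : InjOn f s) :
    ∫ z in s, |(f' z).det| = volume.real (f '' s) := by
  have := integral_image_eq_integral_abs_det_fderiv_smul volume hs
    (fun z hz => (hf' z hz).hasFDerivWithinAt) hf fun _ => (1 : ℝ)
  simpa using this.symm

theorem integrableOn_abs_det_fderiv {s : Set E} {f : E → E} {f' : E → E →L[ℝ] E}
    (hs : MeasurableSet s) (hf' : ∀ z ∈ s, HasFDerivAt f (f' z) z) (hf : InjOn f s)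
    (hfin : volume (f '' s) ≠ ⊤) : IntegrableOn (fun z => |(f' z).det|) s := by
  have := integrableOn_image_iff_integrableOn_abs_det_fderiv_smul volume hs
    (fun z hz => (hf' z hz).hasFDerivWithinAt) hf fun _ => (1 : ℝ)
  simpa [integrableOn_const_iff, hfin.lt_top] using this

theorem IsBrenierPair.isTransportDomain (h : IsBrenierPair K C φ ψ) (hK : IsCompact K)
    (hK0 : volume K ≠ 0) (hC : IsCompact C) (hC0 : volume C ≠ 0) (hP : IsMoreauSlope ψ P) :
    IsTransportDomain K C P (transportDomain C φ ψ P) := by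
  have hKne := nonempty_of_measure_ne_zero hK0
  have hmeas := hP.lipschitzWith.continuous.measurable
  have hZ := measurableSet_transportDomain hC.measurableSet φ ψ hmeas
  have hdP : ∀ z ∈ transportDomain C φ ψ P, HasFDerivAt P (fderiv ℝ P z) z :=
    fun z hz => hz.2.2.hasFDerivAt
  have hdQ : ∀ z ∈ transportDomain C φ ψ P, HasFDerivAt (fun z => z - P z) (1 - fderiv ℝ P z) z :=
    fun z hz => (hasFDerivAt_id z).sub (hdP z hz)
  have hinj := h.injOn_slope (P := P) hK hKne hC
  have hvolP := h.volume_image_slope_transportDomain hK hK0 hC hC0 hP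
  have hvolQ := h.volume_image_id_sub_transportDomain hK hKne hC
    (nonempty_of_measure_ne_zero hC0) hP
  have hintP := integrableOn_abs_det_fderiv hZ hdP hinj (hvolP.trans_ne hK.measure_lt_top.ne)
  have hintQ := integrableOn_abs_det_fderiv hZ hdQ injOn_id_sub_transportDomain
    (hvolQ.trans_ne hC.measure_lt_top.ne)
  refine ⟨hZ, h.transportDomain_subset hK hKne, fun z hz => hz.2.2, hintP, ?_, ?_⟩
  · rw [setIntegral_abs_det_fderiv hZ hdP hinj, measureReal_def, hvolP, measureReal_def]
  · refine Integrable.ae_eq_of_forall_setIntegral_eq _ _ (hintP.mul_const _) (hintQ.mul_const _)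
      fun s hs _ => ?_
    have hsZ : s ∩ transportDomain C φ ψ P ⊆ transportDomain C φ ψ P := inter_subset_right
    have hsm := hs.inter hZ
    rw [Measure.restrict_restrict hs, integral_mul_const, integral_mul_const,
      setIntegral_abs_det_fderiv hsm (fun z hz => hdP z hz.2) (hinj.mono hsZ),
      setIntegral_abs_det_fderiv hsm (fun z hz => hdQ z hz.2)
        (injOn_id_sub_transportDomain.mono hsZ)]
    have := congrArg ENNReal.toReal (h.volume_image_slope hK hK0 hC hC0 hmeas hsm hsZ)
    rwa [ENNReal.toReal_mul, ENNReal.toReal_mul] at this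

theorem exists_isTransportDomain (hK : IsCompact K) (hK0 : volume K ≠ 0) (hC : IsCompact C)
    (hC0 : volume C ≠ 0) : ∃ φ P Z, Continuous φ ∧ IsMoreauSlope (conjugateOn K φ) P ∧
      IsTransportDomain K C P Z := by
  obtain ⟨φ, ψ, h⟩ := exists_isBrenierPair hK hK0 hC hC0
  obtain ⟨P, hP⟩ := exists_isMoreauSlope_conjugateOn hK (nonempty_of_measure_ne_zero hK0)
    h.continuous_left.continuousOn
  exact ⟨φ, P, _, h.continuous_left, hP,
    h.isTransportDomain hK hK0 hC hC0 (h.right_eq ▸ hP)⟩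

end Transport

section SpectralBounds

open Set Module
open scoped RealInnerProductSpace

theorem det_eq_prod_of_apply_basis_eq_smul {ι R M : Type*} [Fintype ι] [CommRing R]
    [AddCommGroup M] [Module R M] (b : Basis ι R M) {f : M →ₗ[R] M} {l : ι → R}
    (h : ∀ i, f (b i) = l i • b i) : LinearMap.det f = ∏ i, l i := by
  classical
  have hdiag : LinearMap.toMatrix b b f = Matrix.diagonal l := by
    ext i j
    simp only [LinearMap.toMatrix_apply, h, map_smul, Basis.repr_self, Finsupp.smul_apply,
      Finsupp.single_apply, Matrix.diagonal_apply, smul_eq_mul]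
    grind
  rw [← LinearMap.det_toMatrix b, hdiag, Matrix.det_diagonal]

variable {E : Type*} [NormedAddCommGroup E] [InnerProductSpace ℝ E]

theorem norm_le_of_apply_basis_eq_smul {ι : Type*} [Fintype ι] (b : OrthonormalBasis ι ℝ E)
    {A : E →L[ℝ] E} {l : ι → ℝ} (h : ∀ i, A (b i) = l i • b i) {M : ℝ} (hM : 0 ≤ M)
    (hl : ∀ i, |l i| ≤ M) : ‖A‖ ≤ M := by
  classical
  refine A.opNorm_le_bound hM fun v => ?_
  have hcoord (i : ι) : ⟪b i, A v⟫ = l i * ⟪b i, v⟫ := by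
    conv_lhs => rw [← b.sum_repr' v, map_sum]
    simp [h, inner_sum, real_inner_smul_right, b.inner_eq_ite, mul_comm]
  rw [← sq_le_sq₀ (norm_nonneg _) (by positivity), mul_pow, ← b.sum_sq_norm_inner_right,
    ← b.sum_sq_norm_inner_right v, Finset.mul_sum]
  refine Finset.sum_le_sum fun i _ => ?_
  rw [hcoord, norm_mul, mul_pow, Real.norm_eq_abs]
  gcongr
  exact hl i

variable [FiniteDimensional ℝ E] {A : E →L[ℝ] E}

theorem exists_orthonormalBasis_apply_eq_smul (hA : A ∈ Icc 0 1) :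
    ∃ (b : OrthonormalBasis (Fin (finrank ℝ E)) ℝ E) (l : Fin (finrank ℝ E) → ℝ),
      (∀ i, l i ∈ Icc 0 1) ∧ ∀ i, A (b i) = l i • b i := by
  have hpos : A.IsPositive := A.nonneg_iff_isPositive.1 hA.1
  have hsymm : (A : E →ₗ[ℝ] E).IsSymmetric := hpos.1
  refine ⟨hsymm.eigenvectorBasis rfl, hsymm.eigenvalues rfl, fun i => ?_,
    hsymm.apply_eigenvectorBasis rfl⟩
  set b := hsymm.eigenvectorBasis rfl
  have hval : ⟪A (b i), b i⟫ = hsymm.eigenvalues rfl i := by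
    change ⟪(A : E →ₗ[ℝ] E) (b i), b i⟫ = _
    rw [hsymm.apply_eigenvectorBasis]
    simp only [RCLike.ofReal_real_eq_id, id, real_inner_smul_left]
    rw [real_inner_self_eq_norm_sq, b.norm_eq_one, one_pow, mul_one]
  rw [← hval]
  have hle : 0 ≤ ⟪(1 - A) (b i), b i⟫ := ((A.le_def 1).1 hA.2).inner_nonneg_left _
  refine ⟨hpos.inner_nonneg_left _, ?_⟩
  simpa [inner_sub_left, real_inner_self_eq_norm_sq, b.norm_eq_one] using hle

theorem exists_det_eq_prod_of_mem_Icc (hA : A ∈ Icc 0 1) :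
    ∃ (b : OrthonormalBasis (Fin (finrank ℝ E)) ℝ E) (l : Fin (finrank ℝ E) → ℝ),
      (∀ i, l i ∈ Icc 0 1) ∧ (∀ i, A (b i) = l i • b i) ∧ A.det = ∏ i, l i ∧
      (1 - A).det = ∏ i, (1 - l i) := by
  obtain ⟨b, l, hl, hb⟩ := exists_orthonormalBasis_apply_eq_smul hA
  refine ⟨b, l, hl, hb, det_eq_prod_of_apply_basis_eq_smul b.toBasis fun i => ?_,
    det_eq_prod_of_apply_basis_eq_smul b.toBasis fun i => ?_⟩
  · simpa using hb i
  · simp [hb, sub_smul]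

theorem det_nonneg_of_mem_Icc (hA : A ∈ Icc 0 1) : 0 ≤ A.det := by
  obtain ⟨-, l, hl, -, hdet, -⟩ := exists_det_eq_prod_of_mem_Icc hA
  exact hdet ▸ Finset.prod_nonneg fun i _ => (hl i).1

theorem det_one_sub_nonneg_of_mem_Icc (hA : A ∈ Icc 0 1) : 0 ≤ (1 - A).det := by
  obtain ⟨-, l, hl, -, -, hdet⟩ := exists_det_eq_prod_of_mem_Icc hA
  exact hdet ▸ Finset.prod_nonneg fun i _ => sub_nonneg.2 (hl i).2

theorem rpow_prod_add_rpow_prod_one_sub_le_one {ι : Type*} [Fintype ι] [Nonempty ι] {l : ι → ℝ}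
    (hl : ∀ i, l i ∈ Icc 0 1) :
    (∏ i, l i) ^ (1 / Fintype.card ι : ℝ) + (∏ i, (1 - l i)) ^ (1 / Fintype.card ι : ℝ) ≤ 1 := by
  have hl' (i : ι) : 0 ≤ 1 - l i := sub_nonneg.2 (hl i).2
  have hsum : ∑ _i : ι, (1 / Fintype.card ι : ℝ) = 1 := by simp
  have hleft := Real.geom_mean_le_arith_mean_weighted Finset.univ
    (fun _ => (1 / Fintype.card ι : ℝ)) l (fun _ _ => by positivity) hsum fun i _ => (hl i).1
  have hright := Real.geom_mean_le_arith_mean_weighted Finset.univ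
    (fun _ => (1 / Fintype.card ι : ℝ)) _ (fun _ _ => by positivity) hsum fun i _ => hl' i
  rw [Real.finsetProd_rpow _ _ fun i _ => (hl i).1] at hleft
  rw [Real.finsetProd_rpow _ _ fun i _ => hl' i] at hright
  refine (add_le_add hleft hright).trans_eq ?_
  simp only [← Finset.sum_add_distrib, ← mul_add, add_sub_cancel, mul_one, hsum]

theorem rpow_det_add_rpow_det_one_sub_le_one [Nontrivial E] (hA : A ∈ Icc 0 1) :
    A.det ^ (1 / finrank ℝ E : ℝ) + (1 - A).det ^ (1 / finrank ℝ E : ℝ) ≤ 1 := by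
  obtain ⟨-, l, hl, -, hdet, hdet'⟩ := exists_det_eq_prod_of_mem_Icc hA
  have : NeZero (finrank ℝ E) := ⟨finrank_pos.ne'⟩
  simpa [hdet, hdet'] using rpow_prod_add_rpow_prod_one_sub_le_one hl

theorem norm_two_smul_sub_one_sq_le (hA : A ∈ Icc 0 1) :
    ‖(2 : ℝ) • A - 1‖ ^ 2 ≤ 1 - 4 ^ finrank ℝ E * (A.det * (1 - A).det) := by
  obtain ⟨b, l, hl, hb, hdet, hdet'⟩ := exists_det_eq_prod_of_mem_Icc hA
  have hmem (i) : 1 - (2 * l i - 1) ^ 2 ∈ Icc (0 : ℝ) 1 :=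
    ⟨by nlinarith [(hl i).1, (hl i).2], sub_le_self _ (sq_nonneg _)⟩
  have hprod : 4 ^ finrank ℝ E * (A.det * (1 - A).det) = ∏ i, (1 - (2 * l i - 1) ^ 2) := by
    rw [hdet, hdet', ← Finset.prod_mul_distrib, ← Fin.prod_const, ← Finset.prod_mul_distrib]
    exact Finset.prod_congr rfl fun i _ => by ring
  have hle (i) : ∏ i, (1 - (2 * l i - 1) ^ 2) ≤ 1 - (2 * l i - 1) ^ 2 := by
    simpa using Finset.prod_le_prod_of_subset_of_le_one (Finset.subset_univ {i})
      (fun i _ => (hmem i).1) fun i _ _ => (hmem i).2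
  have hnonneg : 0 ≤ 1 - ∏ i, (1 - (2 * l i - 1) ^ 2) :=
    sub_nonneg.2 (Finset.prod_le_one (fun i _ => (hmem i).1) fun i _ => (hmem i).2)
  rw [hprod, ← Real.le_sqrt (norm_nonneg _) hnonneg]
  refine norm_le_of_apply_basis_eq_smul b (l := fun i => 2 * l i - 1) (fun i => ?_)
    (Real.sqrt_nonneg _) fun i => Real.abs_le_sqrt (by linarith [hle i])
  simp [hb, sub_smul, mul_smul]

end SpectralBounds

section BrunnMinkowski

open Set Module

variable {E : Type*} [NormedAddCommGroup E] [InnerProductSpace ℝ E] [FiniteDimensional ℝ E]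
  [MeasurableSpace E] [BorelSpace E] {K C Z : Set E} {f : E → ℝ} {P : E → E}

theorem mul_rpow_add_rpow_pow_le {n : ℕ} (hn : n ≠ 0) {p q a c : ℝ} (hp : 0 ≤ p) (hq : 0 ≤ q)
    (ha : 0 ≤ a) (hc : 0 ≤ c) (hpq : p ^ (1 / n : ℝ) + q ^ (1 / n : ℝ) ≤ 1) (h : p * c = q * a) :
    p * (a ^ (1 / n : ℝ) + c ^ (1 / n : ℝ)) ^ n ≤ a := by
  have hroot : p ^ (1 / n : ℝ) * c ^ (1 / n : ℝ) = q ^ (1 / n : ℝ) * a ^ (1 / n : ℝ) := by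
    rw [← Real.mul_rpow hp hc, ← Real.mul_rpow hq ha, h]
  have hpow {x : ℝ} (hx : 0 ≤ x) : (x ^ (1 / n : ℝ)) ^ n = x := by
    rw [one_div, Real.rpow_inv_natCast_pow hx hn]
  calc p * (a ^ (1 / n : ℝ) + c ^ (1 / n : ℝ)) ^ n
      = (p ^ (1 / n : ℝ) * (a ^ (1 / n : ℝ) + c ^ (1 / n : ℝ))) ^ n := by rw [mul_pow, hpow hp]
    _ = ((p ^ (1 / n : ℝ) + q ^ (1 / n : ℝ)) * a ^ (1 / n : ℝ)) ^ n := by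
      rw [mul_add, hroot, add_mul]
    _ ≤ (1 * a ^ (1 / n : ℝ)) ^ n := by gcongr
    _ = a := by rw [one_mul, hpow ha]

theorem IsTransportDomain.ae_det_mul_le [Nontrivial E] (h : IsTransportDomain K C P Z)
    (hP : IsMoreauSlope f P) : ∀ᵐ z ∂volume.restrict Z, |(fderiv ℝ P z).det| *
      (volume.real K ^ (1 / finrank ℝ E : ℝ) + volume.real C ^ (1 / finrank ℝ E : ℝ)) ^ finrank ℝ E
      ≤ volume.real K := by
  filter_upwards [h.ae_det_mul_eq, ae_restrict_mem h.measurableSet] with z hdet hz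
  have hmem := hP.fderiv_mem_Icc (h.differentiableAt z hz)
  rw [abs_of_nonneg (det_nonneg_of_mem_Icc hmem),
    abs_of_nonneg (det_one_sub_nonneg_of_mem_Icc hmem)] at hdet
  rw [abs_of_nonneg (det_nonneg_of_mem_Icc hmem)]
  exact mul_rpow_add_rpow_pow_le finrank_pos.ne' (det_nonneg_of_mem_Icc hmem)
    (det_one_sub_nonneg_of_mem_Icc hmem) measureReal_nonneg measureReal_nonneg
    (rpow_det_add_rpow_det_one_sub_le_one hmem) hdet

theorem brunn_minkowski [Nontrivial E] (hK : IsCompact K) (hK0 : volume K ≠ 0) (hC : IsCompact C)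
    (hC0 : volume C ≠ 0) :
    (volume.real K ^ (1 / finrank ℝ E : ℝ) + volume.real C ^ (1 / finrank ℝ E : ℝ)) ^ finrank ℝ E
      ≤ volume.real (K + C) := by
  obtain ⟨φ, P, Z, -, hP, h⟩ := exists_isTransportDomain hK hK0 hC hC0
  have hfin := (hK.add hC).measure_lt_top (μ := volume)
  have : IsFiniteMeasure (volume.restrict Z) :=
    ⟨by simpa using (measure_mono h.subset_add).trans_lt hfin⟩
  have hint := integral_mono_ae (h.integrableOn_det.mul_const _) (integrable_const _)
    (h.ae_det_mul_le hP)
  rw [integral_mul_const, h.setIntegral_det, integral_const, smul_eq_mul,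
    measureReal_restrict_apply_univ, mul_comm] at hint
  exact (le_of_mul_le_mul_right hint (ENNReal.toReal_pos hK0 hK.measure_lt_top.ne)).trans
    (measureReal_mono h.subset_add hfin.ne)

theorem sq_integral_le_measureReal_univ_mul {α : Type*} [MeasurableSpace α] {μ : Measure α}
    [IsFiniteMeasure μ] {g : α → ℝ} (hg : Integrable g μ) (hg2 : Integrable (fun x => g x ^ 2) μ) :
    (∫ x, g x ∂μ) ^ 2 ≤ μ.real univ * ∫ x, g x ^ 2 ∂μ := by
  have hquad (t : ℝ) :
      0 ≤ μ.real univ * (t * t) + -(2 * ∫ x, g x ∂μ) * t + ∫ x, g x ^ 2 ∂μ := by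
    have hsub : Integrable (fun x => g x ^ 2 - 2 * t * g x) μ := hg2.sub (hg.const_mul _)
    calc 0 ≤ ∫ x, (t - g x) ^ 2 ∂μ := integral_nonneg fun x => sq_nonneg _
      _ = ∫ x, (t * t + (g x ^ 2 - 2 * t * g x)) ∂μ := by congr with x; ring
      _ = _ := by
        rw [integral_add (integrable_const _) hsub, integral_sub hg2 (hg.const_mul _),
          integral_const_mul (2 * t), integral_const, smul_eq_mul]
        ring
  have := discrim_le_zero hquad
  rw [discrim] at this
  linarith

theorem IsTransportDomain.ae_two_pow_mul_det_le (h : IsTransportDomain K C P Z)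
    (hP : IsMoreauSlope f P) (hK0 : volume.real K ≠ 0) (hKC : volume.real K = volume.real C) :
    ∀ᵐ z ∂volume.restrict Z, 2 ^ finrank ℝ E * |(fderiv ℝ P z).det| ≤
      1 - ‖fderiv ℝ (fun z => (2 : ℝ) • P z - z) z‖ ^ 2 / 2 := by
  filter_upwards [h.ae_det_mul_eq, ae_restrict_mem h.measurableSet] with z hdet hz
  have hd := h.differentiableAt z hz
  have hmem := hP.fderiv_mem_Icc hd
  have hderiv : fderiv ℝ (fun z => (2 : ℝ) • P z - z) z = (2 : ℝ) • fderiv ℝ P z - 1 :=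
    ((hd.hasFDerivAt.const_smul (2 : ℝ)).sub (hasFDerivAt_id z)).fderiv
  rw [abs_of_nonneg (det_nonneg_of_mem_Icc hmem),
    abs_of_nonneg (det_one_sub_nonneg_of_mem_Icc hmem), ← hKC, mul_left_inj' hK0] at hdet
  have hnorm := norm_two_smul_sub_one_sq_le hmem
  have hle : ‖(2 : ℝ) • fderiv ℝ P z - 1‖ ^ 2 ≤ 1 :=
    hnorm.trans (sub_le_self _ (mul_nonneg (by positivity) (hdet ▸ mul_self_nonneg _)))
  rw [hderiv, abs_of_nonneg (det_nonneg_of_mem_Icc hmem),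
    ← sq_le_sq₀ (mul_nonneg (by positivity) (det_nonneg_of_mem_Icc hmem)) (by linarith)]
  rw [← hdet, show (4 : ℝ) = 2 ^ 2 by norm_num, ← pow_mul, mul_comm 2, pow_mul] at hnorm
  nlinarith [sq_nonneg (‖(2 : ℝ) • fderiv ℝ P z - 1‖ ^ 2)]

theorem IsTransportDomain.setIntegral_norm_fderiv_sq_le (h : IsTransportDomain K C P Z)
    (hP : IsMoreauSlope f P) (hK : IsCompact K) (hC : IsCompact C) (hK0 : volume.real K ≠ 0)
    (hKC : volume.real K = volume.real C)
    (hint : IntegrableOn (fun z => ‖fderiv ℝ (fun z => (2 : ℝ) • P z - z) z‖ ^ 2) (K + C)) :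
    ∫ z in K + C, ‖fderiv ℝ (fun z => (2 : ℝ) • P z - z) z‖ ^ 2 ≤
      2 * (volume.real (K + C) - 2 ^ finrank ℝ E * volume.real K) := by
  set s := fun z => ‖fderiv ℝ (fun z => (2 : ℝ) • P z - z) z‖
  have hs1 (z : E) : s z ≤ 1 := norm_fderiv_le_of_lipschitz ℝ hP.lipschitzWith_two_smul_sub
  have hfin := (hK.add hC).measure_lt_top (μ := volume)
  have hconst : IntegrableOn (fun _ => (1 : ℝ)) (K + C) := integrableOn_const hfin.ne
  have hint' : IntegrableOn (fun z => 1 - s z ^ 2 / 2) (K + C) := hconst.sub (hint.div_const 2)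
  have hmain : 2 ^ finrank ℝ E * volume.real K ≤ ∫ z in K + C, (1 - s z ^ 2 / 2) :=
    calc 2 ^ finrank ℝ E * volume.real K
        = ∫ z in Z, 2 ^ finrank ℝ E * |(fderiv ℝ P z).det| := by
          rw [integral_const_mul, h.setIntegral_det]
      _ ≤ ∫ z in Z, (1 - s z ^ 2 / 2) :=
          integral_mono_ae (h.integrableOn_det.const_mul _) (hint'.mono_set h.subset_add)
            (h.ae_two_pow_mul_det_le hP hK0 hKC)
      _ ≤ ∫ z in K + C, (1 - s z ^ 2 / 2) :=
          setIntegral_mono_set hint' (.of_forall fun z => by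
            have := pow_le_one₀ (n := 2) (norm_nonneg _) (hs1 z)
            simp only [Pi.zero_apply]
            linarith) (.of_forall h.subset_add)
  rw [integral_sub hconst (hint.div_const 2), integral_div, setIntegral_const, smul_eq_mul,
    mul_one] at hmain
  linarith

/-- `S` measures how far the optimal splitting of `z ∈ K + C` is from `z / 2 + z / 2`; it is
constant if `C` is a translate of `K`. -/
theorem exists_lipschitzWith_sq_setIntegral_norm_fderiv_le (hK : IsCompact K) (hKconv : Convex ℝ K)
    (hK0 : volume.real K ≠ 0) (hC : IsCompact C) (hKC : volume.real K = volume.real C) :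
    ∃ S : E → E, LipschitzWith 1 S ∧ (∀ z, z + S z ∈ (2 : ℝ) • K) ∧
      (∫ z in K + C, ‖fderiv ℝ S z‖) ^ 2 ≤
        2 * volume.real (K + C) * (volume.real (K + C) - 2 ^ finrank ℝ E * volume.real K) := by
  have hvolK : volume K ≠ 0 := fun h => hK0 (by simp [measureReal_def, h])
  have hvolC : volume C ≠ 0 := fun h => hK0 (by simp [hKC, measureReal_def, h])
  obtain ⟨φ, P, Z, hφ, hP, h⟩ := exists_isTransportDomain hK hvolK hC hvolC
  have hKne := nonempty_of_measure_ne_zero hvolK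
  refine ⟨_, hP.lipschitzWith_two_smul_sub, fun z => ⟨P z, ?_, by simp⟩, ?_⟩
  · exact (hP z).mem_of_conjugateOn hK hKne hKconv hφ.continuousOn
  have hs1 (z : E) : ‖fderiv ℝ (fun z => (2 : ℝ) • P z - z) z‖ ≤ 1 :=
    norm_fderiv_le_of_lipschitz ℝ hP.lipschitzWith_two_smul_sub
  have : IsFiniteMeasure (volume.restrict (K + C)) := ⟨by simpa using (hK.add hC).measure_lt_top⟩
  have hmeas := (measurable_fderiv ℝ fun z => (2 : ℝ) • P z - z).norm
  have hint : IntegrableOn (fun z => ‖fderiv ℝ (fun z => (2 : ℝ) • P z - z) z‖ ^ 2) (K + C) :=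
    Integrable.of_bound (hmeas.pow_const 2).aestronglyMeasurable 1 <| .of_forall fun z => by
      simpa using pow_le_one₀ (n := 2) (norm_nonneg _) (hs1 z)
  have hcs := sq_integral_le_measureReal_univ_mul (μ := volume.restrict (K + C))
    (.of_bound hmeas.aestronglyMeasurable 1 <| .of_forall fun z => by simpa using hs1 z) hint
  rw [measureReal_restrict_apply_univ] at hcs
  calc _ ≤ _ := hcs
    _ ≤ volume.real (K + C) * (2 * (volume.real (K + C) - 2 ^ finrank ℝ E * volume.real K)) := by
      gcongr
      exact h.setIntegral_norm_fderiv_sq_le hP hK hC hK0 hKC hint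
    _ = _ := by ring

end BrunnMinkowski

section VolumeScaling

open Module Set

variable {E : Type*} [NormedAddCommGroup E] [InnerProductSpace ℝ E] [FiniteDimensional ℝ E]
  [MeasurableSpace E] [BorelSpace E]

theorem measureReal_smul_of_nonneg {r : ℝ} (hr : 0 ≤ r) (s : Set E) :
    volume.real (r • s) = r ^ finrank ℝ E * volume.real s := by
  rw [measureReal_def, Measure.addHaar_smul_of_nonneg _ hr, ENNReal.toReal_mul,
    ENNReal.toReal_ofReal (by positivity), measureReal_def]

variable [Nontrivial E] {K C : Set E}

theorem rpow_measureReal_smul_of_nonneg {r : ℝ} (hr : 0 ≤ r) (s : Set E) :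
    volume.real (r • s) ^ (1 / finrank ℝ E : ℝ) = r * volume.real s ^ (1 / finrank ℝ E : ℝ) := by
  rw [measureReal_smul_of_nonneg hr, Real.mul_rpow (by positivity) measureReal_nonneg, one_div,
    Real.pow_rpow_inv_natCast hr finrank_pos.ne']

theorem brunn_minkowski_smul {a b : ℝ} (ha : 0 < a) (hK : IsCompact K) (hK0 : 0 < volume.real K)
    (hb : 0 < b) (hC : IsCompact C) (hC0 : 0 < volume.real C) :
    (a * volume.real K ^ (1 / finrank ℝ E : ℝ) + b * volume.real C ^ (1 / finrank ℝ E : ℝ)) ^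
      finrank ℝ E ≤ volume.real (a • K + b • C) := by
  have hne {r : ℝ} {s : Set E} (hr : 0 < r) (hs : 0 < volume.real s) : volume (r • s) ≠ 0 := by
    refine fun h => ne_of_gt (?_ : 0 < volume.real (r • s)) (by rw [measureReal_def, h]; rfl)
    rw [measureReal_smul_of_nonneg hr.le]
    positivity
  simpa only [rpow_measureReal_smul_of_nonneg ha.le, rpow_measureReal_smul_of_nonneg hb.le] using
    brunn_minkowski (hK.smul a) (hne ha hK0) (hC.smul b) (hne hb hC0)

theorem one_add_log_two_div_le_rpow (n : ℕ) : 1 + Real.log 2 / n ≤ (2 : ℝ) ^ (1 / n : ℝ) := by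
  rw [Real.rpow_def_of_pos two_pos, mul_one_div, add_comm]
  exact Real.add_one_le_exp _

theorem mul_measureReal_le_measureReal_smul_add_smul {W F : Set E} (hW : IsCompact W)
    (hF : IsCompact F) (hFW : volume.real F ≤ volume.real W / 2) {ε : ℝ} (hε0 : 0 < ε)
    (hε1 : ε < 1) :
    (1 + ε * Real.log 2) * volume.real F ≤ volume.real ((1 - ε) • F + ε • W) := by
  obtain hF0 | hF0 := (measureReal_nonneg (μ := volume) (s := F)).eq_or_lt
  · rw [← hF0, mul_zero]
    exact measureReal_nonneg
  set n := finrank ℝ E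
  set x := volume.real F
  have hn : n ≠ 0 := finrank_pos.ne'
  have hroot : x ^ (1 / n : ℝ) * (1 + Real.log 2 / n) ≤ volume.real W ^ (1 / n : ℝ) :=
    calc x ^ (1 / n : ℝ) * (1 + Real.log 2 / n)
        ≤ x ^ (1 / n : ℝ) * 2 ^ (1 / n : ℝ) := by gcongr; exact one_add_log_two_div_le_rpow n
      _ = (x * 2) ^ (1 / n : ℝ) := (Real.mul_rpow hF0.le zero_le_two).symm
      _ ≤ _ := by gcongr; linarith
  have hbern : -2 ≤ ε * (Real.log 2 / n) := by
    have : 0 ≤ ε * (Real.log 2 / n) := by positivity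
    linarith
  calc (1 + ε * Real.log 2) * x
      = (1 + n * (ε * (Real.log 2 / n))) * x := by field_simp
    _ ≤ (1 + ε * (Real.log 2 / n)) ^ n * x := by gcongr; exact one_add_mul_le_pow hbern n
    _ = ((1 - ε) * x ^ (1 / n : ℝ) + ε * (x ^ (1 / n : ℝ) * (1 + Real.log 2 / n))) ^ n := by
      rw [show (1 - ε) * x ^ (1 / n : ℝ) + ε * (x ^ (1 / n : ℝ) * (1 + Real.log 2 / n)) =
          (1 + ε * (Real.log 2 / n)) * x ^ (1 / n : ℝ) by ring, mul_pow, one_div,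
        Real.rpow_inv_natCast_pow hF0.le hn]
    _ ≤ ((1 - ε) * x ^ (1 / n : ℝ) + ε * volume.real W ^ (1 / n : ℝ)) ^ n := by gcongr
    _ ≤ _ := brunn_minkowski_smul (by linarith) hF hF0 hε0 hW (by linarith)

end VolumeScaling

section BallSup

open Set Filter Metric
open scoped Topology

variable {E : Type*} [NormedAddCommGroup E] {f : E → ℝ} {L : NNReal} {r : ℝ} {z : E}

/-- The supremum of `f` over the closed ball of radius `r` about `z`. Its rate of growth in `r`
recovers the norm of the gradient, which turns the enlargement inequality for level sets into a
Poincaré inequality. -/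
def ballSup (f : E → ℝ) (r : ℝ) (z : E) : ℝ := sSup (f '' closedBall z r)

theorem le_add_mul_of_mem_closedBall (hf : LipschitzWith L f) {y : E} (hy : y ∈ closedBall z r) :
    f y ≤ f z + L * r := by
  have := (le_abs_self _).trans (hf.dist_le_mul y z)
  have : L * dist y z ≤ L * r := by gcongr; exact hy
  linarith

theorem le_ballSup (hf : LipschitzWith L f) {y : E} (hy : y ∈ closedBall z r) :
    f y ≤ ballSup f r z :=
  le_csSup ⟨f z + L * r, forall_mem_image.2 fun _ => le_add_mul_of_mem_closedBall hf⟩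
    (mem_image_of_mem f hy)

theorem ballSup_le (hr : 0 ≤ r) {a : ℝ} (h : ∀ y ∈ closedBall z r, f y ≤ a) : ballSup f r z ≤ a :=
  csSup_le ((nonempty_closedBall.2 hr).image f) (forall_mem_image.2 h)

theorem self_le_ballSup (hf : LipschitzWith L f) (hr : 0 ≤ r) : f z ≤ ballSup f r z :=
  le_ballSup hf (mem_closedBall_self hr)

theorem lipschitzWith_ballSup (hf : LipschitzWith L f) (hr : 0 ≤ r) :
    LipschitzWith L (ballSup f r) := by
  refine LipschitzWith.of_le_add_mul L fun z z' => ballSup_le hr fun y hy => ?_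
  have hle := (le_abs_self _).trans (hf.dist_le_mul y (y - z + z'))
  have hsup : f (y - z + z') ≤ ballSup f r z' :=
    le_ballSup hf (by simpa [dist_eq_norm] using hy)
  rw [show dist y (y - z + z') = dist z z' by simp [dist_eq_norm, sub_add_eq_sub_sub]] at hle
  linarith

variable [NormedSpace ℝ E]

theorem tendsto_ballSup_sub_div (hf : LipschitzWith L f) (hz : DifferentiableAt ℝ f z) :
    Tendsto (fun r => (ballSup f r z - f z) / r) (𝓝[>] 0) (𝓝 ‖fderiv ℝ f z‖) := by
  have happrox {η : ℝ} (hη : 0 < η) : ∀ᶠ r in 𝓝[>] (0 : ℝ), ∀ y ∈ closedBall z r,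
      |f y - f z - fderiv ℝ f z (y - z)| ≤ η * r := by
    have := hz.hasFDerivAt.isLittleO.def hη
    obtain ⟨δ, hδ, hball⟩ := Metric.eventually_nhds_iff.1 this
    filter_upwards [Ioo_mem_nhdsGT hδ] with r hr y hy
    refine (hball ((mem_closedBall.1 hy).trans_lt hr.2)).trans ?_
    gcongr
    exact mem_closedBall_iff_norm.1 hy
  refine tendsto_order.2 ⟨fun a ha => ?_, fun a ha => ?_⟩
  · obtain ⟨v, hv, hav⟩ := (fderiv ℝ f z).exists_lt_apply_of_lt_opNorm ha
    wlog hpos : 0 ≤ fderiv ℝ f z v generalizing v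
    · exact this (-v) (by simpa using hv) (by simpa using hav) (by simp; linarith)
    rw [Real.norm_of_nonneg hpos] at hav
    filter_upwards [happrox (half_pos (sub_pos.2 hav)), self_mem_nhdsWithin] with r h hr
    have hr : 0 < r := hr
    have hmem : z + r • v ∈ closedBall z r := by
      rw [mem_closedBall_iff_norm, add_sub_cancel_left, norm_smul, Real.norm_of_nonneg hr.le]
      exact mul_le_of_le_one_right hr.le hv.le
    have hlow := (abs_le.1 (h _ hmem)).1
    rw [add_sub_cancel_left, map_smul, smul_eq_mul] at hlow
    rw [lt_div_iff₀ hr]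
    nlinarith [le_ballSup hf hmem]
  · filter_upwards [happrox (half_pos (sub_pos.2 ha)), self_mem_nhdsWithin] with r h hr
    have hr : 0 < r := hr
    have hle : ballSup f r z ≤ f z + (a + ‖fderiv ℝ f z‖) / 2 * r := by
      refine ballSup_le hr.le fun y hy => ?_
      have happ := (abs_le.1 (h y hy)).2
      have hop : fderiv ℝ f z (y - z) ≤ ‖fderiv ℝ f z‖ * r :=
        (le_abs_self _).trans ((fderiv ℝ f z).le_opNorm_of_le (mem_closedBall_iff_norm.1 hy))
      linarith
    rw [div_lt_iff₀ hr]
    nlinarith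

end BallSup

section Poincare

open Set Filter Module Metric
open scoped Topology RealInnerProductSpace

theorem exists_median (μ : Measure ℝ) [IsFiniteMeasure μ] :
    ∃ m, (∀ s > m, μ.real (Ici s) ≤ μ.real univ / 2) ∧
      ∀ s < m, μ.real (Iic s) ≤ μ.real univ / 2 := by
  obtain hμ | hμ := (measureReal_nonneg (μ := μ) (s := univ)).eq_or_lt
  · have hzero (t : Set ℝ) : μ.real t ≤ μ.real univ / 2 := by
      rw [← hμ, zero_div]
      exact (measureReal_mono (subset_univ t)).trans hμ.ge
    exact ⟨0, fun _ _ => hzero _, fun _ _ => hzero _⟩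
  set A := {s | μ.real univ / 2 < μ.real (Iic s)}
  have htop : Tendsto (fun s => μ.real (Iic s)) atTop (𝓝 (μ.real univ)) :=
    (ENNReal.tendsto_toReal (measure_ne_top _ _)).comp (tendsto_measure_Iic_atTop μ)
  have hbot : Tendsto (fun s => μ.real (Ici s)) atBot (𝓝 (μ.real univ)) :=
    (ENNReal.tendsto_toReal (measure_ne_top _ _)).comp (tendsto_measure_Ici_atBot μ)
  have hcompl (s : ℝ) : μ.real (Iic s) + μ.real (Ioi s) = μ.real univ := by
    rw [← compl_Iic, measureReal_add_measureReal_compl measurableSet_Iic]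
  have hAne : A.Nonempty := (htop.eventually_const_lt (half_lt_self hμ)).exists
  have hAbdd : BddBelow A := by
    obtain ⟨b, hb⟩ := (hbot.eventually_const_lt (half_lt_self hμ)).exists
    refine ⟨b, fun s hs => not_lt.1 fun hsb => ?_⟩
    have hmono : μ.real (Ici b) ≤ μ.real (Ioi s) := measureReal_mono (Ici_subset_Ioi.2 hsb)
    linarith [hcompl s, show μ.real univ / 2 < μ.real (Iic s) from hs]
  refine ⟨sInf A, fun s hs => ?_, fun s hs => not_lt.1 fun h => hs.not_ge (csInf_le hAbdd h)⟩
  obtain ⟨t, ht, hts⟩ := exists_lt_of_csInf_lt hAne hs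
  have hmono : μ.real (Ici s) ≤ μ.real (Ioi t) := measureReal_mono (Ici_subset_Ioi.2 hts)
  linarith [hcompl t, show μ.real univ / 2 < μ.real (Iic t) from ht]

theorem mul_integral_posPart_sub_le {α : Type*} [MeasurableSpace α] {μ : Measure α}
    [IsFiniteMeasure μ] {f g : α → ℝ} (hf : Integrable f μ) (hg : Integrable g μ) {c m : ℝ}
    (hc : 0 ≤ c) (h : ∀ s > m, c * μ.real {x | s ≤ f x} ≤ μ.real {x | s ≤ g x}) :
    c * ∫ x, (f x - m)⁺ ∂μ ≤ ∫ x, (g x - m)⁺ ∂μ := by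
  have hlayer {u : α → ℝ} (hu : Integrable u μ) :
      ENNReal.ofReal (∫ x, (u x - m)⁺ ∂μ) = ∫⁻ t in Ioi 0, μ {x | m + t ≤ u x} := by
    have hint : Integrable (fun x => (u x - m)⁺) μ := (hu.sub (integrable_const m)).pos_part
    have hnonneg : 0 ≤ᵐ[μ] fun x => (u x - m)⁺ := .of_forall fun x => posPart_nonneg _
    rw [ofReal_integral_eq_lintegral_ofReal hint hnonneg,
      lintegral_eq_lintegral_meas_le _ hnonneg hint.aemeasurable]
    refine setLIntegral_congr_fun measurableSet_Ioi fun t (ht : 0 < t) => ?_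
    congr! 3 with x
    rw [posPart_def, le_sup_iff, le_sub_iff_add_le', or_iff_left ht.not_ge]
  rw [← ENNReal.ofReal_le_ofReal_iff (integral_nonneg fun x => posPart_nonneg _),
    ENNReal.ofReal_mul hc, hlayer hf, hlayer hg, ← lintegral_const_mul' _ _ ENNReal.ofReal_ne_top]
  refine setLIntegral_mono' measurableSet_Ioi fun t (ht : 0 < t) => ?_
  rw [← ofReal_measureReal, ← ofReal_measureReal, ← ENNReal.ofReal_mul hc]
  exact ENNReal.ofReal_le_ofReal (h _ (by linarith))

variable {F : Type*} [NormedAddCommGroup F] [InnerProductSpace ℝ F]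

theorem norm_le_sum_abs_inner {ι : Type*} [Fintype ι] (b : OrthonormalBasis ι ℝ F) (x : F) :
    ‖x‖ ≤ ∑ i, |⟪b i, x⟫| := by
  calc ‖x‖ = ‖∑ i, ⟪b i, x⟫ • b i‖ := by rw [b.sum_repr']
    _ ≤ ∑ i, |⟪b i, x⟫| := norm_sum_le_of_le _ fun i _ => by simp [norm_smul]

theorem lipschitzWith_inner_of_norm_eq_one {X : Type*} [PseudoEMetricSpace X] {L : NNReal}
    {S : X → F} (hS : LipschitzWith L S) {v : F} (hv : ‖v‖ = 1) :
    LipschitzWith L fun x => ⟪v, S x⟫ := by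
  have hnn : ‖innerSL ℝ v‖₊ = 1 := NNReal.eq (by simpa using hv)
  simpa [hnn, Function.comp_def] using (innerSL ℝ v).lipschitz.comp hS

theorem norm_fderiv_inner_le_of_norm_eq_one {X : Type*} [NormedAddCommGroup X] [NormedSpace ℝ X]
    {S : X → F} {z : X} (hS : DifferentiableAt ℝ S z) {v : F} (hv : ‖v‖ = 1) :
    ‖fderiv ℝ (fun z => ⟪v, S z⟫) z‖ ≤ ‖fderiv ℝ S z‖ := by
  have hderiv := (innerSL ℝ v).hasFDerivAt.comp z hS.hasFDerivAt
  rw [show (fun z => ⟪v, S z⟫) = innerSL ℝ v ∘ S from rfl, hderiv.fderiv]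
  simpa [hv] using (innerSL ℝ v).opNorm_comp_le (fderiv ℝ S z)

variable {E : Type*} [NormedAddCommGroup E] [InnerProductSpace ℝ E] {W : Set E} {d ε m : ℝ}
  {f : E → ℝ} {L : NNReal}

theorem smul_superlevel_add_smul_subset (hWconv : Convex ℝ W)
    (hd : ∀ x ∈ W, ∀ y ∈ W, dist x y ≤ d) (hf : LipschitzWith L f) (hε0 : 0 ≤ ε) (hε1 : ε ≤ 1)
    (s : ℝ) :
    (1 - ε) • (W ∩ {x | s ≤ f x}) + ε • W ⊆ W ∩ {x | s ≤ ballSup f (ε * d) x} := by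
  rintro _ ⟨_, ⟨x, ⟨hx, hxs⟩, rfl⟩, _, ⟨w, hw, rfl⟩, rfl⟩
  refine ⟨hWconv hx hw (by linarith) hε0 (by ring),
    (hxs : s ≤ f x).trans (le_ballSup hf (mem_closedBall_iff_norm.2 ?_))⟩
  calc ‖x - ((1 - ε) • x + ε • w)‖ = ‖ε • (x - w)‖ := by congr 1; module
    _ = ε * dist x w := by rw [norm_smul, Real.norm_of_nonneg hε0, dist_eq_norm]
    _ ≤ ε * d := by gcongr; exact hd x hx w hw

variable [FiniteDimensional ℝ E] [MeasurableSpace E] [BorelSpace E]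

theorem tendsto_setIntegral_ballSup_sub_div (hW : IsCompact W) (hf : LipschitzWith L f) :
    Tendsto (fun r => ∫ z in W, (ballSup f r z - f z) / r) (𝓝[>] 0)
      (𝓝 (∫ z in W, ‖fderiv ℝ f z‖)) := by
  have : IsFiniteMeasure (volume.restrict W) := ⟨by simpa using hW.measure_lt_top⟩
  refine tendsto_integral_filter_of_dominated_convergence (fun _ => (L : ℝ)) ?_ ?_
    (integrable_const _) ?_
  · filter_upwards [self_mem_nhdsWithin] with r hr
    exact (((lipschitzWith_ballSup hf (le_of_lt hr)).continuous.sub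
      hf.continuous).div_const r).aestronglyMeasurable
  · filter_upwards [self_mem_nhdsWithin] with r hr
    have hr : 0 < r := hr
    refine .of_forall fun z => ?_
    rw [Real.norm_of_nonneg (div_nonneg (sub_nonneg.2 (self_le_ballSup hf hr.le)) hr.le),
      div_le_iff₀ hr, sub_le_iff_le_add']
    exact ballSup_le hr.le fun y => le_add_mul_of_mem_closedBall hf
  · filter_upwards [ae_restrict_of_ae hf.ae_differentiableAt] with z hz
    exact tendsto_ballSup_sub_div hf hz

theorem setIntegral_norm_fderiv_inner_le [FiniteDimensional ℝ F] (hW : IsCompact W) {S : E → F}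
    (hS : LipschitzWith L S) {v : F} (hv : ‖v‖ = 1) :
    ∫ z in W, ‖fderiv ℝ (fun z => ⟪v, S z⟫) z‖ ≤ ∫ z in W, ‖fderiv ℝ S z‖ := by
  have : IsFiniteMeasure (volume.restrict W) := ⟨by simpa using hW.measure_lt_top⟩
  have hcoord := lipschitzWith_inner_of_norm_eq_one hS hv
  refine integral_mono_ae
    (.of_bound (measurable_fderiv ℝ _).norm.aestronglyMeasurable L <| .of_forall fun z => ?_)
    (.of_bound (measurable_fderiv ℝ _).norm.aestronglyMeasurable L <| .of_forall fun z => ?_) ?_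
  · simpa using norm_fderiv_le_of_lipschitz ℝ hcoord
  · simpa using norm_fderiv_le_of_lipschitz ℝ hS
  · filter_upwards [ae_restrict_of_ae hS.ae_differentiableAt] with z hz
    exact norm_fderiv_inner_le_of_norm_eq_one hz hv

variable [Nontrivial E]

theorem mul_setIntegral_posPart_le_setIntegral_ballSup_sub (hW : IsCompact W)
    (hWconv : Convex ℝ W) (hd0 : 0 ≤ d) (hd : ∀ x ∈ W, ∀ y ∈ W, dist x y ≤ d)
    (hf : LipschitzWith L f)
    (hm : ∀ s > m, volume.real (W ∩ {x | s ≤ f x}) ≤ volume.real W / 2)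
    (hε0 : 0 < ε) (hε1 : ε < 1) :
    ε * Real.log 2 * ∫ z in W, (f z - m)⁺ ≤ ∫ z in W, (ballSup f (ε * d) z - f z) := by
  have : IsFiniteMeasure (volume.restrict W) := ⟨by simpa using hW.measure_lt_top⟩
  have hr : 0 ≤ ε * d := by positivity
  have hg := (lipschitzWith_ballSup hf hr).continuous
  set g := ballSup f (ε * d)
  have hfi : IntegrableOn f W := hf.continuous.continuousOn.integrableOn_compact hW
  have hgi : IntegrableOn g W := hg.continuousOn.integrableOn_compact hW
  have hlevel (s : ℝ) (hs : s > m) :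
      (1 + ε * Real.log 2) * (volume.restrict W).real {x | s ≤ f x} ≤
        (volume.restrict W).real {x | s ≤ g x} := by
    rw [measureReal_restrict_apply' hW.measurableSet, measureReal_restrict_apply' hW.measurableSet,
      inter_comm, inter_comm _ W]
    exact (mul_measureReal_le_measureReal_smul_add_smul hW
      (hW.inter_right (isClosed_le continuous_const hf.continuous)) (hm s hs) hε0 hε1).trans
      (measureReal_mono (smul_superlevel_add_smul_subset hWconv hd hf hε0.le hε1.le s)
        (measure_ne_top_of_subset inter_subset_left hW.measure_lt_top.ne))
  have hcake := mul_integral_posPart_sub_le hfi hgi (by positivity) hlevel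
  have hfp : IntegrableOn (fun z => (f z - m)⁺) W := (hfi.sub (integrable_const m)).pos_part
  have hgp : IntegrableOn (fun z => (g z - m)⁺) W := (hgi.sub (integrable_const m)).pos_part
  have hpos : ∫ z in W, ((g z - m)⁺ - (f z - m)⁺) ≤ ∫ z in W, (g z - f z) := by
    refine integral_mono (hgp.sub hfp) (hgi.sub hfi) fun z => ?_
    have hanti : (g z - m)⁻ ≤ (f z - m)⁻ :=
      negPart_anti (sub_le_sub_right (self_le_ballSup hf hr) m)
    have := posPart_sub_negPart (g z - m)
    have := posPart_sub_negPart (f z - m)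
    simp only
    linarith
  rw [integral_sub hgp hfp] at hpos
  linarith

theorem log_two_mul_setIntegral_posPart_le (hW : IsCompact W) (hWconv : Convex ℝ W) (hd0 : 0 < d)
    (hd : ∀ x ∈ W, ∀ y ∈ W, dist x y ≤ d) (hf : LipschitzWith L f)
    (hm : ∀ s > m, volume.real (W ∩ {x | s ≤ f x}) ≤ volume.real W / 2) :
    Real.log 2 * ∫ z in W, (f z - m)⁺ ≤ d * ∫ z in W, ‖fderiv ℝ f z‖ := by
  rw [← div_le_iff₀' hd0]
  refine ge_of_tendsto (tendsto_setIntegral_ballSup_sub_div hW hf) ?_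
  filter_upwards [Ioo_mem_nhdsGT hd0] with r hr
  have := mul_setIntegral_posPart_le_setIntegral_ballSup_sub hW hWconv hd0.le hd hf hm
    (div_pos hr.1 hd0) ((div_lt_one hd0).2 hr.2)
  rw [div_mul_cancel₀ _ hd0.ne'] at this
  rw [integral_div, le_div_iff₀ hr.1]
  calc _ = _ := by ring
    _ ≤ _ := this

theorem exists_setIntegral_abs_sub_le (hW : IsCompact W) (hWconv : Convex ℝ W) (hd0 : 0 < d)
    (hd : ∀ x ∈ W, ∀ y ∈ W, dist x y ≤ d) (hf : LipschitzWith L f) :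
    ∃ m : ℝ, ∫ z in W, |f z - m| ≤ 3 * d * ∫ z in W, ‖fderiv ℝ f z‖ := by
  have : IsFiniteMeasure (volume.restrict W) := ⟨by simpa using hW.measure_lt_top⟩
  have hfm := hf.continuous.measurable
  obtain ⟨m, hgt, hlt⟩ := exists_median ((volume.restrict W).map f)
  refine ⟨m, ?_⟩
  have hmap {t : Set ℝ} (ht : MeasurableSet t) :
      ((volume.restrict W).map f).real t = volume.real (W ∩ f ⁻¹' t) := by
    rw [map_measureReal_apply hfm ht, measureReal_restrict_apply' hW.measurableSet, inter_comm]
  have hpos := log_two_mul_setIntegral_posPart_le hW hWconv hd0 hd hf (m := m) fun s hs => by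
    have hle := hgt s hs
    rwa [hmap measurableSet_Ici, hmap .univ, preimage_univ, inter_univ] at hle
  have hneg := log_two_mul_setIntegral_posPart_le hW hWconv hd0 hd hf.neg (m := -m) fun s hs => by
    have hle := hlt (-s) (by linarith)
    rw [hmap measurableSet_Iic, hmap .univ, preimage_univ, inter_univ] at hle
    convert hle using 4
    ext z
    exact le_neg (a := s) (b := f z)
  have hint : IntegrableOn (fun z => f z - m) W :=
    (hf.continuous.continuousOn.integrableOn_compact hW).sub (integrable_const m)
  have habs : ∫ z in W, |f z - m| =
      (∫ z in W, (f z - m)⁺) + ∫ z in W, ((-f) z - -m)⁺ := by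
    simp only [Pi.neg_apply, neg_sub_neg, ← neg_sub (f _) m, posPart_neg, ← posPart_add_negPart]
    exact integral_add hint.pos_part hint.neg_part
  simp only [fderiv_neg, norm_neg] at hneg
  have hlog : 2 / 3 ≤ Real.log 2 := by linarith [Real.log_two_gt_d9]
  have hnonneg : 0 ≤ ∫ z in W, |f z - m| := integral_nonneg fun z => abs_nonneg _
  calc _ ≤ 3 / 2 * (Real.log 2 * ∫ z in W, |f z - m|) := by nlinarith
    _ ≤ 3 * d * ∫ z in W, ‖fderiv ℝ f z‖ := by rw [habs]; linarith

theorem exists_setIntegral_norm_sub_le [FiniteDimensional ℝ F] (hW : IsCompact W)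
    (hWconv : Convex ℝ W) (hd0 : 0 < d) (hd : ∀ x ∈ W, ∀ y ∈ W, dist x y ≤ d) {S : E → F}
    (hS : LipschitzWith L S) :
    ∃ c : F, ∫ z in W, ‖S z - c‖ ≤ 3 * finrank ℝ F * d * ∫ z in W, ‖fderiv ℝ S z‖ := by
  set b := stdOrthonormalBasis ℝ F
  have hcoord (i) := lipschitzWith_inner_of_norm_eq_one hS (b.norm_eq_one i)
  choose m hm using fun i => exists_setIntegral_abs_sub_le hW hWconv hd0 hd (hcoord i)
  have hcont {u : E → ℝ} (hu : Continuous u) : IntegrableOn u W :=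
    hu.continuousOn.integrableOn_compact hW
  have hSc := hS.continuous
  refine ⟨∑ i, m i • b i, ?_⟩
  calc ∫ z in W, ‖S z - ∑ i, m i • b i‖
      ≤ ∫ z in W, ∑ i, |⟪b i, S z⟫ - m i| := by
        refine integral_mono (hcont (by fun_prop)) (hcont (by fun_prop)) fun z => ?_
        have := norm_le_sum_abs_inner b (S z - ∑ i, m i • b i)
        simpa only [inner_sub_right, b.orthonormal.inner_right_fintype] using this
    _ = ∑ i, ∫ z in W, |⟪b i, S z⟫ - m i| :=
        integral_finsetSum _ fun i _ => hcont (by fun_prop)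
    _ ≤ ∑ i : Fin (finrank ℝ F), 3 * d * ∫ z in W, ‖fderiv ℝ S z‖ := by
        refine Finset.sum_le_sum fun i _ => (hm i).trans ?_
        gcongr ?_ * ?_
        exact setIntegral_norm_fderiv_inner_le hW hS (b.norm_eq_one i)
    _ = _ := by
        rw [Finset.sum_const, Finset.card_univ, Fintype.card_fin, nsmul_eq_mul]
        ring

end Poincare

section InnerBall

open Set Module Metric
open scoped RealInnerProductSpace

variable {E : Type*} [NormedAddCommGroup E] [InnerProductSpace ℝ E]

theorem exists_norm_eq_one_inner_lt_of_notMem [CompleteSpace E] {K : Set E} (hK : IsClosed K)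
    (hKconv : Convex ℝ K) (hKne : K.Nonempty) {x : E} (hx : x ∉ K) :
    ∃ u : E, ‖u‖ = 1 ∧ ∀ k ∈ K, ⟪u, k⟫ < ⟪u, x⟫ := by
  obtain ⟨f, s, hfK, hfx⟩ := geometric_hahn_banach_closed_point hKconv hK hx
  obtain ⟨v, rfl⟩ := (InnerProductSpace.toDual ℝ E).surjective f
  have hlt (k) (hk : k ∈ K) : ⟪v, k⟫ < ⟪v, x⟫ := (hfK k hk).trans hfx
  have hv : 0 < ‖v‖ := by
    obtain ⟨k, hk⟩ := hKne
    rw [norm_pos_iff]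
    rintro rfl
    simpa using hlt k hk
  refine ⟨‖v‖⁻¹ • v, norm_smul_inv_norm (𝕜 := ℝ) (norm_pos_iff.1 hv), fun k hk => ?_⟩
  simp only [real_inner_smul_left]
  gcongr
  exact hlt k hk

variable [FiniteDimensional ℝ E] [MeasurableSpace E] [BorelSpace E] {W : Set E}

theorem pow_mul_setIntegral_comp_smul_add_le (hW : IsCompact W) {g : E → ℝ} (hg : Continuous g)
    (hg0 : ∀ w ∈ W, 0 ≤ g w) {l : ℝ} (hl : 0 < l) {a : E} (ha : ∀ w ∈ W, l • w + a ∈ W) :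
    l ^ finrank ℝ E * ∫ w in W, g (l • w + a) ≤ ∫ w in W, g w := by
  have hderiv (w : E) : HasFDerivAt (fun w => l • w + a) (l • (1 : E →L[ℝ] E)) w :=
    ((hasFDerivAt_id w).const_smul l).add_const a
  have hinj : InjOn (fun w => l • w + a) W := fun x _ y _ hxy =>
    smul_right_injective E hl.ne' (add_right_cancel hxy)
  have hdet : (l • (1 : E →L[ℝ] E)).det = l ^ finrank ℝ E := by
    rw [ContinuousLinearMap.det, ContinuousLinearMap.toLinearMap_smul, LinearMap.det_smul]
    simp
  have hchange := integral_image_eq_integral_abs_det_fderiv_smul volume hW.measurableSet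
    (fun w _ => (hderiv w).hasFDerivWithinAt) hinj g
  simp only [hdet, abs_of_pos (pow_pos hl _), smul_eq_mul, integral_const_mul] at hchange
  rw [← hchange]
  exact setIntegral_mono_set (hg.continuousOn.integrableOn_compact hW)
    (ae_restrict_of_forall_mem hW.measurableSet hg0) (.of_forall (image_subset_iff.2 ha))

variable [Nontrivial E]

/-- Shrinking `W` slightly towards `x` and towards `y` gives two subsets of almost full measure that
are translates of each other along `x - y`. -/
theorem inner_sub_div_mul_measureReal_le_setIntegral_abs_inner (hW : IsCompact W)
    (hWconv : Convex ℝ W) (u : E) {x y : E} (hx : x ∈ W) (hy : y ∈ W) :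
    ⟪u, x - y⟫ / (8 * finrank ℝ E) * volume.real W ≤ ∫ w in W, |⟪u, w⟫| := by
  set n := finrank ℝ E
  have hn : (1 : ℝ) ≤ n := by exact_mod_cast finrank_pos (R := ℝ) (M := E)
  obtain ⟨t, ht⟩ : ∃ t : ℝ, t = 1 / (2 * n) := ⟨_, rfl⟩
  have ht0 : 0 < t := by rw [ht]; positivity
  have hnt : n * t = 1 / 2 := by rw [ht]; field_simp
  have ht1 : t < 1 := by nlinarith
  have hpow : 1 / 2 ≤ (1 - t) ^ n := by
    have := one_add_mul_le_pow (a := -t) (by linarith) n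
    rw [sub_eq_add_neg]
    linarith
  have hint {g : E → ℝ} (hg : Continuous g) : IntegrableOn g W :=
    hg.continuousOn.integrableOn_compact hW
  have hshrink (p : E) (hp : p ∈ W) :
      (1 - t) ^ n * ∫ w in W, |⟪u, (1 - t) • w + t • p⟫| ≤ ∫ w in W, |⟪u, w⟫| :=
    pow_mul_setIntegral_comp_smul_add_le hW (by fun_prop) (fun w _ => abs_nonneg _) (by linarith)
      fun w hw => hWconv hw hp (by linarith) ht0.le (by ring)
  have hsum : t * ⟪u, x - y⟫ * volume.real W ≤
      (∫ w in W, |⟪u, (1 - t) • w + t • x⟫|) + ∫ w in W, |⟪u, (1 - t) • w + t • y⟫| := by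
    rw [← integral_add (hint (by fun_prop)) (hint (by fun_prop)), mul_comm, ← smul_eq_mul,
      ← setIntegral_const]
    refine integral_mono (hint (by fun_prop)) (hint (by fun_prop)) fun w => ?_
    calc t * ⟪u, x - y⟫
        = ⟪u, (1 - t) • w + t • x⟫ - ⟪u, (1 - t) • w + t • y⟫ := by
          simp only [inner_sub_right, inner_add_right, inner_smul_right]; ring
      _ ≤ _ := (le_abs_self _).trans (abs_sub _ _)
  set Ix := ∫ w in W, |⟪u, (1 - t) • w + t • x⟫|
  set Iy := ∫ w in W, |⟪u, (1 - t) • w + t • y⟫|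
  have hnonneg : 0 ≤ Ix + Iy := add_nonneg (integral_nonneg fun _ => abs_nonneg _)
    (integral_nonneg fun _ => abs_nonneg _)
  calc _ = 1 / 4 * (t * ⟪u, x - y⟫ * volume.real W) := by rw [ht]; field_simp; ring
    _ ≤ _ := by nlinarith [hshrink x hx, hshrink y hy]

theorem ball_subset_of_setIntegral_norm_le (hW : IsCompact W) (hWconv : Convex ℝ W)
    (hW0 : 0 < volume.real W) (hbary : ∀ u : E, ∫ w in W, ⟪u, w⟫ = 0) {ω : ℝ}
    (hω : ∀ u : E, ‖u‖ = 1 → ∃ x ∈ W, ∃ y ∈ W, ω ≤ ⟪u, x - y⟫) {K : Set E} (hK : IsClosed K)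
    (hKconv : Convex ℝ K) {T : E → E} (hT : Continuous T) (hTK : ∀ z, z + T z ∈ K)
    (hTint : ∫ z in W, ‖T z‖ ≤ ω / (32 * finrank ℝ E) * volume.real W) :
    ball 0 (ω / (32 * finrank ℝ E)) ⊆ K := by
  intro x hx
  by_contra hxK
  obtain ⟨u, hu, hKu⟩ := exists_norm_eq_one_inner_lt_of_notMem hK hKconv ⟨_, hTK 0⟩ hxK
  obtain ⟨p, hp, q, hq, hpq⟩ := hω u hu
  have hmoment := inner_sub_div_mul_measureReal_le_setIntegral_abs_inner hW hWconv u hp hq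
  set n := finrank ℝ E
  have hn : (0 : ℝ) < n := by exact_mod_cast finrank_pos (R := ℝ) (M := E)
  set β := ⟪u, x⟫⁺
  have hβ : β < ω / (32 * n) := by
    have hx : ‖x‖ < ω / (32 * n) := by simpa using hx
    have := real_inner_le_norm u x
    rw [hu, one_mul] at this
    exact max_lt (this.trans_lt hx) ((norm_nonneg x).trans_lt hx)
  have hpt (z : E) : (|⟪u, z⟫| + ⟪u, z⟫) / 2 - β ≤ ‖T z‖ := by
    have hz := hKu _ (hTK z)
    have hTz := real_inner_le_norm u (-T z)
    rw [hu, one_mul, norm_neg, inner_neg_right] at hTz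
    rw [inner_add_right] at hz
    have := le_posPart ⟪u, x⟫
    have := posPart_nonneg ⟪u, x⟫
    have := norm_nonneg (T z)
    obtain h | h := abs_cases ⟪u, z⟫ <;> linarith
  have hint {g : E → ℝ} (hg : Continuous g) : IntegrableOn g W :=
    hg.continuousOn.integrableOn_compact hW
  have hle : ∫ z in W, ((|⟪u, z⟫| + ⟪u, z⟫) / 2 - β) ≤ ∫ z in W, ‖T z‖ :=
    integral_mono (hint (by fun_prop)) (hint (by fun_prop)) hpt
  rw [integral_sub (hint (by fun_prop)) (hint (by fun_prop)), integral_div,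
    integral_add (hint (by fun_prop)) (hint (by fun_prop)), hbary, setIntegral_const,
    smul_eq_mul] at hle
  have hω8 : 4 * (ω / (32 * n)) * volume.real W ≤ ∫ w in W, |⟪u, w⟫| := by
    refine le_trans ?_ hmoment
    rw [show 4 * (ω / (32 * n)) = ω / (8 * n) by field_simp; ring]
    gcongr
  nlinarith

end InnerBall

section Gauge

open Set Metric Filter

variable {E : Type*} [NormedAddCommGroup E] [NormedSpace ℝ E] {K : Set E} {r : ℝ}

theorem mul_posPart_gauge_sub_one_le_norm (hKconv : Convex ℝ K) (hr : 0 < r)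
    (hball : ball 0 r ⊆ K) {z t : E} (h : z + t ∈ K) : r * (gauge K z - 1)⁺ ≤ ‖t‖ := by
  have habs : Absorbent ℝ K := absorbent_nhds_zero (mem_of_superset (ball_mem_nhds 0 hr) hball)
  have hadd : gauge K z ≤ gauge K (z + t) + gauge K (-t) := by
    simpa using gauge_add_le hKconv habs (z + t) (-t)
  have hnorm : r * gauge K (-t) ≤ ‖t‖ := by simpa using mul_gauge_le_norm (x := -t) hball
  rw [posPart_def, mul_max_of_nonneg _ _ hr.le, mul_zero]
  refine max_le (le_trans ?_ hnorm) (norm_nonneg t)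
  gcongr
  linarith [gauge_le_one_of_mem h]

theorem indicator_le_posPart_gauge_sub {ε : ℝ} (hε0 : 0 ≤ ε) (hε1 : ε ≤ 1) (z : E) :
    indicator {x | 1 < (1 - ε) * gauge K x} (fun _ => ε) z ≤
      (gauge K z - 1)⁺ - (gauge K ((1 - ε) • z) - 1)⁺ := by
  rw [gauge_smul_of_nonneg (sub_nonneg.2 hε1), smul_eq_mul]
  have hle : (1 - ε) * gauge K z ≤ gauge K z :=
    mul_le_of_le_one_left (gauge_nonneg z) (by linarith)
  by_cases hz : z ∈ {x | 1 < (1 - ε) * gauge K x}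
  · rw [indicator_of_mem hz]
    have hz : 1 < (1 - ε) * gauge K z := hz
    rw [posPart_of_nonneg (by linarith), posPart_of_nonneg (by linarith)]
    nlinarith
  · rw [indicator_of_notMem hz, sub_nonneg]
    exact posPart_mono (by linarith)

end Gauge

section Trace

open Set Module Metric Filter
open scoped Topology

variable {E : Type*} [NormedAddCommGroup E] [InnerProductSpace ℝ E] [FiniteDimensional ℝ E]
  [MeasurableSpace E] [BorelSpace E] {W K : Set E} {r ε : ℝ} {T : E → E}

theorem mul_measureReal_inter_le_setIntegral_posPart_gauge_sub (hW : IsCompact W)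
    (hgauge : Continuous (gauge K)) (hε0 : 0 ≤ ε) (hε1 : ε ≤ 1) :
    ε * volume.real (W ∩ {x | 1 < (1 - ε) * gauge K x}) ≤
      (∫ z in W, (gauge K z - 1)⁺) - ∫ z in W, (gauge K ((1 - ε) • z) - 1)⁺ := by
  have hint {g : E → ℝ} (hg : Continuous g) : IntegrableOn g W :=
    hg.continuousOn.integrableOn_compact hW
  have hmeas : MeasurableSet {x | 1 < (1 - ε) * gauge K x} :=
    (isOpen_lt continuous_const (by fun_prop)).measurableSet
  have hcont : Continuous fun z => (gauge K z - 1)⁺ := by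
    simp only [posPart_def]
    fun_prop
  have hcont' : Continuous fun z : E => (gauge K ((1 - ε) • z) - 1)⁺ :=
    hcont.comp (continuous_const_smul (1 - ε))
  calc ε * volume.real (W ∩ {x | 1 < (1 - ε) * gauge K x})
    _ = ∫ z in W, indicator {x | 1 < (1 - ε) * gauge K x} (fun _ => ε) z := by
      rw [setIntegral_indicator hmeas, setIntegral_const, smul_eq_mul, mul_comm]
    _ ≤ ∫ z in W, ((gauge K z - 1)⁺ - (gauge K ((1 - ε) • z) - 1)⁺) :=
      integral_mono ((hint continuous_const).indicator hmeas) ((hint hcont).sub (hint hcont'))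
        (indicator_le_posPart_gauge_sub hε0 hε1)
    _ = _ := integral_sub (hint hcont) (hint hcont')

/-- Rescaling `u - e ≥ 0` by the factor `1 - ε` decreases its integral by at most the Jacobian
factor `1 - (1 - ε) ^ n ≤ n * ε`. -/
theorem setIntegral_sub_setIntegral_comp_smul_le (hW : IsCompact W) (hWstar : StarConvex ℝ 0 W)
    {e u : E → ℝ} (he : Continuous e) (hu : Continuous u) (he0 : ∀ z, 0 ≤ e z)
    (heu : ∀ z, e z ≤ u z) (hε0 : 0 < ε) (hε1 : ε < 1) :
    (∫ z in W, e z) - ∫ z in W, e ((1 - ε) • z) ≤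
      finrank ℝ E * ε * (∫ z in W, u z) + ∫ z in W, |u z - u ((1 - ε) • z)| := by
  set n := finrank ℝ E
  set l := 1 - ε with hl
  have hl0 : 0 < l := by linarith
  have hint {g : E → ℝ} (hg : Continuous g) : IntegrableOn g W :=
    hg.continuousOn.integrableOn_compact hW
  have hscale := pow_mul_setIntegral_comp_smul_add_le hW (g := fun z => u z - e z)
    (by fun_prop) (fun z _ => sub_nonneg.2 (heu z)) hl0
    (a := 0) fun w hw => by simpa using hWstar.smul_mem hw hl0.le (by linarith)
  simp only [add_zero] at hscale
  rw [integral_sub (hint (by fun_prop)) (hint (by fun_prop)),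
    integral_sub (hint (by fun_prop)) (hint (by fun_prop))] at hscale
  have hdiff : (∫ z in W, u z) - ∫ z in W, u (l • z) ≤ ∫ z in W, |u z - u (l • z)| := by
    rw [← integral_sub (hint (by fun_prop)) (hint (by fun_prop))]
    exact integral_mono (hint (by fun_prop)) (hint (by fun_prop)) fun z => le_abs_self _
  have hbernoulli : 1 - n * ε ≤ l ^ n := by
    simpa [hl, sub_eq_add_neg] using one_add_mul_le_pow (a := -ε) (by linarith) n
  have hle1 : l ^ n ≤ 1 := pow_le_one₀ hl0.le (by linarith)
  have hu0 : 0 ≤ ∫ z in W, u z := integral_nonneg fun z => (he0 z).trans (heu z)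
  have hel0 : 0 ≤ ∫ z in W, e (l • z) := integral_nonneg fun z => he0 _
  calc (∫ z in W, e z) - ∫ z in W, e (l • z)
    _ ≤ (∫ z in W, u z) - l ^ n * ∫ z in W, u (l • z) := by
      nlinarith [mul_nonneg hel0 (sub_nonneg.2 hle1)]
    _ = (1 - l ^ n) * (∫ z in W, u z) + l ^ n * ((∫ z in W, u z) - ∫ z in W, u (l • z)) := by ring
    _ ≤ n * ε * (∫ z in W, u z) + l ^ n * ∫ z in W, |u z - u (l • z)| := by
      gcongr
      linarith
    _ ≤ n * ε * (∫ z in W, u z) + ∫ z in W, |u z - u (l • z)| := by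
      gcongr
      exact mul_le_of_le_one_left (integral_nonneg fun z => abs_nonneg _) hle1

theorem mul_measureReal_inter_le_setIntegral_norm_add (hW : IsCompact W) (hWstar : StarConvex ℝ 0 W)
    (hKconv : Convex ℝ K) (hr : 0 < r) (hball : ball 0 r ⊆ K) (hT : Continuous T)
    (hTK : ∀ z, z + T z ∈ K) (hε0 : 0 < ε) (hε1 : ε < 1) :
    r * volume.real (W ∩ {x | 1 < (1 - ε) * gauge K x}) ≤
      finrank ℝ E * (∫ z in W, ‖T z‖) + ∫ z in W, ‖T z - T ((1 - ε) • z)‖ / ε := by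
  have hgauge : Continuous (gauge K) :=
    continuous_gauge hKconv (mem_of_superset (ball_mem_nhds 0 hr) hball)
  have hint {g : E → ℝ} (hg : Continuous g) : IntegrableOn g W :=
    hg.continuousOn.integrableOn_compact hW
  have hcont : Continuous fun z => r * (gauge K z - 1)⁺ := by
    simp only [posPart_def]
    fun_prop
  have hvol := mul_measureReal_inter_le_setIntegral_posPart_gauge_sub hW hgauge hε0.le hε1.le
  have hscale := setIntegral_sub_setIntegral_comp_smul_le hW hWstar hcont hT.norm
    (fun z => mul_nonneg hr.le (posPart_nonneg _))
    (fun z => mul_posPart_gauge_sub_one_le_norm hKconv hr hball (hTK z)) hε0 hε1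
  rw [integral_const_mul, integral_const_mul, ← mul_sub] at hscale
  have hdiff : ∫ z in W, |‖T z‖ - ‖T ((1 - ε) • z)‖| ≤ ∫ z in W, ‖T z - T ((1 - ε) • z)‖ :=
    integral_mono (hint (by fun_prop)) (hint (by fun_prop)) fun z => abs_norm_sub_norm_le _ _
  rw [integral_div, ← mul_le_mul_iff_right₀ hε0, mul_add, mul_div_cancel₀ _ hε0.ne']
  nlinarith

theorem tendsto_measureReal_inter_lt_gauge (hW : IsCompact W) (hK : IsClosed K)
    (hKconv : Convex ℝ K) (hK0 : K ∈ 𝓝 0) :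
    Tendsto (fun ε : ℝ => volume.real (W ∩ {x | 1 < (1 - ε) * gauge K x})) (𝓝[>] 0)
      (𝓝 (volume.real (W \ K))) := by
  have : Continuous (gauge K) := continuous_gauge hKconv hK0
  refine (ENNReal.tendsto_toReal (measure_ne_top_of_subset sdiff_subset
    hW.measure_lt_top.ne)).comp (tendsto_measure_of_tendsto_indicator _ (fun ε => ?_)
    hW.measurableSet hW.measure_lt_top.ne (.of_forall fun ε => inter_subset_left) fun x => ?_)
  · exact hW.measurableSet.inter (isOpen_lt continuous_const (by fun_prop)).measurableSet
  by_cases hxK : x ∈ K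
  · filter_upwards [self_mem_nhdsWithin] with ε (hε : 0 < ε)
    have := gauge_le_one_of_mem hxK
    have : (1 - ε) * gauge K x ≤ 1 := by nlinarith [gauge_nonneg (s := K) x]
    simp [hxK, this]
  · have hlt : 1 < gauge K x := by
      rwa [← not_le, gauge_le_one_iff_mem_closure hKconv hK0, hK.closure_eq]
    have htend : Tendsto (fun ε : ℝ => (1 - ε) * gauge K x) (𝓝[>] 0) (𝓝 (gauge K x)) := by
      have : Continuous fun ε : ℝ => (1 - ε) * gauge K x := by fun_prop
      simpa using (this.tendsto 0).mono_left nhdsWithin_le_nhds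
    filter_upwards [htend.eventually_const_lt hlt] with ε hε
    simp [hxK, hε]

theorem tendsto_setIntegral_norm_sub_div (hW : IsCompact W) {L : NNReal} (hT : LipschitzWith L T) :
    Tendsto (fun ε : ℝ => ∫ z in W, ‖T z - T ((1 - ε) • z)‖ / ε) (𝓝[>] 0)
      (𝓝 (∫ z in W, ‖fderiv ℝ T z z‖)) := by
  have hTcont := hT.continuous
  refine tendsto_integral_filter_of_dominated_convergence (fun z => L * ‖z‖)
    (.of_forall fun ε => ?_) ?_ ?_ ?_
  · exact Continuous.aestronglyMeasurable (by fun_prop)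
  · filter_upwards [self_mem_nhdsWithin] with ε (hε : 0 < ε)
    refine .of_forall fun z => ?_
    have hLip := hT.norm_sub_le z ((1 - ε) • z)
    rw [show z - (1 - ε) • z = ε • z by module, norm_smul, Real.norm_of_nonneg hε.le] at hLip
    rw [norm_div, norm_norm, Real.norm_of_nonneg hε.le, div_le_iff₀ hε]
    linarith
  · exact (by fun_prop : Continuous fun z : E => L * ‖z‖).continuousOn.integrableOn_compact hW
  · filter_upwards [ae_restrict_of_ae hT.ae_differentiableAt] with z hz
    have hline : HasDerivAt (fun ε : ℝ => z - ε • z) (-z) 0 := by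
      simpa using ((hasDerivAt_id (0 : ℝ)).smul_const z).const_sub z
    have hz : HasFDerivAt T (fderiv ℝ T z) (z - (0 : ℝ) • z) := by simpa using hz.hasFDerivAt
    have hslope := (hasDerivAt_iff_tendsto_slope_zero.1 (hz.comp_hasDerivAt 0 hline)).norm.mono_left
      (nhdsWithin_mono 0 fun ε (hε : 0 < ε) => hε.ne')
    rw [map_neg, norm_neg] at hslope
    refine hslope.congr' ?_
    filter_upwards [self_mem_nhdsWithin] with ε (hε : 0 < ε)
    simp only [Function.comp_apply, zero_add, zero_smul, sub_zero]
    rw [norm_smul, norm_inv, Real.norm_of_nonneg hε.le, norm_sub_rev, sub_smul, one_smul,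
      div_eq_inv_mul]

theorem mul_measureReal_sdiff_le_setIntegral_norm_add (hW : IsCompact W)
    (hWstar : StarConvex ℝ 0 W) {d : ℝ} (hd : ∀ x ∈ W, ‖x‖ ≤ d) (hK : IsClosed K)
    (hKconv : Convex ℝ K) (hr : 0 < r) (hball : ball 0 r ⊆ K) {L : NNReal}
    (hT : LipschitzWith L T) (hTK : ∀ z, z + T z ∈ K) :
    r * volume.real (W \ K) ≤
      finrank ℝ E * (∫ z in W, ‖T z‖) + d * ∫ z in W, ‖fderiv ℝ T z‖ := by
  have hK0 : K ∈ 𝓝 0 := mem_of_superset (ball_mem_nhds 0 hr) hball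
  have hlim : r * volume.real (W \ K) ≤
      finrank ℝ E * (∫ z in W, ‖T z‖) + ∫ z in W, ‖fderiv ℝ T z z‖ := by
    refine le_of_tendsto_of_tendsto
      ((tendsto_measureReal_inter_lt_gauge hW hK hKconv hK0).const_mul r)
      ((tendsto_setIntegral_norm_sub_div hW hT).const_add _) ?_
    filter_upwards [Ioo_mem_nhdsGT one_pos] with ε hε
    exact mul_measureReal_inter_le_setIntegral_norm_add hW hWstar hKconv hr hball hT.continuous
      hTK hε.1 hε.2
  refine hlim.trans (add_le_add_right ?_ _)
  have : IsFiniteMeasure (volume.restrict W) := ⟨by simpa using hW.measure_lt_top⟩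
  have hint : Integrable (fun z => ‖fderiv ℝ T z‖) (volume.restrict W) :=
    .of_bound (measurable_fderiv ℝ T).norm.aestronglyMeasurable L
      (.of_forall fun z => by simpa using norm_fderiv_le_of_lipschitz ℝ hT)
  rw [← integral_const_mul]
  refine integral_mono_of_nonneg (.of_forall fun z => norm_nonneg _) (hint.const_mul d)
    (ae_restrict_of_forall_mem hW.measurableSet fun z hz => ?_)
  calc ‖fderiv ℝ T z z‖ ≤ ‖fderiv ℝ T z‖ * ‖z‖ := (fderiv ℝ T z).le_opNorm z
    _ ≤ d * ‖fderiv ℝ T z‖ := by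
      rw [mul_comm]
      gcongr
      exact hd z hz

end Trace

section Translate

variable {E : Type*} [NormedAddCommGroup E] [InnerProductSpace ℝ E] [FiniteDimensional ℝ E]
  [MeasurableSpace E] [BorelSpace E]

theorem measureReal_vadd (x : E) (s : Set E) : volume.real (x +ᵥ s) = volume.real s := by
  rw [measureReal_def, measure_vadd, measureReal_def]

theorem setIntegral_vadd {F : Type*} [NormedAddCommGroup F] [NormedSpace ℝ F] (f : E → F) (x : E)
    (s : Set E) : ∫ z in x +ᵥ s, f z = ∫ z in s, f (x + z) :=
  (measurePreserving_add_left volume x).setIntegral_image_emb (measurableEmbedding_addLeft x) f s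

end Translate

section Displacement

open Set Module
open scoped RealInnerProductSpace

variable {E : Type*} [NormedAddCommGroup E] [InnerProductSpace ℝ E] [FiniteDimensional ℝ E]
  [MeasurableSpace E] [BorelSpace E] [Nontrivial E] {W K : Set E} {d ω : ℝ} {S : E → E}
  {L : NNReal}

theorem exists_measureReal_sdiff_vadd_le_of_setIntegral_eq_zero (hW : IsCompact W)
    (hWconv : Convex ℝ W) (hW0 : 0 < volume.real W) (hbary : ∫ w in W, w = 0) (hd0 : 0 < d)
    (hd : ∀ x ∈ W, ∀ y ∈ W, dist x y ≤ d) (hω0 : 0 < ω)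
    (hω : ∀ u : E, ‖u‖ = 1 → ∃ x ∈ W, ∃ y ∈ W, ω ≤ ⟪u, x - y⟫) (hK : IsClosed K)
    (hKconv : Convex ℝ K) (hS : LipschitzWith L S) (hSK : ∀ z, z + S z ∈ K)
    (hsmall : 96 * finrank ℝ E ^ 2 * d * ∫ z in W, ‖fderiv ℝ S z‖ ≤ ω * volume.real W) :
    ∃ c : E, ω * volume.real (W \ (c +ᵥ K)) ≤
      32 * finrank ℝ E * (3 * finrank ℝ E ^ 2 + 1) * d * ∫ z in W, ‖fderiv ℝ S z‖ := by
  obtain ⟨c, hc⟩ := exists_setIntegral_norm_sub_le hW hWconv hd0 hd hS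
  set n : ℝ := (finrank ℝ E : ℝ)
  set J := ∫ z in W, ‖fderiv ℝ S z‖
  have hn : 0 < n := Nat.cast_pos.2 finrank_pos
  have hint : IntegrableOn (fun w : E => w) W := continuousOn_id.integrableOn_compact hW
  have h0W : 0 ∈ W := by
    have := hWconv.set_average_mem hW.isClosed (fun h => hW0.ne' (by simp [measureReal_def, h]))
      hW.measure_lt_top.ne (ae_restrict_mem hW.measurableSet) hint
    rwa [setAverage_eq, hbary, smul_zero] at this
  have hKc : IsClosed (-c +ᵥ K) := hK.vadd (-c)
  have hSc : LipschitzWith L fun z => S z - c := by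
    simpa [lipschitzWith_iff_dist_le_mul] using hS.dist_le_mul
  have hScK (z : E) : z + (S z - c) ∈ -c +ᵥ K := ⟨z + S z, hSK z, by simp only [vadd_eq_add]; abel⟩
  have hball := ball_subset_of_setIntegral_norm_le hW hWconv hW0
    (fun u => by rw [integral_inner hint, hbary, inner_zero_right]) hω hKc (hKconv.vadd (-c))
    hSc.continuous hScK <| by
      rw [div_mul_eq_mul_div, le_div_iff₀ (by positivity)]
      refine le_trans ?_ hsmall
      nlinarith
  have htrace := mul_measureReal_sdiff_le_setIntegral_norm_add hW (hWconv.starConvex h0W)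
    (fun x hx => by simpa using hd x hx 0 h0W) hKc (hKconv.vadd (-c)) (by positivity) hball hSc hScK
  simp only [fderiv_sub_const] at htrace
  refine ⟨-c, ?_⟩
  rw [div_mul_eq_mul_div, div_le_iff₀ (by positivity)] at htrace
  calc ω * volume.real (W \ (-c +ᵥ K))
    _ ≤ (n * (∫ z in W, ‖S z - c‖) + d * J) * (32 * n) := htrace
    _ ≤ (n * (3 * n * d * J) + d * J) * (32 * n) := by gcongr
    _ = 32 * n * (3 * n ^ 2 + 1) * d * J := by ring

theorem exists_measureReal_sdiff_vadd_le (hW : IsCompact W) (hWconv : Convex ℝ W)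
    (hW0 : 0 < volume.real W) (hd0 : 0 < d) (hd : ∀ x ∈ W, ∀ y ∈ W, dist x y ≤ d) (hω0 : 0 < ω)
    (hω : ∀ u : E, ‖u‖ = 1 → ∃ x ∈ W, ∃ y ∈ W, ω ≤ ⟪u, x - y⟫) (hK : IsClosed K)
    (hKconv : Convex ℝ K) (hS : LipschitzWith L S) (hSK : ∀ z, z + S z ∈ K)
    (hsmall : 96 * finrank ℝ E ^ 2 * d * ∫ z in W, ‖fderiv ℝ S z‖ ≤ ω * volume.real W) :
    ∃ c : E, ω * volume.real (W \ (c +ᵥ K)) ≤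
      32 * finrank ℝ E * (3 * finrank ℝ E ^ 2 + 1) * d * ∫ z in W, ‖fderiv ℝ S z‖ := by
  set b : E := (volume.real W)⁻¹ • ∫ w in W, w with hb
  have hint : IntegrableOn (fun w : E => w) W := continuousOn_id.integrableOn_compact hW
  have hbary : ∫ w in -b +ᵥ W, w = 0 := by
    rw [setIntegral_vadd, integral_add (continuousOn_const.integrableOn_compact hW) hint,
      setIntegral_const, hb, smul_neg, smul_inv_smul₀ hW0.ne', neg_add_cancel]
  have hfderiv : ∫ z in -b +ᵥ W, ‖fderiv ℝ (fun z => S (b + z)) z‖ = ∫ z in W, ‖fderiv ℝ S z‖ := by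
    simp [setIntegral_vadd, fderiv_comp_add_left]
  have hd' : ∀ x ∈ -b +ᵥ W, ∀ y ∈ -b +ᵥ W, dist x y ≤ d := by
    rintro _ ⟨x, hx, rfl⟩ _ ⟨y, hy, rfl⟩
    simpa using hd x hx y hy
  have hω' (u : E) (hu : ‖u‖ = 1) : ∃ x ∈ -b +ᵥ W, ∃ y ∈ -b +ᵥ W, ω ≤ ⟪u, x - y⟫ := by
    obtain ⟨x, hx, y, hy, hxy⟩ := hω u hu
    exact ⟨_, vadd_mem_vadd_set hx, _, vadd_mem_vadd_set hy, by simpa using hxy⟩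
  have hSK' (z : E) : z + S (b + z) ∈ -b +ᵥ K :=
    ⟨b + z + S (b + z), hSK (b + z), by simp only [vadd_eq_add]; abel⟩
  have hS' : LipschitzWith L fun z => S (b + z) := by
    simpa [Function.comp_def] using hS.comp (isometry_add_left b).lipschitz
  obtain ⟨c, hc⟩ := exists_measureReal_sdiff_vadd_le_of_setIntegral_eq_zero (hW.vadd (-b))
    (hWconv.vadd (-b)) (by rwa [measureReal_vadd]) hbary hd0 hd' hω0 hω' (hK.vadd (-b))
    (hKconv.vadd (-b)) hS' hSK' (by rwa [hfderiv, measureReal_vadd])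
  refine ⟨c, ?_⟩
  rwa [hfderiv, vadd_comm c, ← vadd_set_sdiff, measureReal_vadd] at hc

end Displacement

section Arithmetic

variable {n : ℕ} {V w a δ : ℝ}

theorem sq_mul_two_pow_le_of_small (hn : 2 ≤ n) (hV : 0 < V) (hw : 2 ^ n * V ≤ w) (ha : 0 ≤ a)
    (hδ : δ ^ 2 = 2 * w * (w - 2 ^ n * V)) (hδ0 : 0 ≤ δ) (hsmall : 96 * n ^ 3 * δ ≤ w)
    (haδ : 2 ^ n * a ≤ 416 * n ^ 4 * δ) :
    a ^ 2 * 2 ^ n ≤ 360000 * n ^ 8 * V * (w - 2 ^ n * V) := by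
  have hn' : (2 : ℝ) ≤ n := by exact_mod_cast hn
  have hw0 : 0 < w := (by positivity : 0 < 2 ^ n * V).trans_le hw
  have : 0 ≤ w - 2 ^ n * V := sub_nonneg.2 hw
  have hgap : 18432 * n ^ 6 * (w - 2 ^ n * V) ≤ w := by
    refine le_of_mul_le_mul_left ?_ hw0
    calc w * (18432 * n ^ 6 * (w - 2 ^ n * V)) = (96 * n ^ 3 * δ) ^ 2 := by rw [mul_pow, hδ]; ring
      _ ≤ w ^ 2 := by gcongr
      _ = w * w := sq w
  have hwV : w ≤ 1.04 * (2 ^ n * V) := by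
    have : (2 : ℝ) ^ 6 ≤ n ^ 6 := by gcongr
    nlinarith
  refine le_of_mul_le_mul_right ?_ (show (0 : ℝ) < 2 ^ n by positivity)
  calc a ^ 2 * 2 ^ n * 2 ^ n = (2 ^ n * a) ^ 2 := by ring
    _ ≤ (416 * n ^ 4 * δ) ^ 2 := by gcongr
    _ = 346112 * n ^ 8 * w * (w - 2 ^ n * V) := by rw [mul_pow, hδ]; ring
    _ ≤ 346112 * n ^ 8 * (1.04 * (2 ^ n * V)) * (w - 2 ^ n * V) := by gcongr
    _ = 346112 * 1.04 * (n ^ 8 * V * (w - 2 ^ n * V) * 2 ^ n) := by ring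
    _ ≤ 360000 * (n ^ 8 * V * (w - 2 ^ n * V) * 2 ^ n) := by gcongr; norm_num
    _ = 360000 * n ^ 8 * V * (w - 2 ^ n * V) * 2 ^ n := by ring

theorem sq_mul_two_pow_le_of_large (hn : 1 ≤ n) (hV : 0 < V) (hw : 2 ^ n * V ≤ w) (ha : 0 ≤ a)
    (hδ : δ ^ 2 = 2 * w * (w - 2 ^ n * V)) (hlarge : w < 96 * n ^ 3 * δ) (haV : a ≤ 2 * V) :
    a ^ 2 * 2 ^ n ≤ 360000 * n ^ 8 * V * (w - 2 ^ n * V) := by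
  have hn' : (1 : ℝ) ≤ n := by exact_mod_cast hn
  have hw0 : 0 < w := (by positivity : 0 < 2 ^ n * V).trans_le hw
  have : 0 ≤ w - 2 ^ n * V := sub_nonneg.2 hw
  have hgap : w ≤ 18432 * n ^ 6 * (w - 2 ^ n * V) := by
    refine le_of_mul_le_mul_left ?_ hw0
    calc w * w = w ^ 2 := (sq w).symm
      _ ≤ (96 * n ^ 3 * δ) ^ 2 := by gcongr
      _ = w * (18432 * n ^ 6 * (w - 2 ^ n * V)) := by rw [mul_pow, hδ]; ring
  calc a ^ 2 * 2 ^ n ≤ (2 * V) ^ 2 * 2 ^ n := by gcongr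
    _ = 4 * V * (2 ^ n * V) := by ring
    _ ≤ 4 * V * (18432 * n ^ 6 * (w - 2 ^ n * V)) :=
      mul_le_mul_of_nonneg_left (hw.trans hgap) (by positivity)
    _ = 73728 * n ^ 6 * V * (w - 2 ^ n * V) := by ring
    _ ≤ 360000 * n ^ 8 * V * (w - 2 ^ n * V) := by gcongr <;> norm_num

end Arithmetic

section EqualVolumes

open Set Module Metric
open scoped RealInnerProductSpace

theorem measureReal_symmDiff_le_two_mul_sdiff {α : Type*} [MeasurableSpace α] {μ : Measure α}
    {s t : Set α} (hs : MeasurableSet s) (ht : MeasurableSet t) (hsμ : μ s ≠ ⊤) (htμ : μ t ≠ ⊤)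
    (hle : μ.real s ≤ μ.real t) : μ.real (symmDiff s t) ≤ 2 * μ.real (t \ s) := by
  have hs' := measureReal_inter_add_sdiff ht hsμ
  have ht' := measureReal_inter_add_sdiff hs htμ
  rw [inter_comm] at ht'
  rw [measureReal_symmDiff_eq hs ht hsμ htμ]
  linarith

variable {E : Type*} [NormedAddCommGroup E] [InnerProductSpace ℝ E]

/-- The position of a body in `n`-dimensional space in which the ratio of its diameter to its
minimal width is at most `n`. Every body with non-empty interior can be brought into it by a linear
map, see `exists_isAuerbachPosition_image`. -/
structure IsAuerbachPosition (W : Set E) : Prop where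
  dist_le : ∀ x ∈ W, ∀ y ∈ W, dist x y ≤ √(finrank ℝ E)
  exists_le_inner : ∀ u : E, ‖u‖ = 1 → ∃ x ∈ W, ∃ y ∈ W, 1 / √(finrank ℝ E) ≤ ⟪u, x - y⟫

variable [FiniteDimensional ℝ E] [MeasurableSpace E] [BorelSpace E] {K C : Set E}

theorem two_pow_mul_measureReal_le [Nontrivial E] (hK : IsCompact K) (hK0 : 0 < volume.real K)
    (hC : IsCompact C) (hKC : volume.real K = volume.real C) :
    2 ^ finrank ℝ E * volume.real K ≤ volume.real (K + C) := by
  have h := brunn_minkowski_smul one_pos hK hK0 one_pos hC (hKC ▸ hK0)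
  rwa [← hKC, one_smul, one_smul, ← add_mul, one_add_one_eq_two, mul_pow, one_div,
    Real.rpow_inv_natCast_pow hK0.le finrank_pos.ne'] at h

theorem exists_measureReal_add_sdiff_vadd_le (hn : 2 ≤ finrank ℝ E) (hK : IsCompact K)
    (hKconv : Convex ℝ K) (hK0 : 0 < volume.real K) (hC : IsCompact C) (hCconv : Convex ℝ C)
    (hKC : volume.real K = volume.real C) (hpos : IsAuerbachPosition (K + C)) {δ : ℝ} (hδ0 : 0 ≤ δ)
    (hδ : 2 * volume.real (K + C) * (volume.real (K + C) - 2 ^ finrank ℝ E * volume.real K) ≤ δ ^ 2)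
    (hsmall : 96 * finrank ℝ E ^ 3 * δ ≤ volume.real (K + C)) :
    ∃ c : E, volume.real ((K + C) \ (c +ᵥ (2 : ℝ) • K)) ≤ 104 * finrank ℝ E ^ 4 * δ := by
  have : Nontrivial E := nontrivial_of_finrank_pos (R := ℝ) (by lia)
  have hw : 0 < volume.real (K + C) :=
    (by positivity : 0 < 2 ^ finrank ℝ E * volume.real K).trans_le
      (two_pow_mul_measureReal_le hK hK0 hC hKC)
  obtain ⟨S, hS, hSK, hJ⟩ := exists_lipschitzWith_sq_setIntegral_norm_fderiv_le hK hKconv hK0.ne'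
    hC hKC
  have hn : (2 : ℝ) ≤ finrank ℝ E := by exact_mod_cast hn
  set n : ℝ := (finrank ℝ E : ℝ)
  set J := ∫ z in K + C, ‖fderiv ℝ S z‖
  have hsq : √n * √n = n := Real.mul_self_sqrt (by linarith)
  have hsqrt : 0 < √n := Real.sqrt_pos.2 (by linarith)
  have hJδ : J ≤ δ := abs_le_of_sq_le_sq' (hJ.trans hδ) hδ0 |>.2
  obtain ⟨c, hc⟩ := exists_measureReal_sdiff_vadd_le (hK.add hC) (hKconv.add hCconv) hw hsqrt
    hpos.dist_le (one_div_pos.2 hsqrt) hpos.exists_le_inner (hK.smul (2 : ℝ)).isClosed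
    (hKconv.smul 2) hS hSK <| by
      rw [one_div_mul_eq_div, le_div_iff₀ hsqrt]
      calc 96 * n ^ 2 * √n * J * √n = 96 * n ^ 2 * (√n * √n) * J := by ring
        _ = 96 * n ^ 3 * J := by rw [hsq]; ring
        _ ≤ 96 * n ^ 3 * δ := by gcongr
        _ ≤ volume.real (K + C) := hsmall
  refine ⟨c, ?_⟩
  rw [one_div_mul_eq_div, div_le_iff₀ hsqrt] at hc
  calc volume.real ((K + C) \ (c +ᵥ (2 : ℝ) • K))
    _ ≤ 32 * n * (3 * n ^ 2 + 1) * √n * J * √n := hc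
    _ = (96 * n ^ 2 + 32) * (n * (√n * √n)) * J := by ring
    _ = (96 * n ^ 2 + 32) * n ^ 2 * J := by rw [hsq, sq]
    _ ≤ (104 * n ^ 2) * n ^ 2 * δ := by gcongr; nlinarith
    _ = 104 * n ^ 4 * δ := by ring

theorem measureReal_symmDiff_vadd_two_smul (c₁ c₂ : E) (K C : Set E) :
    volume.real (symmDiff (c₁ +ᵥ (2 : ℝ) • K) (c₂ +ᵥ (2 : ℝ) • C)) =
      2 ^ finrank ℝ E * volume.real (symmDiff K (((2 : ℝ)⁻¹ • (c₂ - c₁)) +ᵥ C)) := by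
  have hC : c₂ +ᵥ (2 : ℝ) • C = c₁ +ᵥ (2 : ℝ) • (((2 : ℝ)⁻¹ • (c₂ - c₁)) +ᵥ C) := by
    simp only [← singleton_vadd, vadd_eq_add, smul_add, smul_set_singleton,
      smul_inv_smul₀ (two_ne_zero (α := ℝ)), ← add_assoc, singleton_add_singleton, add_sub_cancel]
  rw [hC, ← vadd_set_symmDiff, ← smul_set_symmDiff₀ two_ne_zero, measureReal_vadd,
    measureReal_smul_of_nonneg zero_le_two]

theorem exists_two_pow_mul_measureReal_symmDiff_vadd_le (hn : 2 ≤ finrank ℝ E) (hK : IsCompact K)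
    (hKconv : Convex ℝ K) (hK0 : 0 < volume.real K) (hC : IsCompact C) (hCconv : Convex ℝ C)
    (hKC : volume.real K = volume.real C) (hpos : IsAuerbachPosition (K + C)) {δ : ℝ} (hδ0 : 0 ≤ δ)
    (hδ : 2 * volume.real (K + C) * (volume.real (K + C) - 2 ^ finrank ℝ E * volume.real K) ≤ δ ^ 2)
    (hsmall : 96 * finrank ℝ E ^ 3 * δ ≤ volume.real (K + C)) :
    ∃ x : E, 2 ^ finrank ℝ E * volume.real (symmDiff K (x +ᵥ C)) ≤
      416 * finrank ℝ E ^ 4 * δ := by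
  have : Nontrivial E := nontrivial_of_finrank_pos (R := ℝ) (by lia)
  obtain ⟨c₁, hc₁⟩ := exists_measureReal_add_sdiff_vadd_le hn hK hKconv hK0 hC hCconv hKC hpos hδ0
    hδ hsmall
  obtain ⟨c₂, hc₂⟩ : ∃ c : E, volume.real ((K + C) \ (c +ᵥ (2 : ℝ) • C)) ≤
      104 * finrank ℝ E ^ 4 * δ := by
    rw [add_comm K C] at hpos hδ hsmall ⊢
    exact exists_measureReal_add_sdiff_vadd_le hn hC hCconv (hKC ▸ hK0) hK hKconv hKC.symm hpos hδ0
      (hKC ▸ hδ) hsmall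
  have hle := two_pow_mul_measureReal_le hK hK0 hC hKC
  set A := c₁ +ᵥ (2 : ℝ) • K
  set B := c₂ +ᵥ (2 : ℝ) • C
  have hA : IsCompact A := (hK.smul 2).vadd c₁
  have hB : IsCompact B := (hC.smul 2).vadd c₂
  have hW : IsCompact (K + C) := hK.add hC
  have hvol (s : Set E) : volume.real ((2 : ℝ) • s) = 2 ^ finrank ℝ E * volume.real s :=
    measureReal_smul_of_nonneg zero_le_two s
  have hAW := measureReal_symmDiff_le_two_mul_sdiff hA.measurableSet hW.measurableSet
    hA.measure_lt_top.ne hW.measure_lt_top.ne (by rwa [measureReal_vadd, hvol])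
  have hBW := measureReal_symmDiff_le_two_mul_sdiff hB.measurableSet hW.measurableSet
    hB.measure_lt_top.ne hW.measure_lt_top.ne (by rwa [measureReal_vadd, hvol, ← hKC])
  rw [symmDiff_comm] at hBW
  refine ⟨(2 : ℝ)⁻¹ • (c₂ - c₁), ?_⟩
  rw [← measureReal_symmDiff_vadd_two_smul]
  calc volume.real (symmDiff A B)
    _ ≤ volume.real (symmDiff A (K + C)) + volume.real (symmDiff (K + C) B) :=
      measureReal_symmDiff_le _ hA.measure_lt_top.ne hW.measure_lt_top.ne
    _ ≤ 416 * finrank ℝ E ^ 4 * δ := by linarith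

theorem exists_sq_measureReal_symmDiff_vadd_le_of_isAuerbachPosition (hn : 2 ≤ finrank ℝ E)
    (hK : IsCompact K) (hKconv : Convex ℝ K) (hK0 : 0 < volume.real K) (hC : IsCompact C)
    (hCconv : Convex ℝ C) (hKC : volume.real K = volume.real C)
    (hpos : IsAuerbachPosition (K + C)) :
    ∃ x : E, volume.real (symmDiff K (x +ᵥ C)) ^ 2 * 2 ^ finrank ℝ E ≤
      360000 * finrank ℝ E ^ 8 * volume.real K *
        (volume.real (K + C) - 2 ^ finrank ℝ E * volume.real K) := by
  have : Nontrivial E := nontrivial_of_finrank_pos (R := ℝ) (by lia)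
  have hle := two_pow_mul_measureReal_le hK hK0 hC hKC
  set w := volume.real (K + C)
  set V := volume.real K
  have : 0 ≤ w - 2 ^ finrank ℝ E * V := sub_nonneg.2 hle
  have hw : 0 < w := (by positivity : 0 < 2 ^ finrank ℝ E * V).trans_le hle
  have hδ := Real.sq_sqrt (show 0 ≤ 2 * w * (w - 2 ^ finrank ℝ E * V) by positivity)
  rcases le_or_gt (96 * finrank ℝ E ^ 3 * √(2 * w * (w - 2 ^ finrank ℝ E * V))) w with hsmall | hbig
  · obtain ⟨x, hx⟩ := exists_two_pow_mul_measureReal_symmDiff_vadd_le hn hK hKconv hK0 hC hCconv hKC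
      hpos (Real.sqrt_nonneg _) hδ.ge hsmall
    exact ⟨x, sq_mul_two_pow_le_of_small hn hK0 hle measureReal_nonneg hδ
      (Real.sqrt_nonneg _) hsmall hx⟩
  · refine ⟨0, sq_mul_two_pow_le_of_large (by lia) hK0 hle measureReal_nonneg hδ hbig ?_⟩
    rw [zero_vadd, two_mul]
    nth_rw 2 [hKC]
    exact (measureReal_mono symmDiff_le_sup (hK.union hC).measure_lt_top.ne).trans
      (measureReal_union_le _ _)

end EqualVolumes

section Auerbach

open Set Module Filter
open scoped RealInnerProductSpace Topology

/-- Auerbach's lemma: maximise the determinant over all families of vectors of `D`. -/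
theorem exists_basis_mem_abs_coord_le_one {E : Type*} [NormedAddCommGroup E] [NormedSpace ℝ E]
    [FiniteDimensional ℝ E] {D : Set E} (hD : IsCompact D) (hD0 : D ∈ 𝓝 0) :
    ∃ b : Basis (Fin (finrank ℝ E)) ℝ E, (∀ i, b i ∈ D) ∧ ∀ z ∈ D, ∀ i, |b.coord i z| ≤ 1 := by
  let e := finBasis ℝ E
  have hcont : Continuous fun v : Fin (finrank ℝ E) → E => |e.det v| := by
    simp only [Basis.det_apply]
    refine (Continuous.matrix_det <| continuous_matrix fun i j => ?_).abs
    exact (e.coord i).continuous_of_finiteDimensional.comp (continuous_apply j)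
  obtain ⟨t, ht, ht0⟩ : ∃ t : ℝ, (∀ i, t • e i ∈ D) ∧ 0 < t := by
    refine Eventually.exists (f := 𝓝[>] 0) <| .and ?_ self_mem_nhdsWithin
    refine eventually_all.2 fun i => Tendsto.eventually_mem ?_ hD0
    exact ((continuous_id.smul continuous_const).tendsto' 0 0 (zero_smul ℝ (e i))).mono_left
      nhdsWithin_le_nhds
  obtain ⟨v, hv, hmax⟩ := (isCompact_univ_pi fun _ => hD).exists_isMaxOn ⟨_, fun i _ => ht i⟩
    hcont.continuousOn
  have hdet : 0 < |e.det v| := lt_of_lt_of_le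
    (by simp [AlternatingMap.map_smul_univ, Basis.det_self, ht0.ne']) (hmax fun i _ => ht i)
  obtain ⟨hli, hsp⟩ := e.is_basis_iff_det.2 (abs_pos.1 hdet).isUnit
  refine ⟨Basis.mk hli hsp.ge, fun i => by simpa using hv i trivial, fun z hz i => ?_⟩
  have hcoord : e.det v * (Basis.mk hli hsp.ge).coord i z = e.det (Function.update v i z) :=
    DFunLike.congr_fun (e.det_smul_mk_coord_eq_det_update hli hsp.ge i) z
  have hupdate : |e.det (Function.update v i z)| ≤ |e.det v| :=
    hmax ((update_mem_pi_iff_of_mem hv).2 fun _ => hz)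
  rw [← hcoord, abs_mul] at hupdate
  exact le_of_mul_le_mul_left (by rwa [mul_one]) hdet

variable {E : Type*} [NormedAddCommGroup E] [InnerProductSpace ℝ E]

theorem exists_one_div_sqrt_card_le_abs_inner {ι : Type*} [Fintype ι] [Nonempty ι]
    (e : OrthonormalBasis ι ℝ E) {u : E} (hu : ‖u‖ = 1) :
    ∃ i, 1 / √(Fintype.card ι) ≤ |⟪u, e i⟫| := by
  obtain ⟨i, -, hi⟩ : ∃ i ∈ Finset.univ, 1 / (Fintype.card ι : ℝ) ≤ ⟪u, e i⟫ ^ 2 := by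
    refine Finset.exists_le_of_sum_le Finset.univ_nonempty (le_of_eq ?_)
    rw [e.sum_sq_inner_left, hu, Finset.sum_const, Finset.card_univ, nsmul_eq_mul,
      mul_one_div_cancel (by simp), one_pow]
  refine ⟨i, ?_⟩
  rw [← Real.sqrt_one, ← Real.sqrt_div zero_le_one]
  exact Real.sqrt_le_iff.2 ⟨abs_nonneg _, by rwa [sq_abs]⟩

theorem exists_isAuerbachPosition_image [Nontrivial E] [FiniteDimensional ℝ E] {W : Set E}
    (hW : IsCompact W) (hWint : (interior W).Nonempty) :
    ∃ g : E ≃ₗ[ℝ] E, IsAuerbachPosition (g '' W) := by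
  have hnhds : W - W ∈ 𝓝 0 := by
    obtain ⟨x, hx⟩ := hWint
    exact mem_of_superset (isOpen_interior.sub_right.mem_nhds ⟨x, hx, x, hx, sub_self x⟩)
      (sub_subset_sub interior_subset interior_subset)
  obtain ⟨b, hbW, hb⟩ := exists_basis_mem_abs_coord_le_one
    (sub_eq_add_neg W W ▸ hW.add hW.neg) hnhds
  let e := stdOrthonormalBasis ℝ E
  let g : E ≃ₗ[ℝ] E := b.equiv e.toBasis (Equiv.refl _)
  have hgb (i) : g (b i) = e i := by simp [g]
  refine ⟨g, ?_, fun u hu => ?_⟩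
  · rintro _ ⟨x, hx, rfl⟩ _ ⟨y, hy, rfl⟩
    have hcoord (i) : ⟪e i, g (x - y)⟫ = b.coord i (x - y) := by
      rw [← e.repr_apply_apply, ← e.coe_toBasis_repr_apply]
      simp [g, Basis.equiv, -OrthonormalBasis.coe_toBasis_repr_apply,
        -OrthonormalBasis.coe_toBasis, -map_sub]
    rw [dist_eq_norm, ← map_sub]
    refine Real.le_sqrt_of_sq_le ?_
    calc ‖g (x - y)‖ ^ 2 = ∑ i, b.coord i (x - y) ^ 2 := by
          simp only [← e.sum_sq_inner_right, hcoord]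
      _ ≤ ∑ _i : Fin (finrank ℝ E), (1 : ℝ) := Finset.sum_le_sum fun i _ =>
          (sq_le_one_iff_abs_le_one _).2 (hb _ (sub_mem_sub hx hy) i)
      _ = finrank ℝ E := by simp
  · have : Nonempty (Fin (finrank ℝ E)) := ⟨0, finrank_pos⟩
    obtain ⟨i, hi⟩ := exists_one_div_sqrt_card_le_abs_inner e hu
    rw [Fintype.card_fin, ← hgb] at hi
    obtain ⟨x, hx, y, hy, hxy⟩ := hbW i
    simp only [← hxy, map_sub] at hi
    rcases le_abs.1 hi with hi | hi
    · exact ⟨g x, mem_image_of_mem g hx, g y, mem_image_of_mem g hy, hi⟩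
    · refine ⟨g y, mem_image_of_mem g hy, g x, mem_image_of_mem g hx, ?_⟩
      rwa [← neg_sub, inner_neg_right]

end Auerbach

section LinearInvariance

open Set Module

variable {E : Type*} [NormedAddCommGroup E] [InnerProductSpace ℝ E] [FiniteDimensional ℝ E]
  [MeasurableSpace E] [BorelSpace E] {K C : Set E}

theorem interior_nonempty_of_measureReal_pos (hK : IsClosed K) (hKconv : Convex ℝ K)
    (hK0 : 0 < volume.real K) : (interior K).Nonempty := by
  by_contra hempty
  have hfrontier : volume.real (frontier K) = 0 := by
    rw [measureReal_def, hKconv.addHaar_frontier volume, ENNReal.toReal_zero]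
  rw [hK.frontier_eq, not_nonempty_iff_eq_empty.1 hempty, sdiff_empty] at hfrontier
  exact hK0.ne' hfrontier

theorem exists_sq_measureReal_symmDiff_vadd_le (hn : 2 ≤ finrank ℝ E)
    (hK : IsCompact K) (hKconv : Convex ℝ K) (hK0 : 0 < volume.real K) (hC : IsCompact C)
    (hCconv : Convex ℝ C) (hKC : volume.real K = volume.real C) :
    ∃ x : E, volume.real (symmDiff K (x +ᵥ C)) ^ 2 * 2 ^ finrank ℝ E ≤
      360000 * finrank ℝ E ^ 8 * volume.real K *
        (volume.real (K + C) - 2 ^ finrank ℝ E * volume.real K) := by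
  have : Nontrivial E := nontrivial_of_finrank_pos (R := ℝ) (by lia)
  have hint : (interior (K + C)).Nonempty := by
    refine interior_nonempty_of_measureReal_pos (hK.add hC).isClosed (hKconv.add hCconv) ?_
    exact (by positivity : 0 < 2 ^ finrank ℝ E * volume.real K).trans_le
      (two_pow_mul_measureReal_le hK hK0 hC hKC)
  obtain ⟨g, hg⟩ := exists_isAuerbachPosition_image (hK.add hC) hint
  rw [image_add] at hg
  have hcont : Continuous g := g.toLinearMap.continuous_of_finiteDimensional
  set D := |LinearMap.det (g : E →ₗ[ℝ] E)|
  have hD : 0 < D := abs_pos.2 g.isUnit_det'.ne_zero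
  have hvol (s : Set E) : volume.real (g '' s) = D * volume.real s := by
    rw [measureReal_def, ← LinearEquiv.coe_coe, Measure.addHaar_image_linearMap, ENNReal.toReal_mul,
      ENNReal.toReal_ofReal hD.le, measureReal_def]
  obtain ⟨y, hy⟩ := exists_sq_measureReal_symmDiff_vadd_le_of_isAuerbachPosition hn
    (hK.image hcont) (hKconv.linear_image (g : E →ₗ[ℝ] E)) (by rw [hvol]; positivity)
    (hC.image hcont) (hCconv.linear_image (g : E →ₗ[ℝ] E)) (by rw [hvol, hvol, hKC]) hg
  have hyC : y +ᵥ g '' C = g '' (g.symm y +ᵥ C) := by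
    rw [← singleton_vadd, ← singleton_vadd, vadd_eq_add, vadd_eq_add, image_add, image_singleton,
      g.apply_symm_apply]
  rw [← image_add, hyC, ← image_symmDiff g.injective, hvol, hvol, hvol] at hy
  refine ⟨g.symm y, le_of_mul_le_mul_left ?_ (pow_pos hD 2)⟩
  linear_combination hy

end LinearInvariance

section OneDimensional

open Set Module

theorem exists_vadd_eq_of_volume_eq_real {s t : Set ℝ} (hs : IsCompact s) (hsconv : Convex ℝ s)
    (hs0 : s.Nonempty) (ht : IsCompact t) (htconv : Convex ℝ t) (ht0 : t.Nonempty)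
    (hst : volume.real s = volume.real t) : ∃ x : ℝ, x +ᵥ t = s := by
  have hs_eq := eq_Icc_of_connected_compact ⟨hs0, hsconv.isPreconnected⟩ hs
  have ht_eq := eq_Icc_of_connected_compact ⟨ht0, htconv.isPreconnected⟩ ht
  have hs_le := csInf_le_csSup hs0 hs.bddBelow hs.bddAbove
  have ht_le := csInf_le_csSup ht0 ht.bddBelow ht.bddAbove
  generalize sInf s = a at *
  generalize sSup s = b at *
  generalize sInf t = c at *
  generalize sSup t = d at *
  subst hs_eq ht_eq
  rw [Real.volume_real_Icc_of_le hs_le, Real.volume_real_Icc_of_le ht_le] at hst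
  refine ⟨a - c, (image_const_add_Icc _ _ _).trans ?_⟩
  rw [sub_add_cancel, ← sub_add_cancel b a, hst]
  ring_nf

theorem exists_vadd_eq_of_finrank_eq_one {E : Type*} [NormedAddCommGroup E] [InnerProductSpace ℝ E]
    [FiniteDimensional ℝ E] [MeasurableSpace E] [BorelSpace E] {K C : Set E}
    (hE : finrank ℝ E = 1) (hK : IsCompact K) (hKconv : Convex ℝ K) (hK0 : K.Nonempty)
    (hC : IsCompact C) (hCconv : Convex ℝ C) (hC0 : C.Nonempty)
    (hKC : volume.real K = volume.real C) : ∃ x : E, x +ᵥ C = K := by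
  let φ : E ≃ₗᵢ[ℝ] ℝ := (stdOrthonormalBasis ℝ E).equiv (stdOrthonormalBasis ℝ ℝ)
    (finCongr (hE.trans (finrank_self ℝ).symm))
  have hvol (s : Set E) : volume.real (φ '' s) = volume.real s := by
    rw [φ.image_eq_preimage_symm, measureReal_def]
    exact congrArg ENNReal.toReal <|
      φ.symm.measurePreserving.measure_preimage_emb φ.symm.toHomeomorph.measurableEmbedding s
  obtain ⟨x, hx⟩ := exists_vadd_eq_of_volume_eq_real (hK.image φ.continuous)
    (hKconv.linear_image φ.toLinearMap) (hK0.image φ) (hC.image φ.continuous)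
    (hCconv.linear_image φ.toLinearMap) (hC0.image φ) (by rw [hvol, hvol, hKC])
  refine ⟨φ.symm x, φ.injective.image_injective ?_⟩
  rw [← hx, ← singleton_vadd, ← singleton_vadd, vadd_eq_add, vadd_eq_add, image_add,
    image_singleton, φ.apply_symm_apply]

end OneDimensional

section UnitVolume

open Set Module

variable {E : Type*} [NormedAddCommGroup E] [InnerProductSpace ℝ E] [FiniteDimensional ℝ E]
  [MeasurableSpace E] [BorelSpace E] [Nontrivial E] {K C : Set E} {γ : ℝ}

theorem one_add_pow_le_one_add_two_mul {n : ℕ} {y : ℝ} (hy0 : 0 ≤ y) (hy : n * y ≤ 1) :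
    (1 + y) ^ n ≤ 1 + 2 * n * y := by
  have hexp : (1 + y) ^ n ≤ Real.exp (n * y) := by
    rw [Real.exp_nat_mul]
    gcongr
    linarith [Real.add_one_le_exp y]
  have hny : 0 ≤ n * y := by positivity
  have hquad := (abs_le.1 <| Real.abs_exp_sub_one_sub_id_le (abs_le.2 ⟨by linarith, hy⟩)).2
  nlinarith

theorem pow_two_mul_one_add_le {n : ℕ} {a w : ℝ} (hn : 1 ≤ n) (hw : 2 ^ n ≤ w) (ha0 : 0 ≤ a)
    (ha : a ≤ 2) (haw : a ^ 2 * 2 ^ n ≤ 360000 * n ^ 8 * (w - 2 ^ n)) (hγ0 : 0 ≤ γ)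
    (hγ : γ * (720000 * n ^ 9) ≤ 1) : (2 * (1 + γ * a ^ 2)) ^ n ≤ w := by
  have hn' : (1 : ℝ) ≤ n := by exact_mod_cast hn
  have : 0 ≤ w - 2 ^ n := sub_nonneg.2 hw
  have hsmall : n * (γ * a ^ 2) ≤ 1 := by
    calc n * (γ * a ^ 2) ≤ n ^ 9 * (γ * 2 ^ 2) := by
          gcongr
          exact le_self_pow₀ hn' (by norm_num)
      _ ≤ γ * (720000 * n ^ 9) := by nlinarith [show 0 ≤ γ * n ^ 9 by positivity]
      _ ≤ 1 := hγ
  calc (2 * (1 + γ * a ^ 2)) ^ n = 2 ^ n * (1 + γ * a ^ 2) ^ n := mul_pow ..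
    _ ≤ 2 ^ n * (1 + 2 * n * (γ * a ^ 2)) := by
      gcongr
      exact one_add_pow_le_one_add_two_mul (by positivity) hsmall
    _ = 2 ^ n + 2 * n * γ * (a ^ 2 * 2 ^ n) := by ring
    _ ≤ 2 ^ n + 2 * n * γ * (360000 * n ^ 8 * (w - 2 ^ n)) := by gcongr
    _ = 2 ^ n + γ * (720000 * n ^ 9) * (w - 2 ^ n) := by ring
    _ ≤ 2 ^ n + 1 * (w - 2 ^ n) := by gcongr
    _ = w := by ring

theorem exists_pow_two_mul_one_add_le_measureReal_add (hK : IsCompact K) (hKconv : Convex ℝ K)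
    (hK1 : volume.real K = 1) (hC : IsCompact C) (hCconv : Convex ℝ C) (hC1 : volume.real C = 1)
    (hγ0 : 0 ≤ γ) (hγ : 2 ≤ finrank ℝ E → γ * (720000 * finrank ℝ E ^ 9) ≤ 1) :
    ∃ x : E, (2 * (1 + γ * volume.real (symmDiff K (x +ᵥ C)) ^ 2)) ^ finrank ℝ E ≤
      volume.real (K + C) := by
  have hKC : volume.real K = volume.real C := hK1.trans hC1.symm
  have hK0 : 0 < volume.real K := hK1 ▸ one_pos
  have hle := two_pow_mul_measureReal_le hK hK0 hC hKC
  rw [hK1, mul_one] at hle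
  have hne {s : Set E} (hs : volume.real s = 1) : s.Nonempty := by
    rw [nonempty_iff_ne_empty]
    rintro rfl
    simp at hs
  rcases (Nat.one_le_iff_ne_zero.2 (finrank_pos (R := ℝ) (M := E)).ne').eq_or_lt with hn | hn
  · obtain ⟨x, hx⟩ := exists_vadd_eq_of_finrank_eq_one hn.symm hK hKconv (hne hK1) hC hCconv
      (hne hC1) hKC
    exact ⟨x, by simpa [hx] using hle⟩
  · obtain ⟨x, hx⟩ := exists_sq_measureReal_symmDiff_vadd_le hn hK hKconv hK0 hC hCconv hKC
    rw [hK1, mul_one, mul_one] at hx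
    refine ⟨x, pow_two_mul_one_add_le hn.le hle measureReal_nonneg ?_ hx hγ0 (hγ hn)⟩
    calc volume.real (symmDiff K (x +ᵥ C)) ≤ volume.real (K ∪ (x +ᵥ C)) :=
          measureReal_mono symmDiff_le_sup (hK.union (hC.vadd x)).measure_lt_top.ne
      _ ≤ volume.real K + volume.real (x +ᵥ C) := measureReal_union_le _ _
      _ = 2 := by rw [measureReal_vadd, hK1, hC1, one_add_one_eq_two]

end UnitVolume

section Combine

open Set Module

variable {E : Type*} [NormedAddCommGroup E] [InnerProductSpace ℝ E] [FiniteDimensional ℝ E]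
  [MeasurableSpace E] [BorelSpace E] {K C : Set E} {γ p q : ℝ}

theorem rpow_smul_rpow_smul_self (hK0 : 0 < volume.real K) :
    volume.real K ^ (1 / finrank ℝ E : ℝ) • volume.real K ^ (-1 / finrank ℝ E : ℝ) • K = K := by
  rw [smul_smul, ← Real.rpow_add hK0, neg_div, add_neg_cancel, Real.rpow_zero, one_smul]

variable [Nontrivial E]

theorem le_rpow_one_div_of_pow_le {n : ℕ} {x y : ℝ} (hn : n ≠ 0) (hx : 0 ≤ x) (hxy : x ^ n ≤ y) :
    x ≤ y ^ (1 / n : ℝ) := by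
  rw [one_div, ← Real.pow_rpow_inv_natCast hx hn]
  gcongr

theorem sub_mul_add_mul_le_rpow_measureReal_smul_add_smul (hK : IsCompact K)
    (hKconv : Convex ℝ K) (hK0 : 0 < volume.real K) (hC : IsCompact C)
    (hKC0 : 0 < volume.real (K + C)) (hq : 0 < q) (hqp : q ≤ p) :
    (p - q) * volume.real K ^ (1 / finrank ℝ E : ℝ) +
      q * volume.real (K + C) ^ (1 / finrank ℝ E : ℝ) ≤
        volume.real (p • K + q • C) ^ (1 / finrank ℝ E : ℝ) := by
  rcases hqp.eq_or_lt with rfl | hqp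
  · rw [sub_self, zero_mul, zero_add, ← smul_add, rpow_measureReal_smul_of_nonneg hq.le]
  · have hsplit : p • K + q • C = (p - q) • K + q • (K + C) := by
      rw [smul_add, ← add_assoc, ← hKconv.add_smul (sub_nonneg.2 hqp.le) hq.le, sub_add_cancel]
    have : 0 < p - q := sub_pos.2 hqp
    rw [hsplit]
    refine le_rpow_one_div_of_pow_le finrank_pos.ne' (by positivity) ?_
    exact brunn_minkowski_smul (sub_pos.2 hqp) hK hK0 hq (hK.add hC) hKC0

theorem add_mul_one_add_div_le {y s : ℝ} (hq : 0 < q) (hqp : q ≤ p) (hy : 0 ≤ y) (hs : p / q ≤ s) :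
    (p + q) * (1 + y / s) ≤ p - q + q * (2 * (1 + y)) := by
  have hp : 0 < p := hq.trans_le hqp
  calc (p + q) * (1 + y / s) ≤ (p + q) * (1 + y / (p / q)) := by gcongr
    _ = p + q + q * ((p + q) / p) * y := by field_simp
    _ ≤ p + q + q * 2 * y := by
      gcongr
      rw [div_le_iff₀ hp]
      linarith
    _ = p - q + q * (2 * (1 + y)) := by ring

theorem add_mul_le_rpow_measureReal_smul_add_smul {y s : ℝ} (hK : IsCompact K)
    (hKconv : Convex ℝ K) (hK1 : volume.real K = 1) (hC : IsCompact C) (hy : 0 ≤ y)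
    (hKC : (2 * (1 + y)) ^ finrank ℝ E ≤ volume.real (K + C)) (hq : 0 < q) (hqp : q ≤ p)
    (hs : p / q ≤ s) :
    (p + q) * (1 + y / s) ≤ volume.real (p • K + q • C) ^ (1 / finrank ℝ E : ℝ) := by
  have hKC0 : 0 < volume.real (K + C) :=
    (by positivity : 0 < (2 * (1 + y)) ^ finrank ℝ E).trans_le hKC
  have hroot : 2 * (1 + y) ≤ volume.real (K + C) ^ (1 / finrank ℝ E : ℝ) :=
    le_rpow_one_div_of_pow_le finrank_pos.ne' (by positivity) hKC
  calc (p + q) * (1 + y / s) ≤ p - q + q * (2 * (1 + y)) := add_mul_one_add_div_le hq hqp hy hs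
    _ ≤ (p - q) * volume.real K ^ (1 / finrank ℝ E : ℝ) +
          q * volume.real (K + C) ^ (1 / finrank ℝ E : ℝ) := by
      rw [hK1, Real.one_rpow, mul_one]
      gcongr
    _ ≤ volume.real (p • K + q • C) ^ (1 / finrank ℝ E : ℝ) :=
      sub_mul_add_mul_le_rpow_measureReal_smul_add_smul hK hKconv (hK1 ▸ one_pos) hC hKC0 hq hqp

theorem exists_add_mul_le_rpow_measureReal_smul_add_smul (hK : IsCompact K) (hKconv : Convex ℝ K)
    (hK1 : volume.real K = 1) (hC : IsCompact C) (hCconv : Convex ℝ C) (hC1 : volume.real C = 1)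
    (hγ0 : 0 ≤ γ) (hγ : 2 ≤ finrank ℝ E → γ * (720000 * finrank ℝ E ^ 9) ≤ 1)
    (hp : 0 < p) (hq : 0 < q) :
    ∃ x : E, (p + q) *
      (1 + γ * volume.real (symmDiff K (x +ᵥ C)) ^ 2 / max (q / p) (p / q)) ≤
        volume.real (p • K + q • C) ^ (1 / finrank ℝ E : ℝ) := by
  obtain ⟨x, hx⟩ := exists_pow_two_mul_one_add_le_measureReal_add hK hKconv hK1 hC hCconv hC1 hγ0 hγ
  refine ⟨x, ?_⟩
  have hy : 0 ≤ γ * volume.real (symmDiff K (x +ᵥ C)) ^ 2 := by positivity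
  rcases le_total q p with hqp | hpq
  · exact add_mul_le_rpow_measureReal_smul_add_smul hK hKconv hK1 hC hy hx hq hqp (le_max_right _ _)
  · rw [add_comm p, add_comm (p • K)]
    rw [add_comm K] at hx
    exact add_mul_le_rpow_measureReal_smul_add_smul hC hCconv hC1 hK hy hx hp hpq (le_max_left _ _)

theorem measureReal_rpow_smul_self (hK0 : 0 < volume.real K) :
    volume.real (volume.real K ^ (-1 / finrank ℝ E : ℝ) • K) = 1 := by
  have hpow := Real.rpow_mul_natCast hK0.le (-1 / finrank ℝ E) (finrank ℝ E)
  rw [div_mul_cancel₀ _ (Nat.cast_ne_zero.2 finrank_pos.ne'), Real.rpow_neg_one] at hpow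
  rw [measureReal_smul_of_nonneg (Real.rpow_nonneg hK0.le _), ← hpow, inv_mul_cancel₀ hK0.ne']

theorem exists_add_mul_le_rpow_measureReal_add (hK : IsCompact K) (hKconv : Convex ℝ K)
    (hK0 : 0 < volume.real K) (hC : IsCompact C) (hCconv : Convex ℝ C) (hC0 : 0 < volume.real C)
    (hγ0 : 0 ≤ γ) (hγ : 2 ≤ finrank ℝ E → γ * (720000 * finrank ℝ E ^ 9) ≤ 1) :
    ∃ x : E, (volume.real K ^ (1 / finrank ℝ E : ℝ) + volume.real C ^ (1 / finrank ℝ E : ℝ)) *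
      (1 + γ / max (volume.real C / volume.real K) (volume.real K / volume.real C) ^
          (1 / finrank ℝ E : ℝ) *
        volume.real (symmDiff (volume.real K ^ (-1 / finrank ℝ E : ℝ) • K)
          (x +ᵥ volume.real C ^ (-1 / finrank ℝ E : ℝ) • C)) ^ 2) ≤
        volume.real (K + C) ^ (1 / finrank ℝ E : ℝ) := by
  obtain ⟨x, hx⟩ := exists_add_mul_le_rpow_measureReal_smul_add_smul (hK.smul _) (hKconv.smul _)
    (measureReal_rpow_smul_self hK0) (hC.smul _) (hCconv.smul _) (measureReal_rpow_smul_self hC0)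
    hγ0 hγ (Real.rpow_pos_of_pos hK0 (1 / finrank ℝ E)) (Real.rpow_pos_of_pos hC0 (1 / finrank ℝ E))
  have hmax : max (volume.real C / volume.real K) (volume.real K / volume.real C) ^
      (1 / finrank ℝ E : ℝ) = _ :=
    (Real.monotoneOn_rpow_Ici_of_exponent_nonneg (by positivity)).map_max
      (mem_Ici.2 (by positivity)) (mem_Ici.2 (by positivity))
  refine ⟨x, ?_⟩
  rwa [rpow_smul_rpow_smul_self hK0, rpow_smul_rpow_smul_self hC0, ← Real.div_rpow hC0.le hK0.le,
    ← Real.div_rpow hK0.le hC0.le, ← hmax, mul_div_right_comm] at hx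

end Combine

section HomotheticDistance

open Module

variable {n : ℕ} {K C : Set (EuclideanSpace ℝ (Fin n))}

theorem homDist_nonneg : 0 ≤ homDist K C :=
  Real.sInf_nonneg <| by
    rintro _ ⟨x, rfl⟩
    exact ENNReal.toReal_nonneg

theorem homDist_le (x : EuclideanSpace ℝ (Fin n)) :
    homDist K C ≤ volume.real (symmDiff (volume.real K ^ (-(1 : ℝ) / n) • K)
      (x +ᵥ volume.real C ^ (-(1 : ℝ) / n) • C)) := by
  refine csInf_le ⟨0, ?_⟩ ⟨x, ?_⟩
  · rintro _ ⟨x, rfl⟩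
    exact ENNReal.toReal_nonneg
  · rw [← Set.singleton_vadd, vadd_eq_add]
    rfl

theorem two_sub_rpow_div_sq_mul_le_one (hn : 2 ≤ n) :
    ((2 - (2 : ℝ) ^ (((n : ℝ) - 1) / n)) ^ ((3 : ℝ) / 2) / (122 * (n : ℝ) ^ 7)) ^ 2 *
      (720000 * n ^ 9) ≤ 1 := by
  have hn' : (2 : ℝ) ≤ n := by exact_mod_cast hn
  set t := 2 - (2 : ℝ) ^ (((n : ℝ) - 1) / n)
  have ht0 : 0 ≤ t := by
    have : (2 : ℝ) ^ (((n : ℝ) - 1) / n) ≤ 2 ^ (1 : ℝ) :=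
      Real.rpow_le_rpow_of_exponent_le one_le_two (div_le_one_of_le₀ (by linarith) (by linarith))
    rw [Real.rpow_one] at this
    linarith
  have ht1 : t ≤ 0.6 := by
    have hexp : (2 : ℝ) ^ (1 / 2 : ℝ) ≤ 2 ^ (((n : ℝ) - 1) / n) := by
      refine Real.rpow_le_rpow_of_exponent_le one_le_two ?_
      rw [div_le_div_iff₀ (by norm_num) (by linarith)]
      linarith
    have hsqrt : (1.4 : ℝ) ≤ √2 := Real.le_sqrt_of_sq_le (by norm_num)
    rw [← Real.sqrt_eq_rpow] at hexp
    linarith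
  have hcube : (t ^ ((3 : ℝ) / 2)) ^ 2 = t ^ 3 := by
    rw [← Real.rpow_mul_natCast ht0, ← Real.rpow_natCast t 3]
    norm_num
  rw [div_pow, hcube, div_mul_eq_mul_div, div_le_one (by positivity)]
  calc t ^ 3 * (720000 * n ^ 9) ≤ 0.6 ^ 3 * (720000 * n ^ 9) := by gcongr
    _ ≤ 14884 * 2 ^ 5 * (n : ℝ) ^ 9 := by linarith [show (0 : ℝ) ≤ n ^ 9 by positivity]
    _ ≤ 14884 * n ^ 5 * n ^ 9 := by gcongr
    _ = (122 * (n : ℝ) ^ 7) ^ 2 := by ring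

theorem figalli_maggi_pratelli_general {n : ℕ} (hn : 1 ≤ n) {γ : ℝ} (hγ0 : 0 ≤ γ)
    (hγ : 2 ≤ n → γ * (720000 * n ^ 9) ≤ 1) (K C : Set (EuclideanSpace ℝ (Fin n)))
    (hKcomp : IsCompact K) (hKconv : Convex ℝ K) (hKint : (interior K).Nonempty)
    (hCcomp : IsCompact C) (hCconv : Convex ℝ C) (hCint : (interior C).Nonempty) :
    (volume.real K ^ ((1 : ℝ) / n) + volume.real C ^ ((1 : ℝ) / n)) *
        (1 + γ / volRatio K C ^ ((1 : ℝ) / n) * homDist K C ^ 2) ≤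
      volume.real (K + C) ^ ((1 : ℝ) / n) := by
  have : Nontrivial (EuclideanSpace ℝ (Fin n)) :=
    nontrivial_of_finrank_pos (R := ℝ) (by rwa [finrank_euclideanSpace_fin])
  have hpos {s : Set (EuclideanSpace ℝ (Fin n))} (hs : IsCompact s) (hs0 : (interior s).Nonempty) :
      0 < volume.real s :=
    ENNReal.toReal_pos (Measure.measure_pos_of_nonempty_interior _ hs0).ne' hs.measure_lt_top.ne
  obtain ⟨x, hx⟩ := exists_add_mul_le_rpow_measureReal_add hKcomp hKconv (hpos hKcomp hKint)
    hCcomp hCconv (hpos hCcomp hCint) hγ0 (by rwa [finrank_euclideanSpace_fin])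
  rw [finrank_euclideanSpace_fin] at hx
  change _ * (1 + γ / volRatio K C ^ ((1 : ℝ) / n) * _) ≤ _ at hx
  have : 0 ≤ volRatio K C := le_max_of_le_left (by positivity)
  have : 0 ≤ homDist K C := homDist_nonneg
  refine le_trans ?_ hx
  gcongr
  exact homDist_le x

end HomotheticDistance

/-- **Figalli–Maggi–Pratelli stability version of the Brunn–Minkowski inequality.**
With `γ* = ((2 − 2^((n−1)/n))^(3/2) / (122·n⁷))²`, for any convex bodies `K` and
`C` in `ℝⁿ`:
`|K+C|^(1/n) ≥ (|K|^(1/n) + |C|^(1/n))·[1 + (γ*/σ(K,C)^(1/n))·A(K,C)²]`. -/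
theorem figalli_maggi_pratelli {n : ℕ} (hn : 1 ≤ n)
    (K C : Set (EuclideanSpace ℝ (Fin n)))
    (hKcomp : IsCompact K) (hKconv : Convex ℝ K) (hKint : (interior K).Nonempty)
    (hCcomp : IsCompact C) (hCconv : Convex ℝ C) (hCint : (interior C).Nonempty) :
    ((volume K).toReal ^ ((1:ℝ)/(n:ℝ)) + (volume C).toReal ^ ((1:ℝ)/(n:ℝ))) *
        (1 + ((2 - (2:ℝ) ^ (((n:ℝ) - 1)/(n:ℝ))) ^ ((3:ℝ)/2) / (122 * (n:ℝ)^7)) ^ 2 /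
          (volRatio K C) ^ ((1:ℝ)/(n:ℝ)) * homDist K C ^ 2) ≤
      (volume (K + C)).toReal ^ ((1:ℝ)/(n:ℝ)) := by
  exact figalli_maggi_pratelli_general hn (by positivity) two_sub_rpow_div_sq_mul_le_one K C
    hKcomp hKconv hKint hCcomp hCconv hCint
end
end

section
/- For any positive real numbers p and q and any n ≥ 1, setting σ = max{p/q, q/p}, one has (p^{1/n} + q^{1/n})/2 = p^{1/(2n)}·q^{1/(2n)}·[1 + (σ^{1/(4n)} − σ^{−1/(4n)})²/2] ≥ p^{1/(2n)}·q^{1/(2n)}·[1 + (σ−1)²/(32·n²·σ^{(4n−1)/(2n)})]. -/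
/-!
Put `a = 1 / (4 * n)`. In terms of `u = p ^ a` and `v = q ^ a`, the identity reads
`(u ^ 4 + v ^ 4) / 2 = u ^ 2 * v ^ 2 * (1 + (u / v - v / u) ^ 2 / 2)`, and its right-hand side does
not change when `p / q` is replaced by `q / p`. The inequality is the square of
`2 * a * (σ - 1) ≤ σ - σ ^ (1 - 2 * a)`, which is Bernoulli's inequality for the exponent
`1 - 2 * a ∈ [0, 1]`; this gives the constant `8` in place of `32`.
-/

section

variable {p q s a : ℝ}

lemma one_le_max_div_div (hp : 0 < p) (hq : 0 < q) : 1 ≤ max (p / q) (q / p) := by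
  rcases le_total p q with hpq | hqp
  · exact le_max_of_le_right ((one_le_div hp).2 hpq)
  · exact le_max_of_le_left ((one_le_div hq).2 hqp)

lemma inv_rpow_sub_inv_rpow_neg_sq (hs : 0 ≤ s) (a : ℝ) :
    (s⁻¹ ^ a - s⁻¹ ^ (-a)) ^ 2 = (s ^ a - s ^ (-a)) ^ 2 := by
  rw [Real.inv_rpow hs, Real.inv_rpow hs, Real.rpow_neg hs, inv_inv, sub_sq_comm]

lemma max_div_rpow_sub_rpow_neg_sq (hp : 0 ≤ p) (hq : 0 ≤ q) (a : ℝ) :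
    (max (p / q) (q / p) ^ a - max (p / q) (q / p) ^ (-a)) ^ 2 =
      ((p / q) ^ a - (p / q) ^ (-a)) ^ 2 := by
  rcases max_choice (p / q) (q / p) with hmax | hmax
  · rw [hmax]
  · rw [hmax, ← inv_div p q, inv_rpow_sub_inv_rpow_neg_sq (div_nonneg hp hq)]

lemma rpow_add_rpow_div_two_eq_rpow_mul_rpow_mul (hp : 0 < p) (hq : 0 < q) (a : ℝ) :
    (p ^ (4 * a) + q ^ (4 * a)) / 2 =
      p ^ (2 * a) * q ^ (2 * a) * (1 + ((p / q) ^ a - (p / q) ^ (-a)) ^ 2 / 2) := by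
  have rpow_four_mul {x : ℝ} (hx : 0 < x) : x ^ (4 * a) = (x ^ a) ^ 4 := by
    rw [mul_comm]
    exact_mod_cast Real.rpow_mul_natCast hx.le a 4
  have rpow_two_mul {x : ℝ} (hx : 0 < x) : x ^ (2 * a) = (x ^ a) ^ 2 := by
    rw [mul_comm]
    exact_mod_cast Real.rpow_mul_natCast hx.le a 2
  rw [rpow_four_mul hp, rpow_four_mul hq, rpow_two_mul hp, rpow_two_mul hq,
    Real.rpow_neg (by positivity), Real.div_rpow hp.le hq.le]
  have hpa : p ^ a ≠ 0 := (Real.rpow_pos_of_pos hp a).ne'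
  have hqa : q ^ a ≠ 0 := (Real.rpow_pos_of_pos hq a).ne'
  field_simp
  ring

lemma two_mul_mul_sub_one_le_rpow_mul_rpow_sub_rpow_neg (hs : 0 < s) (ha₀ : 0 ≤ a)
    (ha : a ≤ 1 / 2) : 2 * a * (s - 1) ≤ s ^ (1 - a) * (s ^ a - s ^ (-a)) := by
  have bernoulli : s ^ (1 - 2 * a) ≤ 1 + (1 - 2 * a) * (s - 1) := by
    simpa only [add_sub_cancel] using
      rpow_one_add_le_one_add_mul_self (s := s - 1) (p := 1 - 2 * a)
        (by linarith) (by linarith) (by linarith)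
  calc
    2 * a * (s - 1) ≤ s - s ^ (1 - 2 * a) := by linarith
    _ = s ^ (1 - a) * (s ^ a - s ^ (-a)) := by
      rw [mul_sub, ← Real.rpow_add hs, ← Real.rpow_add hs, sub_add_cancel, Real.rpow_one]
      ring_nf

lemma two_mul_sq_mul_sub_one_sq_div_le (hs : 1 ≤ s) (ha₀ : 0 ≤ a) (ha : a ≤ 1 / 2) :
    2 * a ^ 2 * (s - 1) ^ 2 / s ^ (2 - 2 * a) ≤ (s ^ a - s ^ (-a)) ^ 2 / 2 := by
  have hs₀ : 0 < s := by linarith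
  have hsq : (s ^ (1 - a)) ^ 2 = s ^ (2 - 2 * a) := by
    rw [← Real.rpow_mul_natCast hs₀.le]
    ring_nf
  have hnonneg : 0 ≤ 2 * a * (s - 1) := mul_nonneg (by positivity) (by linarith)
  have hle := pow_le_pow_left₀ hnonneg
    (two_mul_mul_sub_one_le_rpow_mul_rpow_sub_rpow_neg hs₀ ha₀ ha) 2
  rw [mul_pow, mul_pow, mul_pow, hsq] at hle
  rw [div_le_iff₀ (by positivity)]
  linarith

end

theorem arith_mean_vs_geom_mean_ratio_general {p q r : ℝ} (hp : 0 < p) (hq : 0 < q)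
    (hr : 1 / 2 ≤ r) :
    (p ^ (1 / r) + q ^ (1 / r)) / 2 =
      p ^ (1 / (2 * r)) * q ^ (1 / (2 * r)) *
        (1 + (max (p / q) (q / p) ^ (1 / (4 * r)) -
          max (p / q) (q / p) ^ (-1 / (4 * r))) ^ 2 / 2) ∧
    p ^ (1 / (2 * r)) * q ^ (1 / (2 * r)) *
        (1 + (max (p / q) (q / p) - 1) ^ 2 /
          (8 * r ^ 2 * max (p / q) (q / p) ^ ((4 * r - 1) / (2 * r)))) ≤
      p ^ (1 / (2 * r)) * q ^ (1 / (2 * r)) *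
        (1 + (max (p / q) (q / p) ^ (1 / (4 * r)) -
          max (p / q) (q / p) ^ (-1 / (4 * r))) ^ 2 / 2) := by
  have hr₀ : 0 < r := by linarith
  obtain ⟨a, ha⟩ : ∃ a, a = 1 / (4 * r) := ⟨_, rfl⟩
  have ha₀ : 0 ≤ a := ha ▸ (one_div_pos.2 (mul_pos four_pos hr₀)).le
  have ha_le : a ≤ 1 / 2 := by
    rw [ha]
    exact one_div_le_one_div_of_le two_pos (by linarith)
  have exp_four : 1 / r = 4 * a := by rw [ha]; field_simp
  have exp_two : 1 / (2 * r) = 2 * a := by rw [ha]; field_simp; norm_num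
  have exp_denom : (4 * r - 1) / (2 * r) = 2 - 2 * a := by rw [ha]; field_simp; ring
  have coeff : 2 * a ^ 2 = 1 / (8 * r ^ 2) := by rw [ha]; field_simp; norm_num
  rw [neg_div, exp_four, exp_two, exp_denom, ← ha]
  constructor
  · rw [max_div_rpow_sub_rpow_neg_sq hp.le hq.le]
    exact rpow_add_rpow_div_two_eq_rpow_mul_rpow_mul hp hq a
  · have hgap := two_mul_sq_mul_sub_one_sq_div_le (one_le_max_div_div hp hq) ha₀ ha_le
    rw [coeff, one_div_mul_eq_div, div_div] at hgap
    gcongr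

/-- An elementary estimate: for positive reals `p, q` and `n ≥ 1`, with
`σ = max{p/q, q/p}`, one has
`(p^(1/n) + q^(1/n))/2 = p^(1/(2n))·q^(1/(2n))·[1 + (σ^(1/(4n)) − σ^(−1/(4n)))²/2]`
and this is `≥ p^(1/(2n))·q^(1/(2n))·[1 + (σ−1)²/(32·n²·σ^((4n−1)/(2n)))]`. -/
theorem arith_mean_vs_geom_mean_ratio (p q : ℝ) (n : ℕ) (hn : 1 ≤ n)
    (hp : 0 < p) (hq : 0 < q) :
    (p ^ ((1:ℝ)/(n:ℝ)) + q ^ ((1:ℝ)/(n:ℝ))) / 2 =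
      p ^ ((1:ℝ)/(2*(n:ℝ))) * q ^ ((1:ℝ)/(2*(n:ℝ))) *
        (1 + ((max (p/q) (q/p)) ^ ((1:ℝ)/(4*(n:ℝ))) -
          (max (p/q) (q/p)) ^ (-(1:ℝ)/(4*(n:ℝ)))) ^ 2 / 2) ∧
    p ^ ((1:ℝ)/(2*(n:ℝ))) * q ^ ((1:ℝ)/(2*(n:ℝ))) *
        (1 + ((max (p/q) (q/p)) ^ ((1:ℝ)/(4*(n:ℝ))) -
          (max (p/q) (q/p)) ^ (-(1:ℝ)/(4*(n:ℝ)))) ^ 2 / 2) ≥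
      p ^ ((1:ℝ)/(2*(n:ℝ))) * q ^ ((1:ℝ)/(2*(n:ℝ))) *
        (1 + (max (p/q) (q/p) - 1) ^ 2 /
          (32 * (n:ℝ)^2 * (max (p/q) (q/p)) ^ ((4*(n:ℝ) - 1)/(2*(n:ℝ))))) := by
  obtain ⟨hmean, hle⟩ := arith_mean_vs_geom_mean_ratio_general hp hq
    (r := n) (by linarith [Nat.one_le_cast (α := ℝ).2 hn])
  exact ⟨hmean, le_trans (by gcongr; norm_num) hle⟩
end
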